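/- For every f ∈ 𝒮 with logarithmic coefficients γ_n, the inequality ∑_{n=1}^∞ (n/(n+1)³) |γ_n|² ≤ (18 − π² − 6ζ(3))/6 holds, where ζ is the Riemann zeta function; the inequality is strict unless f(z) = z/(1−e^{iθ}z)² for some θ ∈ ℝ. -/

import Mathlib

/-!
Write `f z = z * exp (g z)` with `g = 2 ∑ γ n z ^ n`. The estimate behind the theorem is
`∑ n |γ n|² x ^ n ≤ - log (1 - x)` for `0 < x < 1` (`dir_bound`). Multiplied by `t² e^{-t} / 2`
with `x = e^{-t}` and integrated over `t > 0`, the left side becomes `∑ n |γ n|² / (n + 1)³`, and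
the right side becomes `∑ 1 / (n (n + 1)³)`, which partial fractions evaluate to
`3 - π² / 6 - ζ(3)` (`weighted_bound`, `hasSum_const`).

For `dir_bound`, the dilation `f (r z)` is the initial element of a chain `h t`, `t ≥ log r`, of
univalent functions with `(h t)' 0 = e^t`, `|h t| ≤ M e^t` and increasing images (`exists_chain`).
The chain comes from a duality: the reciprocals of the points outside `f (|z| ≤ r)`, together with
`0`, form a bounded simply connected domain `dual f r`, with Riemann map `κ`; the domains `dual κ s`
increase as `s` decreases from `1` to `0`, and their conformal radius takes every value `e^t > r`.
Along a step of length `τ` of the chain, the deficit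
`Phi L x = - log (1 - x) - ∑ n |γ n|² x ^ n` of the logarithm `L` of `e^{-t} h t z / z` decreases up
to an error `O(τ²)`, provided `x` is replaced by `x (1 - τ (1 - x) / (1 + x))` at the same time
(`step`). This is a discrete form of the Loewner differential equation: the increment of `L` is
governed by a function `P` of nonnegative real part, and the Schwarz–Pick inequality for `P`
supplies the sign. After many small steps `x` is close to `0`, where the deficit is at least
`- K x`; so the initial deficit is nonnegative (`IsChain.phi_nonneg`), and then `r` tends to `1`.

If equality holds, then, as the integrand on the right dominates the one on the left for every `x`,
the two agree almost everywhere, and comparison of the first-order terms at `x = 0` gives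
`|γ 1| ≥ 1`. An area inequality for the density `|w| ^ (-2 β - 2)`, in the limit `β → 1 / 2`,
bounds the coefficients of `exp (- g / 2)`, that is, of the square root of `z / f z` (`area_beta`). With `|γ 1| ≥ 1` it leaves
only `exp (- g / 2) = 1 - γ 1 * z`, so `f` is a rotation of the Koebe function
(`koebe_of_norm_eq`).
-/

open Complex Metric Real

/-- The class `𝒮` of normalized univalent (analytic and injective) functions
on the unit disk. -/
def InClassS (f : ℂ → ℂ) : Prop :=
  AnalyticOnNhd ℂ f (ball (0 : ℂ) 1) ∧ Set.InjOn f (ball (0 : ℂ) 1) ∧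
    f 0 = 0 ∧ deriv f 0 = 1

/-- `γ` are the logarithmic coefficients of `f`: there is an analytic branch `g`
of `log (f z / z)` on the unit disk with `g 0 = 0` whose Taylor coefficients at `0`
are `2 * γ n` for `n ≥ 1`. -/
def IsLogCoeffs (f : ℂ → ℂ) (γ : ℕ → ℂ) : Prop :=
  ∃ g : ℂ → ℂ, AnalyticOnNhd ℂ g (ball (0 : ℂ) 1) ∧ g 0 = 0 ∧
    (∀ z ∈ ball (0 : ℂ) 1, z ≠ 0 → Complex.exp (g z) = f z / z) ∧
    ∀ n : ℕ, 1 ≤ n → iteratedDeriv n g 0 = (n.factorial : ℂ) * (2 * γ n)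

/-- `f` coincides on the unit disk with a rotation `z / (1 - e^{iθ} z)^2`
of the Koebe function. -/
def IsKoebeRotation (f : ℂ → ℂ) : Prop :=
  ∃ θ : ℝ, Set.EqOn f
    (fun z => z / (1 - Complex.exp (θ * Complex.I) * z) ^ 2) (ball (0 : ℂ) 1)

namespace LogCoeff
open Set Filter Topology Function

/-! ### Univalent maps, logarithms, normal families -/

/-- An injective holomorphic map is open, has nonvanishing derivative and a holomorphic inverse. -/
lemma injOn_inverse {f : ℂ → ℂ} {U : Set ℂ} (hU : IsOpen U) (hf : DifferentiableOn ℂ f U)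
    (hi : InjOn f U) :
    IsOpen (f '' U) ∧ DifferentiableOn ℂ (invFunOn f U) (f '' U) ∧ ∀ z ∈ U, deriv f z ≠ 0 := by
  have hnc : ∀ z ∈ U, 𝓝 (f z) ≤ map f (𝓝 z) := by
    intro z hz
    rcases (hf.analyticAt (hU.mem_nhds hz)).eventually_constant_or_nhds_le_map_nhds with h | h
    · exfalso
      have h1 : ∀ᶠ w in 𝓝[≠] z, f w = f z ∧ w ∈ U :=
        (h.and (hU.mem_nhds hz)).filter_mono nhdsWithin_le_nhds
      obtain ⟨w, ⟨hw1, hw2⟩, hw3⟩ := (h1.and self_mem_nhdsWithin).exists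
      exact hw3 (hi hw2 hz hw1)
    · exact h
  have himg : ∀ A ⊆ U, IsOpen A → IsOpen (f '' A) := by
    intro A hA hAo
    rw [isOpen_iff_mem_nhds]
    rintro _ ⟨z, hz, rfl⟩
    exact hnc z (hA hz) (image_mem_map (hAo.mem_nhds hz))
  have hopen := himg U subset_rfl hU
  have hinv : ∀ z ∈ U, invFunOn f U (f z) = z := fun z hz => hi.leftInvOn_invFunOn hz
  have hcont : ∀ z ∈ U, ContinuousAt (invFunOn f U) (f z) := by
    intro z hz
    rw [ContinuousAt, hinv z hz]
    refine Tendsto.mono_left ?_ (hnc z hz)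
    rw [tendsto_map'_iff]
    refine tendsto_id.congr' ?_
    filter_upwards [hU.mem_nhds hz] with w hw
    simp [hinv w hw]
  have hright : ∀ z ∈ U, ∀ᶠ w in 𝓝 (f z), f (invFunOn f U w) = w := by
    intro z hz
    filter_upwards [hopen.mem_nhds (mem_image_of_mem f hz)] with w hw
    exact invFunOn_eq hw
  have hder : ∀ z ∈ U, deriv f z ≠ 0 → DifferentiableAt ℂ (invFunOn f U) (f z) := by
    intro z hz h0
    refine (HasDerivAt.of_local_left_inverse (f := f) (f' := deriv f z) (hcont z hz) ?_ h0
      (hright z hz)).differentiableAt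
    rw [hinv z hz]
    exact (hf.differentiableAt (hU.mem_nhds hz)).hasDerivAt
  have hana : ∀ z ∈ U, DifferentiableAt ℂ (invFunOn f U) (f z) := by
    intro z hz
    have hfa := hf.analyticAt (hU.mem_nhds hz)
    rcases hfa.deriv.eventually_eq_zero_or_eventually_ne_zero with h | h
    · exfalso
      obtain ⟨ε, hε, hb⟩ := Metric.eventually_nhds_iff_ball.1 (h.and (hU.mem_nhds hz))
      have hconst : ∀ w ∈ ball z ε, f w = f z := by
        intro w hw
        refine (isOpen_ball.is_const_of_deriv_eq_zero (convex_ball z ε).isPreconnected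
          (hf.mono fun y hy => (hb y hy).2) (fun y hy => (hb y hy).1) hw (mem_ball_self hε))
      have : z + (ε/2 : ℝ) ∈ ball z ε := by
        simp only [mem_ball, dist_self_add_left, Complex.norm_real, Real.norm_eq_abs]
        rw [abs_of_pos (by positivity)]; linarith
      have h2 := hi (hb _ this).2 hz (hconst _ this)
      simp at h2; exact hε.ne' h2
    · refine (Complex.analyticAt_of_differentiable_on_punctured_nhds_of_continuousAt ?_
        (hcont z hz)).differentiableAt
      have hc := hcont z hz
      rw [ContinuousAt, hinv z hz] at hc
      rw [eventually_nhdsWithin_iff] at h ⊢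
      filter_upwards [hc.eventually h, hopen.mem_nhds (mem_image_of_mem f hz)] with w hw1 hw2 hw3
      obtain ⟨y, hy, rfl⟩ := hw2
      rw [hinv y hy] at hw1
      exact hder y hy (hw1 fun h => hw3 (by rw [mem_singleton_iff] at h; rw [h]; rfl))
  refine ⟨hopen, ?_, ?_⟩
  · rintro _ ⟨z, hz, rfl⟩
    exact (hana z hz).differentiableWithinAt
  · intro z hz h0
    have h1 := (hana z hz).hasDerivAt.comp z (hf.differentiableAt (hU.mem_nhds hz)).hasDerivAt
    have h2 : HasDerivAt (invFunOn f U ∘ f) 1 z := by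
      refine (hasDerivAt_id z).congr_of_eventuallyEq ?_
      filter_upwards [hU.mem_nhds hz] with w hw
      simp [hinv w hw]
    have := h1.unique h2
    simp [h0] at this

/-- Every holomorphic function on `G` has a primitive (the analytic form of simple
connectedness). -/
def Good (G : Set ℂ) : Prop := ∀ ψ : ℂ → ℂ, DifferentiableOn ℂ ψ G → Complex.IsExactOn ψ G

lemma good_ball (c : ℂ) (r : ℝ) : Good (ball c r) := fun _ h => h.isExactOn_ball

lemma exists_log {G : Set ℂ} (hG : IsOpen G) (hGc : IsPreconnected G) (hg : Good G)
    {ψ : ℂ → ℂ} (hψ : DifferentiableOn ℂ ψ G) (h0 : ∀ z ∈ G, ψ z ≠ 0) {x c : ℂ} (hx : x ∈ G)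
    (hc : Complex.exp c = ψ x) :
    ∃ g : ℂ → ℂ, DifferentiableOn ℂ g G ∧ g x = c ∧ ∀ z ∈ G, Complex.exp (g z) = ψ z := by
  obtain ⟨g, hgx, hgd⟩ := (hg (fun z => deriv ψ z / ψ z)
    ((hψ.deriv hG).div hψ h0)).with_val_at x c
  have hgD : DifferentiableOn ℂ g G := fun z hz =>
    (hgd z hz).differentiableAt.differentiableWithinAt
  refine ⟨g, hgD, hgx, ?_⟩
  have hder : ∀ z ∈ G, HasDerivAt (fun z => ψ z * Complex.exp (-g z)) 0 z := by
    intro z hz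
    have h1 := ((hψ.differentiableAt (hG.mem_nhds hz)).hasDerivAt).mul (hgd z hz).neg.cexp
    refine HasDerivAt.congr_deriv h1 ?_
    have := h0 z hz
    field_simp; ring
  intro z hz
  have h2 : ψ z * Complex.exp (-g z) = ψ x * Complex.exp (-g x) :=
    hG.is_const_of_deriv_eq_zero hGc (fun y hy => (hder y hy).differentiableAt.differentiableWithinAt)
      (fun y hy => (hder y hy).deriv) hz hx
  rw [hgx, ← hc, ← Complex.exp_add, add_neg_cancel, Complex.exp_zero, Complex.exp_neg] at h2
  field_simp at h2
  exact h2.symm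

/-- Montel's theorem in ultrafilter form. -/
lemma montel {ι : Type*} (φ : Ultrafilter ι) {F : ι → ℂ → ℂ} {U : Set ℂ} (hU : IsOpen U) {M : ℝ}
    (hF : ∀ i, DifferentiableOn ℂ (F i) U) (hM : ∀ i, ∀ z ∈ U, ‖F i z‖ ≤ M) :
    ∃ g : ℂ → ℂ, TendstoLocallyUniformlyOn F g φ U := by
  have hlim : ∀ z ∈ U, ∃ y, Tendsto (fun i => F i z) φ (𝓝 y) := by
    intro z hz
    have h1 : ↑(φ.map fun i => F i z) ≤ 𝓟 (closedBall (0:ℂ) M) := by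
      rw [le_principal_iff]
      exact Filter.mem_map.2 (univ_mem' fun i => by simpa using hM i z hz)
    obtain ⟨y, -, hy⟩ := (isCompact_closedBall (0:ℂ) M).ultrafilter_le_nhds _ h1
    exact ⟨y, hy⟩
  choose! g hg using hlim
  refine ⟨g, ?_⟩
  rw [Metric.tendstoLocallyUniformlyOn_iff]
  intro ε hε x hx
  obtain ⟨δ, hδ, hb⟩ := Metric.isOpen_iff.1 hU x hx
  have hM0 : 0 ≤ M := by
    obtain ⟨i⟩ : Nonempty ι := by
      by_contra h
      rw [not_nonempty_iff] at h
      exact φ.neBot.ne (Filter.filter_eq_bot_of_isEmpty (φ : Filter ι))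
    exact (norm_nonneg _).trans (hM i x hx)
  have hlip : ∀ i, ∀ y ∈ ball x δ, dist (F i y) (F i x) ≤ (2 * M) / δ * dist y x := by
    intro i y hy
    refine Complex.dist_le_div_mul_dist_of_mapsTo_ball ((hF i).mono hb) ?_ hy
    intro w hw
    rw [mem_closedBall, dist_eq_norm]
    calc _ ≤ ‖F i w‖ + ‖F i x‖ := norm_sub_le _ _
      _ ≤ 2 * M := by linarith [hM i w (hb hw), hM i x hx]
  have hlipg : ∀ y ∈ ball x δ, dist (g y) (g x) ≤ (2 * M) / δ * dist y x := by
    intro y hy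
    exact le_of_tendsto ((hg y (hb hy)).dist (hg x hx)) (Eventually.of_forall fun i => hlip i y hy)
  set η := min δ (ε / 4 / ((2 * M) / δ + 1)) with hη
  have hK : 0 ≤ 2 * M / δ := by positivity
  have hη0 : 0 < η := by positivity
  refine ⟨ball x η, nhdsWithin_le_nhds (ball_mem_nhds x hη0), ?_⟩
  have h3 := (Metric.tendsto_nhds.1 (hg x hx)) (ε/4) (by positivity)
  filter_upwards [h3] with i hi y hy
  have hyδ : y ∈ ball x δ := ball_subset_ball (min_le_left _ _) hy
  have hsm : (2 * M) / δ * dist y x ≤ ε / 4 := by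
    have h5 : dist y x ≤ ε / 4 / ((2 * M) / δ + 1) := hy.le.trans (min_le_right _ _)
    rw [le_div_iff₀ (by positivity)] at h5
    nlinarith [dist_nonneg (x := y) (y := x)]
  have h1 := hlip i y hyδ
  have h2 := hlipg y hyδ
  calc dist (g y) (F i y) ≤ dist (g y) (g x) + dist (g x) (F i x) + dist (F i x) (F i y) :=
        dist_triangle4 _ _ _ _
    _ < ε := by
      rw [dist_comm (g x) (F i x), dist_comm (F i x) (F i y)]; linarith

/-- Hurwitz's theorem: a nonconstant locally uniform limit of univalent maps is univalent. -/
lemma hurwitz {ι : Type*} {φ : Filter ι} [φ.NeBot] {F : ι → ℂ → ℂ} {U : Set ℂ} (hU : IsOpen U)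
    (hUc : IsPreconnected U) (hF : ∀ i, DifferentiableOn ℂ (F i) U) (hi : ∀ i, InjOn (F i) U)
    {g : ℂ → ℂ} (hg : TendstoLocallyUniformlyOn F g φ U)
    (hne : ∃ z ∈ U, ∃ w ∈ U, g z ≠ g w) : InjOn g U := by
  have hgd : DifferentiableOn ℂ g U := hg.differentiableOn (Eventually.of_forall hF) hU
  intro a ha b hb hab
  by_contra hne'
  have hGa : AnalyticOnNhd ℂ (fun z => g z - g a) U :=
    (hgd.sub (differentiableOn_const _)).analyticOnNhd hU
  have hiso : ∀ᶠ z in 𝓝[≠] b, g z - g a ≠ 0 := by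
    rcases (hGa b hb).eventually_eq_zero_or_eventually_ne_zero with h | h
    · exfalso
      have := hGa.eqOn_zero_of_preconnected_of_eventuallyEq_zero hUc hb h
      obtain ⟨z, hz, w, hw, hzw⟩ := hne
      have h1 := this hz
      have h2 := this hw
      simp only [Pi.zero_apply, sub_eq_zero] at h1 h2
      exact hzw (h1.trans h2.symm)
    · exact h
  rw [eventually_nhdsWithin_iff] at hiso
  have hev : ∀ᶠ z in 𝓝 b, (z ∈ ({b} : Set ℂ)ᶜ → g z - g a ≠ 0) ∧ z ∈ U ∧ z ≠ a :=
    hiso.and ((hU.eventually_mem hb).and (isOpen_ne.eventually_mem (Ne.symm hne')))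
  obtain ⟨ρ, hρ, hball⟩ := (Metric.nhds_basis_closedBall).eventually_iff.1 hev
  have hsub : closedBall b ρ ⊆ U := fun z hz => (hball hz).2.1
  have hsph : ∀ z ∈ sphere b ρ, g z - g a ≠ 0 := fun z hz =>
    (hball (sphere_subset_closedBall hz)).1 fun h => by
      rw [mem_singleton_iff] at h; subst h; simp at hz; exact hρ.ne hz
  obtain ⟨z0, hz0, hmin⟩ := (isCompact_sphere b ρ).exists_isMinOn
    (NormedSpace.sphere_nonempty.mpr hρ.le)
    ((hgd.continuousOn.mono (sphere_subset_closedBall.trans hsub)).sub continuousOn_const).norm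
    (f := fun z => ‖g z - g a‖)
  set m := ‖g z0 - g a‖ with hm
  have hm0 : 0 < m := norm_pos_iff.2 (hsph z0 hz0)
  have hK : IsCompact (insert a (closedBall b ρ)) := (isCompact_closedBall b ρ).insert a
  have hunif := (tendstoLocallyUniformlyOn_iff_forall_isCompact hU).1 hg _
    (insert_subset ha hsub) hK
  rw [Metric.tendstoUniformlyOn_iff] at hunif
  obtain ⟨i, hii⟩ := (hunif (m/4) (by positivity)).exists
  have hA := hii a (mem_insert _ _)
  have hB := hii b (mem_insert_of_mem _ (mem_closedBall_self hρ.le))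
  have hnz : ∀ z ∈ closedBall b ρ, F i z - F i a ≠ 0 := fun z hz h =>
    (hball hz).2.2 (hi i (hsub hz) ha (sub_eq_zero.1 h))
  have hd : DifferentiableOn ℂ (fun z => (F i z - F i a)⁻¹) (closedBall b ρ) :=
    (((hF i).mono hsub).sub (differentiableOn_const _)).inv hnz
  have hmax := Complex.norm_le_of_forall_mem_frontier_norm_le (U := ball b ρ) (C := 2 / m)
    isBounded_ball (f := fun z => (F i z - F i a)⁻¹)
    (DifferentiableOn.diffContOnCl (by rwa [closure_ball b hρ.ne'])) ?_
    (subset_closure (mem_ball_self hρ))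
  · rw [norm_inv, inv_le_comm₀ (norm_pos_iff.2 (hnz b (mem_closedBall_self hρ.le)))
      (by positivity), inv_div] at hmax
    rw [dist_eq_norm] at hA hB
    have : F i b - F i a = (g a - F i a) - (g b - F i b) := by rw [hab]; ring
    have h2 : ‖F i b - F i a‖ ≤ ‖g a - F i a‖ + ‖g b - F i b‖ := this ▸ norm_sub_le _ _
    linarith
  · intro z hz
    rw [frontier_ball b hρ.ne'] at hz
    rw [norm_inv, inv_le_comm₀ (norm_pos_iff.2 (hnz z (sphere_subset_closedBall hz)))
      (by positivity), inv_div]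
    have hZ := hii z (mem_insert_of_mem _ (sphere_subset_closedBall hz))
    rw [dist_eq_norm] at hA hZ
    have h3 : m ≤ ‖g z - g a‖ := hmin hz
    have h4 : g z - g a = (F i z - F i a) + (g z - F i z) - (g a - F i a) := by ring
    have h5 : ‖g z - g a‖ ≤ ‖F i z - F i a‖ + ‖g z - F i z‖ + ‖g a - F i a‖ :=
      h4 ▸ (norm_sub_le _ _).trans (by gcongr; exact norm_add_le _ _)
    linarith

/-! ### The Riemann mapping theorem for bounded domains -/

/-- The Möbius automorphism of the disc sending `a` to `0`. -/
noncomputable def mob (a w : ℂ) : ℂ := (w - a) / (1 - (starRingEnd ℂ) a * w)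

lemma mob_den_ne {a w : ℂ} (ha : ‖a‖ < 1) (hw : ‖w‖ < 1) : 1 - (starRingEnd ℂ) a * w ≠ 0 := by
  intro h
  have h1 : (starRingEnd ℂ) a * w = 1 := (sub_eq_zero.1 h).symm
  have h2 : ‖a‖ * ‖w‖ = 1 := by
    rw [← RCLike.norm_conj a, ← norm_mul, h1, norm_one]
  nlinarith [norm_nonneg a, norm_nonneg w]

lemma mob_norm_lt {a w : ℂ} (ha : ‖a‖ < 1) (hw : ‖w‖ < 1) : ‖mob a w‖ < 1 := by
  have h0 := mob_den_ne ha hw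
  rw [mob, norm_div, div_lt_one (norm_pos_iff.2 h0)]
  refine lt_of_pow_lt_pow_left₀ 2 (norm_nonneg _) ?_
  have h1 : ‖a‖ ^ 2 < 1 := by nlinarith [norm_nonneg a]
  have h2 : ‖w‖ ^ 2 < 1 := by nlinarith [norm_nonneg w]
  have key : ‖1 - (starRingEnd ℂ) a * w‖ ^ 2 - ‖w - a‖ ^ 2 = (1 - ‖a‖ ^ 2) * (1 - ‖w‖ ^ 2) := by
    simp only [← Complex.normSq_eq_norm_sq, Complex.normSq_apply]
    simp
    ring
  nlinarith

lemma mob_injOn {a : ℂ} (ha : ‖a‖ < 1) : InjOn (mob a) (ball 0 1) := by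
  intro w hw z hz h
  rw [mem_ball_zero_iff] at hw hz
  have h1 := mob_den_ne ha hw
  have h2 := mob_den_ne ha hz
  rw [mob, mob, div_eq_div_iff h1 h2] at h
  have h3 : (w - z) * (1 - (starRingEnd ℂ) a * a) = 0 := by linear_combination h
  rcases mul_eq_zero.1 h3 with h | h
  · exact sub_eq_zero.1 h
  · exact absurd h (mob_den_ne ha ha)

lemma mob_differentiableAt {a w : ℂ} (ha : ‖a‖ < 1) (hw : ‖w‖ < 1) :
    HasDerivAt (mob a) ((1 - ‖a‖ ^ 2) / (1 - (starRingEnd ℂ) a * w) ^ 2) w := by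
  have h0 := mob_den_ne ha hw
  have h1 : HasDerivAt (fun w : ℂ => w - a) 1 w := (hasDerivAt_id w).sub_const a
  have h2 : HasDerivAt (fun w : ℂ => 1 - (starRingEnd ℂ) a * w) (-((starRingEnd ℂ) a * 1)) w :=
    ((hasDerivAt_id w).const_mul _).const_sub 1
  refine HasDerivAt.congr_deriv (h1.div h2 h0) ?_
  congr 1
  have : (starRingEnd ℂ) a * a = (‖a‖:ℂ) ^ 2 := Complex.conj_mul' a
  linear_combination -this

/-- The square-root step of the Riemann mapping theorem: a univalent map into the disc that omits
a value is not extremal for `‖g' 0‖`. -/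
lemma koebe_step {G : Set ℂ} (hG : IsOpen G) (hGc : IsPreconnected G) (hgood : Good G)
    (h0G : (0:ℂ) ∈ G) {g : ℂ → ℂ} (hg : DifferentiableOn ℂ g G) (hi : InjOn g G)
    (hm : MapsTo g G (ball 0 1)) (hg0 : g 0 = 0) (hd : deriv g 0 ≠ 0) {a : ℂ} (ha : ‖a‖ < 1)
    (haG : a ∉ g '' G) :
    ∃ k : ℂ → ℂ, DifferentiableOn ℂ k G ∧ InjOn k G ∧ MapsTo k G (ball 0 1) ∧ k 0 = 0 ∧
      ‖deriv g 0‖ < ‖deriv k 0‖ := by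
  have hgn : ∀ z ∈ G, ‖g z‖ < 1 := fun z hz => by simpa using hm hz
  have hψd : DifferentiableOn ℂ (fun z => mob a (g z)) G := fun z hz =>
    ((mob_differentiableAt ha (hgn z hz)).differentiableAt.comp z
      (hg.differentiableAt (hG.mem_nhds hz))).differentiableWithinAt
  have hψ0 : ∀ z ∈ G, mob a (g z) ≠ 0 := by
    intro z hz h
    rw [mob, div_eq_zero_iff] at h
    rcases h with h | h
    · exact haG ⟨z, hz, sub_eq_zero.1 h⟩
    · exact mob_den_ne ha (hgn z hz) h
  obtain ⟨l, hl, -, hlexp⟩ := exists_log hG hGc hgood hψd hψ0 h0G (Complex.exp_log (hψ0 0 h0G))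
  set s : ℂ → ℂ := fun z => Complex.exp (l z / 2) with hs
  have hsd : DifferentiableOn ℂ s G := (hl.div_const 2).cexp
  have hsq : ∀ z ∈ G, s z ^ 2 = mob a (g z) := by
    intro z hz
    rw [hs, ← Complex.exp_nat_mul, ← hlexp z hz]
    congr 1; push_cast; ring
  have hsn : ∀ z ∈ G, ‖s z‖ < 1 := by
    intro z hz
    have h1 := mob_norm_lt ha (hgn z hz)
    rw [← hsq z hz, norm_pow] at h1
    by_contra h2
    push Not at h2
    nlinarith
  have hsi : InjOn s G := by
    intro z hz w hw h
    have h1 : mob a (g z) = mob a (g w) := by rw [← hsq z hz, ← hsq w hw, h]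
    exact hi hz hw (mob_injOn ha (hm hz) (hm hw) h1)
  set b := s 0 with hb
  have hbn := hsn 0 h0G
  have hb2 : b ^ 2 = - a := by rw [hsq 0 h0G, hg0]; simp [mob]
  have hb0 : b ≠ 0 := Complex.exp_ne_zero _
  refine ⟨fun z => mob b (s z), ?_, ?_, ?_, ?_, ?_⟩
  · exact fun z hz => ((mob_differentiableAt hbn (hsn z hz)).differentiableAt.comp z
      (hsd.differentiableAt (hG.mem_nhds hz))).differentiableWithinAt
  · intro z hz w hw h
    exact hsi hz hw (mob_injOn hbn (by simpa using hsn z hz) (by simpa using hsn w hw) h)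
  · intro z hz
    simpa using mob_norm_lt hbn (hsn z hz)
  · simp [mob, hb]
  · have hGn := hG.mem_nhds h0G
    have hs' := (hsd.differentiableAt hGn).hasDerivAt
    have hg' := (hg.differentiableAt hGn).hasDerivAt
    have hk : deriv (fun z => mob b (s z)) 0 =
        (1 - ‖b‖ ^ 2) / (1 - (starRingEnd ℂ) b * b) ^ 2 * deriv s 0 :=
      ((mob_differentiableAt hbn (hsn 0 h0G)).comp (0:ℂ) hs').deriv
    have h1 : HasDerivAt (fun z => mob a (g z))
        ((1 - ‖a‖ ^ 2) / (1 - (starRingEnd ℂ) a * g 0) ^ 2 * deriv g 0) 0 :=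
      (mob_differentiableAt ha (hgn 0 h0G)).comp (0:ℂ) hg'
    have h2 : HasDerivAt (fun z => mob a (g z)) (2 * b * deriv s 0) 0 := by
      have h3 : HasDerivAt (fun z => s z ^ 2) (2 * b * deriv s 0) 0 :=
        HasDerivAt.congr_deriv (hs'.pow 2) (by simp [hb])
      refine h3.congr_of_eventuallyEq ?_
      filter_upwards [hGn] with z hz using (hsq z hz).symm
    have h4 := h1.unique h2
    rw [hg0] at h4
    have hna : ‖a‖ = ‖b‖ ^ 2 := by rw [← norm_pow, hb2, norm_neg]
    have hb1 : 0 < ‖b‖ := norm_pos_iff.2 hb0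
    have hb3 : 0 < 1 - ‖b‖ ^ 2 := by nlinarith
    have h5 : (1 - ‖b‖ ^ 4) * ‖deriv g 0‖ = 2 * ‖b‖ * ‖deriv s 0‖ := by
      have h6 := congrArg norm h4
      have h7 : ‖(1 - (‖a‖:ℂ) ^ 2)‖ = 1 - ‖b‖ ^ 4 := by
        rw [hna]
        have : (1 - ((‖b‖ ^ 2 : ℝ) : ℂ) ^ 2) = ((1 - ‖b‖ ^ 4 : ℝ) : ℂ) := by push_cast; ring
        rw [this, Complex.norm_real, Real.norm_of_nonneg]
        nlinarith [sq_nonneg (‖b‖)]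
      simp only [mul_zero, sub_zero, one_pow, div_one, norm_mul, h7] at h6
      rw [h6]; simp
    have h8 : ‖deriv (fun z => mob b (s z)) 0‖ = ‖deriv s 0‖ / (1 - ‖b‖ ^ 2) := by
      rw [hk, Complex.conj_mul']
      have : (1 - (‖b‖:ℂ) ^ 2) = ((1 - ‖b‖ ^ 2 : ℝ) : ℂ) := by push_cast; ring
      rw [this, norm_mul, norm_div, norm_pow, Complex.norm_real, Real.norm_of_nonneg hb3.le]
      field_simp
    rw [h8, lt_div_iff₀ hb3]
    have hg1 : 0 < ‖deriv g 0‖ := norm_pos_iff.2 hd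
    have h9 : 2 * ‖b‖ * (‖deriv g 0‖ * (1 - ‖b‖ ^ 2)) < 2 * ‖b‖ * ‖deriv s 0‖ := by
      rw [← h5]
      have : 0 < (1 - ‖b‖ ^ 2) * ‖deriv g 0‖ * (1 - ‖b‖) ^ 2 := by
        have : 0 < 1 - ‖b‖ := by linarith
        positivity
      nlinarith
    exact lt_of_mul_lt_mul_left h9 (by positivity)

/-- `h` is the normalized Riemann map of the unit disc onto `G`, of conformal radius `R`. -/
structure IsRiemannMap (h : ℂ → ℂ) (G : Set ℂ) (R : ℝ) : Prop where
  diff : DifferentiableOn ℂ h (ball 0 1)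
  inj : InjOn h (ball 0 1)
  image : h '' ball 0 1 = G
  zero : h 0 = 0
  pos : 0 < R
  deriv_zero : deriv h 0 = R

theorem exists_riemannMap {G : Set ℂ} (hG : IsOpen G) (hGc : IsPreconnected G) (hgood : Good G)
    (h0G : (0:ℂ) ∈ G) (hbd : Bornology.IsBounded G) : ∃ h R, IsRiemannMap h G R := by
  let 𝓕 : Set (ℂ → ℂ) := {g | DifferentiableOn ℂ g G ∧ InjOn g G ∧ MapsTo g G (ball 0 1) ∧ g 0 = 0}
  have hGn := hG.mem_nhds h0G
  obtain ⟨δ, hδ, hδG⟩ := Metric.isOpen_iff.1 hG 0 h0G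
  let A : Set ℝ := (fun g : ℂ → ℂ => ‖deriv g 0‖) '' 𝓕
  have hAbd : BddAbove A := by
    refine ⟨1 / δ, ?_⟩
    rintro _ ⟨g, ⟨h1, h2, h3, h4⟩, rfl⟩
    refine Complex.norm_deriv_le_div_of_mapsTo_ball (h1.mono hδG) ?_ hδ
    rw [h4]
    exact fun z hz => ball_subset_closedBall (h3 (hδG hz))
  obtain ⟨B, hB0, hB⟩ := hbd.exists_pos_norm_lt
  have hlin : (fun z : ℂ => z / B) ∈ 𝓕 := by
    refine ⟨(differentiable_id.div_const (B:ℂ)).differentiableOn, ?_, ?_, by simp⟩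
    · intro z _ w _ h
      have : (B:ℂ) ≠ 0 := by exact_mod_cast hB0.ne'
      simpa [div_left_inj' this] using h
    · intro z hz
      rw [mem_ball_zero_iff, norm_div, Complex.norm_real, Real.norm_of_nonneg hB0.le,
        div_lt_one hB0]
      exact hB z hz
  have hAne : A.Nonempty := ⟨_, _, hlin, rfl⟩
  have hs0 : 0 < sSup A := by
    refine lt_of_lt_of_le ?_ (le_csSup hAbd ⟨_, hlin, rfl⟩)
    have : deriv (fun z : ℂ => z / B) 0 = 1 / B := by
      rw [deriv_div_const, deriv_id'']
    simp only [this]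
    rw [norm_div, Complex.norm_real, Real.norm_of_nonneg hB0.le, norm_one]
    positivity
  obtain ⟨u, -, hu, huA⟩ := exists_seq_tendsto_sSup hAne hAbd
  choose F hF hFu using huA
  obtain ⟨g, hg⟩ := montel (hyperfilter ℕ) hG (fun n => (hF n).1)
    (M := 1) (fun n z hz => by simpa using (mem_ball_zero_iff.1 ((hF n).2.2.1 hz)).le)
  have hle : (hyperfilter ℕ : Filter ℕ) ≤ atTop := Nat.hyperfilter_le_atTop
  have hgd := hg.differentiableOn (Eventually.of_forall fun n => (hF n).1) hG
  have hg'0 : ‖deriv g 0‖ = sSup A := by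
    have h1 := (hg.deriv (Eventually.of_forall fun n => (hF n).1) hG).tendsto_at h0G
    refine tendsto_nhds_unique h1.norm ?_
    refine (hu.mono_left hle).congr fun n => (hFu n).symm
  have hg0 : g 0 = 0 := by
    refine tendsto_nhds_unique (hg.tendsto_at h0G) ?_
    simp only [(hF _).2.2.2]
    exact tendsto_const_nhds
  have hd0 : deriv g 0 ≠ 0 := norm_pos_iff.1 (hg'0 ▸ hs0)
  have hgi : InjOn g G := by
    refine hurwitz hG hGc (fun n => (hF n).1) (fun n => (hF n).2.1) hg ?_
    by_contra hc
    push Not at hc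
    refine hd0 ?_
    have : g =ᶠ[𝓝 0] fun _ => g 0 := by
      filter_upwards [hGn] with z hz using hc z hz 0 h0G
    rw [this.deriv_eq, deriv_const]
  obtain ⟨hop, hinvd, -⟩ := injOn_inverse hG hgd hgi
  have hgcl : g '' G ⊆ closedBall 0 1 := by
    rintro _ ⟨z, hz, rfl⟩
    rw [mem_closedBall_zero_iff]
    refine le_of_tendsto (hg.tendsto_at hz).norm (Eventually.of_forall fun n => ?_)
    simpa using (mem_ball_zero_iff.1 ((hF n).2.2.1 hz)).le
  have hgb : g '' G ⊆ ball 0 1 := by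
    rw [← interior_closedBall (0:ℂ) one_ne_zero]
    exact interior_maximal hgcl hop
  have hsurj : g '' G = ball 0 1 := by
    refine subset_antisymm hgb fun a ha => ?_
    by_contra haG
    obtain ⟨k, hk1, hk2, hk3, hk4, hk5⟩ := koebe_step hG hGc hgood h0G hgd hgi
      (mapsTo_iff_image_subset.2 hgb) hg0 hd0 (mem_ball_zero_iff.1 ha) haG
    have := le_csSup hAbd (⟨k, ⟨hk1, hk2, hk3, hk4⟩, rfl⟩ : ‖deriv k 0‖ ∈ A)
    linarith
  set v := invFunOn g G with hv
  rw [hsurj] at hinvd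
  have hvG : ∀ w ∈ ball (0:ℂ) 1, v w ∈ G ∧ g (v w) = w := by
    intro w hw
    rw [← hsurj] at hw
    exact ⟨invFunOn_mem hw, invFunOn_eq hw⟩
  have hvg : ∀ z ∈ G, v (g z) = z := fun z hz => hgi.leftInvOn_invFunOn hz
  have hvi : InjOn v (ball 0 1) := fun x hx y hy h => by
    rw [← (hvG x hx).2, ← (hvG y hy).2, h]
  have hv0 : v 0 = 0 := by simpa [hg0] using hvg 0 h0G
  obtain ⟨-, -, hvd⟩ := injOn_inverse isOpen_ball hinvd hvi
  set c := deriv v 0 with hc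
  have hc0 : c ≠ 0 := hvd 0 (by simp)
  set e : ℂ := (starRingEnd ℂ) c / ‖c‖ with he
  have hcn : (‖c‖ : ℂ) ≠ 0 := by exact_mod_cast norm_ne_zero_iff.2 hc0
  have hen : ‖e‖ = 1 := by
    rw [he, norm_div, RCLike.norm_conj, Complex.norm_real, norm_norm, div_self]
    exact norm_ne_zero_iff.2 hc0
  have he0 : e ≠ 0 := by rw [← norm_ne_zero_iff, hen]; exact one_ne_zero
  have hmem : ∀ z, e * z ∈ ball (0:ℂ) 1 ↔ z ∈ ball (0:ℂ) 1 := by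
    intro z; simp [hen]
  refine ⟨fun z => v (e * z), ‖c‖, ?_, ?_, ?_, by simp [hv0], norm_pos_iff.2 hc0, ?_⟩
  · exact hinvd.comp (differentiable_id.const_mul e).differentiableOn fun z hz => (hmem z).2 hz
  · intro x hx y hy h
    exact mul_left_cancel₀ he0 (hvi ((hmem x).2 hx) ((hmem y).2 hy) h)
  · ext w
    constructor
    · rintro ⟨z, hz, rfl⟩
      exact (hvG _ ((hmem z).2 hz)).1
    · intro hw
      have hgw : g w ∈ ball (0:ℂ) 1 := hgb ⟨w, hw, rfl⟩
      refine ⟨e⁻¹ * g w, ?_, ?_⟩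
      · rw [← hmem, mul_inv_cancel_left₀ he0]; exact hgw
      · simp only [mul_inv_cancel_left₀ he0]; exact hvg w hw
  · have h1 : HasDerivAt v c (e * 0) := by
      rw [mul_zero]; exact (hinvd.differentiableAt (ball_mem_nhds 0 one_pos)).hasDerivAt
    have h2 : HasDerivAt (fun z => v (e * z)) (c * (e * 1)) 0 :=
      h1.comp (0:ℂ) ((hasDerivAt_id (0:ℂ)).const_mul e)
    rw [h2.deriv, he]
    have := Complex.mul_conj' c
    field_simp
    linear_combination this

/-! ### Parametric integrals -/

lemma continuousOn_param {X : Type*} [TopologicalSpace X] [FirstCountableTopology X] {S : Set X}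
    {K : X → ℝ → ℂ} {a b : ℝ}
    (hab : a ≤ b) (hK : ContinuousOn (uncurry K) (S ×ˢ Icc a b)) :
    ContinuousOn (fun x => ∫ t in a..b, K x t) S := by
  rw [continuousOn_iff_continuous_domRestrict]
  have h1 : Continuous (uncurry fun (x : S) (t : ℝ) => K x (projIcc a b hab t)) := by
    have h2 : Continuous fun p : S × ℝ => ((p.1 : X), (projIcc a b hab p.2 : ℝ)) := by fun_prop
    exact hK.comp_continuous h2 fun p => ⟨p.1.2, (projIcc a b hab p.2).2⟩
  refine (intervalIntegral.continuous_parametric_intervalIntegral_of_continuous'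
    (μ := MeasureTheory.volume) h1 a b).congr ?_
  intro x
  refine intervalIntegral.integral_congr fun t ht => ?_
  rw [uIcc_of_le hab] at ht
  simp only [projIcc_of_mem hab ht]

lemma hasDerivAt_param {K K' : ℂ → ℝ → ℂ} {U : Set ℂ} (hU : IsOpen U) {a b : ℝ} (hab : a ≤ b)
    (hK : ContinuousOn (uncurry K) (U ×ˢ Icc a b))
    (hK' : ContinuousOn (uncurry K') (U ×ˢ Icc a b))
    (hd : ∀ v ∈ U, ∀ t ∈ Icc a b, HasDerivAt (fun v => K v t) (K' v t) v) {v : ℂ} (hv : v ∈ U) :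
    HasDerivAt (fun v => ∫ t in a..b, K v t) (∫ t in a..b, K' v t) v := by
  obtain ⟨ε, hε, hb⟩ := (Metric.nhds_basis_closedBall).mem_iff.1 (hU.mem_nhds hv)
  have hsec : ∀ {L : ℂ → ℝ → ℂ}, ContinuousOn (uncurry L) (U ×ˢ Icc a b) → ∀ x ∈ U,
      ContinuousOn (L x) (Icc a b) := fun hL x hx =>
    hL.comp (f := fun t => (x, t)) (by fun_prop) fun t ht => ⟨hx, ht⟩
  obtain ⟨C, hC⟩ := ((isCompact_closedBall v ε).prod (isCompact_Icc (a := a) (b := b))).exists_bound_of_continuousOn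
    (hK'.mono (prod_mono hb subset_rfl))
  have hsub : uIoc a b ⊆ Icc a b := by rw [uIoc_of_le hab]; exact Ioc_subset_Icc_self
  refine (intervalIntegral.hasDerivAt_integral_of_dominated_loc_of_deriv_le
    (F := K) (F' := K') (bound := fun _ => C) (s := closedBall v ε) (closedBall_mem_nhds v hε)
    ?_ ?_ ?_ ?_ ?_ ?_).2
  · filter_upwards [hU.mem_nhds hv] with x hx
    exact ((hsec hK x hx).mono hsub).aestronglyMeasurable measurableSet_uIoc
  · exact (hsec hK v hv).intervalIntegrable_of_Icc hab
  · exact ((hsec hK' v hv).mono hsub).aestronglyMeasurable measurableSet_uIoc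
  · exact Eventually.of_forall fun t ht x hx => hC (x, t) ⟨hx, hsub ht⟩
  · exact intervalIntegrable_const
  · exact Eventually.of_forall fun t ht x hx => hd x (hb hx) t (hsub ht)

lemma hasDerivAt_param_circle {K K' : ℂ → ℂ → ℂ} {U : Set ℂ} (hU : IsOpen U) {s : ℝ} (hs : 0 ≤ s)
    (hK : ContinuousOn (uncurry K) (U ×ˢ sphere 0 s))
    (hK' : ContinuousOn (uncurry K') (U ×ˢ sphere 0 s))
    (hd : ∀ v ∈ U, ∀ z ∈ sphere (0:ℂ) s, HasDerivAt (fun v => K v z) (K' v z) v)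
    {v : ℂ} (hv : v ∈ U) :
    HasDerivAt (fun v => ∮ z in C(0, s), K v z) (∮ z in C(0, s), K' v z) v := by
  have hcomp : ∀ {L : ℂ → ℂ → ℂ}, ContinuousOn (uncurry L) (U ×ˢ sphere 0 s) →
      ContinuousOn (uncurry fun v θ => deriv (circleMap 0 s) θ • L v (circleMap 0 s θ))
        (U ×ˢ Icc 0 (2 * π)) := by
    intro L hL
    simp only [deriv_circleMap]
    refine ContinuousOn.smul (f := fun p : ℂ × ℝ => circleMap 0 s p.2 * I)
      (g := fun p : ℂ × ℝ => L p.1 (circleMap 0 s p.2)) (by fun_prop) ?_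
    exact hL.comp (f := fun p : ℂ × ℝ => (p.1, circleMap 0 s p.2)) (by fun_prop)
      fun p hp => ⟨hp.1, circleMap_mem_sphere 0 hs _⟩
  exact hasDerivAt_param hU Real.two_pi_pos.le (hcomp hK) (hcomp hK')
    (fun v hv t _ => (hd v hv _ (circleMap_mem_sphere 0 hs t)).fun_const_smul _) hv

/-! ### The domain dual to a univalent image -/

/-- `f` is univalent on the unit disc and fixes the origin. -/
structure Univalent (f : ℂ → ℂ) : Prop where
  diff : DifferentiableOn ℂ f (ball 0 1)
  inj : InjOn f (ball 0 1)
  zero : f 0 = 0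

/-- The complement of the image of `1 / f` on the closed disc of radius `r`. -/
def dual (f : ℂ → ℂ) (r : ℝ) : Set ℂ := {v | ∀ z ∈ closedBall (0:ℂ) r, v * f z ≠ 1}

lemma closedBall_subset_unit {r : ℝ} (hr : r < 1) : closedBall (0:ℂ) r ⊆ ball 0 1 :=
  closedBall_subset_ball hr

lemma Univalent.ne_zero {f : ℂ → ℂ} (hf : Univalent f) {z : ℂ} (hz : ‖z‖ < 1) (h0 : z ≠ 0) :
    f z ≠ 0 := fun h => h0 (hf.inj (by simpa using hz) (by simp) (h.trans hf.zero.symm))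

lemma dual_anti (f : ℂ → ℂ) {r s : ℝ} (h : r ≤ s) : dual f s ⊆ dual f r :=
  fun _ hv z hz => hv z (closedBall_subset_closedBall h hz)

lemma zero_mem_dual (f : ℂ → ℂ) (r : ℝ) : (0:ℂ) ∈ dual f r := fun z _ => by simp

lemma isOpen_dual {f : ℂ → ℂ} (hf : Univalent f) {r : ℝ} (hr : r < 1) : IsOpen (dual f r) := by
  have hc : ContinuousOn f (closedBall 0 r) :=
    hf.diff.continuousOn.mono (closedBall_subset_unit hr)
  have hcl : IsClosed ((fun p : ℂ × closedBall (0:ℂ) r => p.1) ''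
      {p : ℂ × closedBall (0:ℂ) r | p.1 * f p.2 = 1}) := by
    have : CompactSpace (closedBall (0:ℂ) r) :=
      isCompact_iff_compactSpace.1 (isCompact_closedBall 0 r)
    refine isClosedMap_fst_of_compactSpace _ ?_
    have h1 : Continuous fun p : ℂ × closedBall (0:ℂ) r => f p.2 :=
      (continuousOn_iff_continuous_domRestrict.1 hc).comp continuous_snd
    exact isClosed_eq (continuous_fst.mul h1) continuous_const
  rw [← isClosed_compl_iff]
  convert hcl using 1
  ext v
  simp [dual]

lemma exists_ball_subset_image {f : ℂ → ℂ} (hf : Univalent f) {r : ℝ} (hr0 : 0 < r) (hr : r ≤ 1) :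
    ∃ d > 0, ball 0 d ⊆ f '' ball 0 r := by
  have hsub : ball (0:ℂ) r ⊆ ball 0 1 := ball_subset_ball hr
  have h1 := (injOn_inverse isOpen_ball (hf.diff.mono hsub) (hf.inj.mono hsub)).1
  exact Metric.isOpen_iff.1 h1 0 ⟨0, by simpa using hr0, hf.zero⟩

lemma isBounded_dual {f : ℂ → ℂ} (hf : Univalent f) {r : ℝ} (hr0 : 0 < r) (hr : r < 1) :
    Bornology.IsBounded (dual f r) := by
  obtain ⟨d, hd, hsub⟩ := exists_ball_subset_image hf hr0 hr.le
  refine (isBounded_closedBall (x := (0:ℂ)) (r := 1 / d)).subset fun v hv => ?_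
  rw [mem_closedBall_zero_iff]
  by_contra h
  push Not at h
  have hv0 : v ≠ 0 := by
    rintro rfl
    have : 0 < 1 / d := by positivity
    rw [norm_zero] at h
    linarith
  have : v⁻¹ ∈ ball (0:ℂ) d := by
    rw [mem_ball_zero_iff, norm_inv]
    rw [inv_lt_comm₀ (norm_pos_iff.2 hv0) hd]
    simpa using h
  obtain ⟨z, hz, hfz⟩ := hsub this
  exact hv z (ball_subset_closedBall hz) (by rw [hfz, mul_inv_cancel₀ hv0])

/-- The image of the punctured disc of radius `s` under `1 / f`. -/
def recip (f : ℂ → ℂ) (s : ℝ) : Set ℂ := {v | ∃ z ∈ ball (0:ℂ) s, v * f z = 1}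

lemma isOpen_recip {f : ℂ → ℂ} (hf : Univalent f) {s : ℝ} (hs : s ≤ 1) : IsOpen (recip f s) := by
  have hsub : ball (0:ℂ) s ⊆ ball 0 1 := ball_subset_ball hs
  have h1 := (injOn_inverse isOpen_ball (hf.diff.mono hsub) (hf.inj.mono hsub)).1
  have h2 : recip f s = {v | v ≠ 0} ∩ (fun v => v⁻¹) ⁻¹' (f '' ball 0 s) := by
    ext v
    constructor
    · rintro ⟨z, hz, h⟩
      have hv : v ≠ 0 := left_ne_zero_of_mul_eq_one h
      exact ⟨hv, z, hz, eq_inv_of_mul_eq_one_right h⟩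
    · rintro ⟨hv, z, hz, h⟩
      exact ⟨z, hz, by rw [h, mul_inv_cancel₀ hv]⟩
  rw [h2]
  exact continuousOn_inv₀.isOpen_inter_preimage isOpen_ne h1

lemma dual_union_recip (f : ℂ → ℂ) {s s' : ℝ} (h : s < s') (v : ℂ) :
    v ∈ dual f s ∨ v ∈ recip f s' := by
  by_cases hv : v ∈ dual f s
  · exact Or.inl hv
  · right
    simp only [dual, mem_ofPred_eq, not_forall, not_not] at hv
    obtain ⟨z, hz, hzv⟩ := hv
    exact ⟨z, closedBall_subset_ball h hz, hzv⟩

lemma isPreconnected_annulus (r : ℝ) (hr : 0 ≤ r) : IsPreconnected {z : ℂ | r < ‖z‖ ∧ ‖z‖ < 1} := by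
  have h1 : IsPreconnected ((fun p : ℝ × ℝ => (p.1 : ℂ) * Complex.exp (p.2 * I)) ''
      (Ioo r 1 ×ˢ univ)) :=
    (isPreconnected_Ioo.prod isPreconnected_univ).image _ (by fun_prop)
  convert h1 using 1
  ext z
  simp only [mem_ofPred_eq, mem_image, mem_prod, mem_Ioo, mem_univ, and_true, Prod.exists]
  constructor
  · rintro h
    exact ⟨‖z‖, Complex.arg z, h, Complex.norm_mul_exp_arg_mul_I z⟩
  · rintro ⟨a, b, ⟨h1, h2⟩, rfl⟩
    have ha : 0 ≤ a := hr.trans h1.le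
    rw [norm_mul, Complex.norm_exp_ofReal_mul_I, mul_one, Complex.norm_real,
      Real.norm_of_nonneg ha]
    exact ⟨h1, h2⟩

lemma isPreconnected_dual {f : ℂ → ℂ} (hf : Univalent f) {r : ℝ} (hr0 : 0 < r) (hr : r < 1) :
    IsPreconnected (dual f r) := by
  have hann : dual f r ∩ recip f 1 = (fun z => (f z)⁻¹) '' {z : ℂ | r < ‖z‖ ∧ ‖z‖ < 1} := by
    ext v
    constructor
    · rintro ⟨h1, z, hz, h⟩
      refine ⟨z, ⟨?_, by simpa using hz⟩, ?_⟩
      · by_contra h2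
        exact h1 z (by simpa using h2) h
      · exact (eq_inv_of_mul_eq_one_left h).symm
    · rintro ⟨z, ⟨h1, h2⟩, rfl⟩
      have hz0 : z ≠ 0 := by rintro rfl; simp at h1; linarith
      have hfz := hf.ne_zero h2 hz0
      refine ⟨fun y hy h => ?_, z, by simpa using h2, inv_mul_cancel₀ hfz⟩
      have h3 : f y = f z := by field_simp at h; exact h
      have := hf.inj (closedBall_subset_unit hr hy) (by simpa using h2) h3
      subst this
      rw [mem_closedBall_zero_iff] at hy; linarith
  have hpre : IsPreconnected (dual f r ∩ recip f 1) := by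
    rw [hann]
    refine (isPreconnected_annulus r hr0.le).image _ ?_
    refine ContinuousOn.inv₀ (hf.diff.continuousOn.mono fun z hz => by simpa using hz.2) ?_
    rintro z ⟨h1, h2⟩
    exact hf.ne_zero h2 (by rintro rfl; simp at h1; linarith)
  have hVo := isOpen_dual hf hr
  have hRo := isOpen_recip hf le_rfl
  rw [isPreconnected_iff_subset_of_disjoint] at hpre ⊢
  have key : ∀ u v : Set ℂ, IsOpen u → IsOpen v → dual f r ⊆ u ∪ v → dual f r ∩ (u ∩ v) = ∅ →
      dual f r ∩ recip f 1 ⊆ u → (dual f r ∩ v).Nonempty → False := by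
    intro u v hu hv huv hd hsub hne
    have hc := isPreconnected_univ (α := ℂ) ((dual f r ∩ u) ∪ recip f 1) (dual f r ∩ v)
      ((hVo.inter hu).union hRo) (hVo.inter hv) ?_ ?_ ?_
    · obtain ⟨x, -, h1 | h1, h2⟩ := hc
      · exact (hd.subset ⟨h1.1, h1.2, h2.2⟩ : x ∈ (∅ : Set ℂ))
      · exact (hd.subset ⟨h2.1, hsub ⟨h2.1, h1⟩, h2.2⟩ : x ∈ (∅ : Set ℂ))
    · intro x _
      rcases dual_union_recip f hr x with h | h
      · rcases huv h with h' | h'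
        · exact Or.inl (Or.inl ⟨h, h'⟩)
        · exact Or.inr ⟨h, h'⟩
      · exact Or.inl (Or.inr h)
    · obtain ⟨d, hd, hb⟩ := exists_ball_subset_image hf one_pos le_rfl
      have : ((d/2 : ℝ) : ℂ) ∈ ball (0:ℂ) d := by
        rw [mem_ball_zero_iff, Complex.norm_real, Real.norm_of_nonneg (by positivity)]; linarith
      obtain ⟨z, hz, hz'⟩ := hb this
      refine ⟨((d/2 : ℝ) : ℂ)⁻¹, mem_univ _, Or.inr ⟨z, hz, ?_⟩⟩
      rw [hz', inv_mul_cancel₀]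
      exact_mod_cast (by positivity : (d/2:ℝ) ≠ 0)
    · simpa using hne
  intro u v hu hv huv hd
  have h1 := hpre u v hu hv (inter_subset_left.trans huv)
    (subset_empty_iff.1 fun x hx => hd.subset ⟨hx.1.1, hx.2⟩)
  rcases h1 with h1 | h1
  · left
    intro x hx
    by_contra hxu
    exact key u v hu hv huv hd h1 ⟨x, hx, (huv hx).resolve_left hxu⟩
  · right
    intro x hx
    by_contra hxu
    exact key v u hv hu (by rwa [union_comm]) (by rwa [inter_comm v u]) h1
      ⟨x, hx, (huv hx).resolve_right hxu⟩

/-! ### Primitives on the dual domain -/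

lemma sphere_subset_unit {s : ℝ} (hs : s < 1) : sphere (0:ℂ) s ⊆ ball 0 1 :=
  sphere_subset_closedBall.trans (closedBall_subset_unit hs)

lemma Univalent.ne_zero_sphere {f : ℂ → ℂ} (hf : Univalent f) {s : ℝ} (hs0 : 0 < s) (hs : s < 1)
    {z : ℂ} (hz : z ∈ sphere (0:ℂ) s) : f z ≠ 0 := by
  rw [mem_sphere_zero_iff_norm] at hz
  exact hf.ne_zero (hz ▸ hs) (by rintro rfl; simp at hz; linarith)

/-- Holomorphy in `v` of a Cauchy-type integral with kernel `f / (1 - v f) = 1 / (1 / f - v)`. -/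
lemma differentiableOn_cauchy {f c : ℂ → ℂ} {s : ℝ} (hs0 : 0 ≤ s)
    (hf : ContinuousOn f (sphere 0 s)) (hc : ContinuousOn c (sphere 0 s)) {U : Set ℂ}
    (hU : IsOpen U) (hne : ∀ v ∈ U, ∀ z ∈ sphere (0:ℂ) s, 1 - v * f z ≠ 0) :
    DifferentiableOn ℂ (fun v => ∮ z in C(0, s), c z * (f z / (1 - v * f z))) U := by
  have hf2 : ContinuousOn (fun p : ℂ × ℂ => f p.2) (U ×ˢ sphere 0 s) :=
    hf.comp continuousOn_snd fun p hp => hp.2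
  have hc2 : ContinuousOn (fun p : ℂ × ℂ => c p.2) (U ×ˢ sphere 0 s) :=
    hc.comp continuousOn_snd fun p hp => hp.2
  have hden : ContinuousOn (fun p : ℂ × ℂ => 1 - p.1 * f p.2) (U ×ˢ sphere 0 s) :=
    continuousOn_const.sub (continuousOn_fst.mul hf2)
  intro v hv
  refine (hasDerivAt_param_circle (K := fun v z => c z * (f z / (1 - v * f z)))
    (K' := fun v z => c z * (f z ^ 2 / (1 - v * f z) ^ 2)) hU hs0
    ?_ ?_ ?_ hv).differentiableAt.differentiableWithinAt
  · exact hc2.mul (hf2.div hden fun p hp => hne _ hp.1 _ hp.2)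
  · exact hc2.mul ((hf2.pow 2).div (hden.pow 2) fun p hp => pow_ne_zero 2 (hne _ hp.1 _ hp.2))
  · intro v hv z hz
    have h0 := hne v hv z hz
    have h1 : HasDerivAt (fun v : ℂ => 1 - v * f z) (-(1 * f z)) v :=
      ((hasDerivAt_id v).mul_const (f z)).const_sub 1
    have h2 := ((h1.inv h0).const_mul (f z)).const_mul (c z)
    refine HasDerivAt.congr_deriv h2 ?_
    field_simp

/-- A branch of `-log (1 - v f)` on the dual domain, as a function of both variables. -/
noncomputable def logKer (f : ℂ → ℂ) (v z : ℂ) : ℂ :=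
  ∫ u in (0:ℝ)..1, v * (deriv f (u * z) * z) / (1 - v * f (u * z))

lemma logKer_aux {f : ℂ → ℂ} (hf : Univalent f) {s : ℝ} (hs : s < 1) :
    ContinuousOn (fun p : (ℂ × ℂ) × ℝ => f (p.2 * p.1.2))
        ((dual f s ×ˢ sphere 0 s) ×ˢ Icc 0 1) ∧
    ContinuousOn (fun p : (ℂ × ℂ) × ℝ => deriv f (p.2 * p.1.2))
        ((dual f s ×ˢ sphere 0 s) ×ˢ Icc 0 1) ∧
    (∀ u ∈ Icc (0:ℝ) 1, ∀ z ∈ sphere (0:ℂ) s, (u:ℂ) * z ∈ closedBall (0:ℂ) s) := by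
  have hm : ∀ u ∈ Icc (0:ℝ) 1, ∀ z ∈ sphere (0:ℂ) s, (u:ℂ) * z ∈ closedBall (0:ℂ) s := by
    intro u hu z hz
    rw [mem_sphere_zero_iff_norm] at hz
    rw [mem_closedBall_zero_iff, norm_mul, Complex.norm_real, Real.norm_of_nonneg hu.1, hz]
    have : 0 ≤ s := hz ▸ norm_nonneg z
    nlinarith [hu.2]
  refine ⟨?_, ?_, hm⟩
  · refine hf.diff.continuousOn.comp (by fun_prop) fun p hp => ?_
    exact closedBall_subset_unit hs (hm _ hp.2 _ hp.1.2)
  · refine (hf.diff.deriv isOpen_ball).continuousOn.comp (by fun_prop) fun p hp => ?_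
    exact closedBall_subset_unit hs (hm _ hp.2 _ hp.1.2)

lemma logKer_continuousOn {f : ℂ → ℂ} (hf : Univalent f) {s : ℝ} (hs : s < 1) :
    ContinuousOn (uncurry (logKer f)) (dual f s ×ˢ sphere 0 s) := by
  obtain ⟨h1, h2, h3⟩ := logKer_aux hf hs
  refine continuousOn_param (X := ℂ × ℂ) (S := dual f s ×ˢ sphere 0 s)
    (K := fun p u => p.1 * (deriv f (u * p.2) * p.2) / (1 - p.1 * f (u * p.2))) zero_le_one ?_
  refine ContinuousOn.div (f := fun q : (ℂ × ℂ) × ℝ => q.1.1 * (deriv f (q.2 * q.1.2) * q.1.2))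
    (g := fun q : (ℂ × ℂ) × ℝ => 1 - q.1.1 * f (q.2 * q.1.2)) ?_ ?_ ?_
  · exact (by fun_prop : Continuous fun q : (ℂ × ℂ) × ℝ => q.1.1).continuousOn.mul
      (h2.mul (by fun_prop : Continuous fun q : (ℂ × ℂ) × ℝ => q.1.2).continuousOn)
  · exact continuousOn_const.sub
      ((by fun_prop : Continuous fun q : (ℂ × ℂ) × ℝ => q.1.1).continuousOn.mul h1)
  · intro q hq h
    exact hq.1.1 _ (h3 _ hq.2 _ hq.1.2) (sub_eq_zero.1 h).symm

lemma logKer_hasDerivAt {f : ℂ → ℂ} (hf : Univalent f) {s : ℝ} (hs : s < 1) {v z : ℂ}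
    (hv : v ∈ dual f s) (hz : z ∈ sphere (0:ℂ) s) :
    HasDerivAt (fun v => logKer f v z) (f z / (1 - v * f z)) v := by
  obtain ⟨h1, h2, h3⟩ := logKer_aux hf hs
  have hemb : MapsTo (fun p : ℂ × ℝ => ((p.1, z), p.2)) (dual f s ×ˢ Icc 0 1)
      ((dual f s ×ˢ sphere 0 s) ×ˢ Icc 0 1) := fun p hp => ⟨⟨hp.1, hz⟩, hp.2⟩
  have hf2 := h1.comp (f := fun p : ℂ × ℝ => ((p.1, z), p.2)) (by fun_prop) hemb
  have hd2 := h2.comp (f := fun p : ℂ × ℝ => ((p.1, z), p.2)) (by fun_prop) hemb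
  have hden : ContinuousOn (fun p : ℂ × ℝ => 1 - p.1 * f (p.2 * z)) (dual f s ×ˢ Icc 0 1) :=
    continuousOn_const.sub (continuousOn_fst.mul hf2)
  have hne : ∀ v ∈ dual f s, ∀ u ∈ Icc (0:ℝ) 1, 1 - v * f (u * z) ≠ 0 := fun v hv u hu h =>
    hv _ (h3 u hu z hz) (sub_eq_zero.1 h).symm
  have key := hasDerivAt_param (isOpen_dual hf hs) (zero_le_one' ℝ)
    (K := fun v u => v * (deriv f (u * z) * z) / (1 - v * f (u * z)))
    (K' := fun v u => (deriv f (u * z) * z) / (1 - v * f (u * z)) ^ 2) ?_ ?_ ?_ hv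
  · have hIntegral : ∫ u in (0:ℝ)..1, (deriv f (u * z) * z) / (1 - v * f (u * z)) ^ 2
        = f z / (1 - v * f z) := by
      have hFTC := intervalIntegral.integral_eq_sub_of_hasDerivAt (a := 0) (b := 1)
        (f := fun u : ℝ => f (u * z) / (1 - v * f (u * z)))
        (f' := fun u : ℝ => (deriv f (u * z) * z) / (1 - v * f (u * z)) ^ 2) ?_ ?_
      · rw [hFTC]; simp [hf.zero]
      · intro u hu
        rw [uIcc_of_le zero_le_one] at hu
        have hfd : HasDerivAt f (deriv f ((u:ℂ) * z)) ((u:ℂ) * z) :=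
          (hf.diff.differentiableAt (isOpen_ball.mem_nhds
            (closedBall_subset_unit hs (h3 u hu z hz)))).hasDerivAt
        have hl : HasDerivAt (fun u : ℝ => (u:ℂ) * z) (1 * z) u :=
          (Complex.ofRealCLM.hasDerivAt (x := u)).mul_const z
        have h4 : HasDerivAt (fun u : ℝ => f (u * z)) (deriv f ((u:ℂ) * z) * (1 * z)) u :=
          hfd.comp u hl
        have h5 := h4.div ((h4.const_mul v).const_sub 1) (hne v hv u hu)
        refine HasDerivAt.congr_deriv h5 ?_
        have := hne v hv u hu
        field_simp
        ring
      · refine ContinuousOn.intervalIntegrable_of_Icc zero_le_one ?_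
        have hs1 : ContinuousOn (fun u : ℝ => f (u * z)) (Icc 0 1) :=
          hf2.comp (f := fun u => (v, u)) (by fun_prop) fun u hu => ⟨hv, hu⟩
        have hs2 : ContinuousOn (fun u : ℝ => deriv f (u * z)) (Icc 0 1) :=
          hd2.comp (f := fun u => (v, u)) (by fun_prop) fun u hu => ⟨hv, hu⟩
        exact (hs2.mul continuousOn_const).div
          ((continuousOn_const.sub (continuousOn_const.mul hs1)).pow 2)
          fun u hu => pow_ne_zero 2 (hne v hv u hu)
    rw [hIntegral] at key
    exact key
  · exact (continuousOn_fst.mul (hd2.mul continuousOn_const)).div hden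
      fun p hp => hne _ hp.1 _ hp.2
  · exact (hd2.mul continuousOn_const).div (hden.pow 2)
      fun p hp => pow_ne_zero 2 (hne _ hp.1 _ hp.2)
  · intro v hv u hu
    have h0 := hne v hv u hu
    have h4 : HasDerivAt (fun v : ℂ => 1 - v * f (u * z)) (-(1 * f (u * z))) v :=
      ((hasDerivAt_id v).mul_const _).const_sub 1
    have h5 : HasDerivAt (fun v : ℂ => v * (deriv f (u * z) * z)) (1 * (deriv f (u * z) * z)) v :=
      (hasDerivAt_id v).mul_const _
    refine HasDerivAt.congr_deriv (h5.div h4 h0) ?_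
    field_simp
    ring

/-- The Cauchy-type integrals over `|z| = s` have primitives on the dual domain. -/
lemma exact_cauchy {f c : ℂ → ℂ} (hf : Univalent f) {s : ℝ} (hs0 : 0 < s) (hs : s < 1)
    (hc : ContinuousOn c (sphere 0 s)) :
    Complex.IsExactOn (fun v => ∮ z in C(0, s), c z * (f z / (1 - v * f z))) (dual f s) := by
  refine ⟨fun v => ∮ z in C(0, s), c z * logKer f v z, fun v hv => ?_⟩
  have hfc : ContinuousOn f (sphere 0 s) := hf.diff.continuousOn.mono (sphere_subset_unit hs)
  have hf2 : ContinuousOn (fun p : ℂ × ℂ => f p.2) (dual f s ×ˢ sphere 0 s) :=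
    hfc.comp continuousOn_snd fun p hp => hp.2
  have hc2 : ContinuousOn (fun p : ℂ × ℂ => c p.2) (dual f s ×ˢ sphere 0 s) :=
    hc.comp continuousOn_snd fun p hp => hp.2
  refine hasDerivAt_param_circle (K := fun v z => c z * logKer f v z)
    (K' := fun v z => c z * (f z / (1 - v * f z))) (isOpen_dual hf hs) hs0.le ?_ ?_ ?_ hv
  · exact hc2.mul (logKer_continuousOn hf hs)
  · exact hc2.mul (hf2.div (continuousOn_const.sub (continuousOn_fst.mul hf2))
      fun p hp h => hp.1 _ (sphere_subset_closedBall hp.2) (sub_eq_zero.1 h).symm)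
  · exact fun v hv z hz => (logKer_hasDerivAt hf hs hv hz).const_mul _

lemma inv_mem_dual {f : ℂ → ℂ} (hf : Univalent f) {r : ℝ} (hr0 : 0 ≤ r) (hr : r < 1) {z : ℂ}
    (h1 : r < ‖z‖) (h2 : ‖z‖ < 1) : (f z)⁻¹ ∈ dual f r := by
  have hz0 : z ≠ 0 := by rintro rfl; simp at h1; linarith
  have hfz := hf.ne_zero h2 hz0
  intro y hy h
  have h3 : f y = f z := by field_simp at h; exact h
  have := hf.inj (closedBall_subset_unit hr hy) (by simpa using h2) h3
  subst this
  rw [mem_closedBall_zero_iff] at hy; linarith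

/-- The argument principle for `f - f z₀` on circles inside and outside `z₀`. -/
lemma logDeriv_circle {f : ℂ → ℂ} (hf : Univalent f) {z₀ : ℂ} {s : ℝ} (hs0 : 0 < s) (hs : s < 1)
    (hz₀ : ‖z₀‖ < 1) (hne : ‖z₀‖ ≠ s) :
    (∮ z in C(0, s), deriv f z / (f z - f z₀)) = if ‖z₀‖ < s then 2 * π * I else 0 := by
  have hz₀' : z₀ ∈ ball (0:ℂ) 1 := by simpa using hz₀
  set k := dslope f z₀ with hk
  have hkd : DifferentiableOn ℂ k (ball 0 1) :=
    (Complex.differentiableOn_dslope (isOpen_ball.mem_nhds hz₀')).2 hf.diff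
  have hk0 : ∀ z ∈ ball (0:ℂ) 1, k z ≠ 0 := by
    intro z hz
    by_cases h : z = z₀
    · rw [h, hk, dslope_same]
      exact (injOn_inverse isOpen_ball hf.diff hf.inj).2.2 z₀ hz₀'
    · rw [hk, dslope_of_ne _ h, slope_def_field]
      exact div_ne_zero (sub_ne_zero.2 fun h' => h (hf.inj hz hz₀' h')) (sub_ne_zero.2 h)
  have hkk : ∀ z, f z - f z₀ = (z - z₀) * k z := fun z => by
    rw [hk]; simpa using (sub_smul_dslope f z₀ z).symm
  have hsph : ∀ z ∈ sphere (0:ℂ) s, z - z₀ ≠ 0 := fun z hz h => by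
    rw [mem_sphere_zero_iff_norm] at hz
    rw [sub_eq_zero] at h; subst h; exact hne hz
  have heq : EqOn (fun z => deriv f z / (f z - f z₀))
      (fun z => (z - z₀)⁻¹ + deriv k z / k z) (sphere 0 s) := by
    intro z hz
    have hzb := sphere_subset_unit hs hz
    have hd : deriv f z = k z + (z - z₀) * deriv k z := by
      have h1 : HasDerivAt (fun z => f z₀ + (z - z₀) * k z) (1 * k z + (z - z₀) * deriv k z) z :=
        (((hasDerivAt_id z).sub_const z₀).mul
          (hkd.differentiableAt (isOpen_ball.mem_nhds hzb)).hasDerivAt).const_add _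
      have h2 : f = fun z => f z₀ + (z - z₀) * k z := by
        funext z; rw [← hkk]; ring
      rw [h2, h1.deriv, one_mul]
    have h1 := hsph z hz
    have h2 := hk0 z hzb
    simp only [hkk, hd]
    field_simp
  rw [circleIntegral.integral_congr hs0.le heq]
  have hdk : DifferentiableOn ℂ (fun z => deriv k z / k z) (ball 0 1) :=
    (hkd.deriv isOpen_ball).div hkd hk0
  have hc1 : CircleIntegrable (fun z => (z - z₀)⁻¹) 0 s :=
    ContinuousOn.circleIntegrable hs0.le
      ((continuousOn_id.sub continuousOn_const).inv₀ hsph)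
  have hc2 : CircleIntegrable (fun z => deriv k z / k z) 0 s :=
    ContinuousOn.circleIntegrable hs0.le (hdk.continuousOn.mono (sphere_subset_unit hs))
  have hz2 : (∮ z in C(0, s), deriv k z / k z) = 0 :=
    Complex.circleIntegral_eq_zero_of_differentiable_on_off_countable hs0.le countable_empty
      (hdk.continuousOn.mono (closedBall_subset_unit hs)) fun z hz =>
        hdk.differentiableAt (isOpen_ball.mem_nhds (ball_subset_ball hs.le hz.1))
  rw [circleIntegral.integral_add hc1 hc2, hz2, add_zero]
  split_ifs with h
  · exact circleIntegral.integral_sub_inv_of_mem_ball (by simpa using h)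
  · have hgt : s < ‖z₀‖ := lt_of_le_of_ne (not_lt.1 h) (Ne.symm hne)
    have hnz : ∀ z ∈ closedBall (0:ℂ) s, z - z₀ ≠ 0 := fun z hz h => by
      rw [mem_closedBall_zero_iff] at hz
      rw [sub_eq_zero] at h; subst h; linarith
    have hdd : DifferentiableOn ℂ (fun z => (z - z₀)⁻¹) (closedBall (0:ℂ) s) :=
      (differentiableOn_id.sub (differentiableOn_const _)).inv hnz
    exact Complex.circleIntegral_eq_zero_of_differentiable_on_off_countable hs0.le countable_empty
      hdd.continuousOn fun z hz => (hdd.differentiableAt (closedBall_mem_nhds_of_mem hz.1))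

/-- The density `ψ(q) q'` with `q = 1 / f`. -/
noncomputable def dens (f ψ : ℂ → ℂ) (z : ℂ) : ℂ := ψ (f z)⁻¹ * (-deriv f z / f z ^ 2)

lemma dens_continuousOn {f ψ : ℂ → ℂ} (hf : Univalent f) {r s : ℝ} (hr0 : 0 ≤ r) (hrs : r < s)
    (hs : s < 1) (hψ : DifferentiableOn ℂ ψ (dual f r)) :
    ContinuousOn (dens f ψ) (sphere 0 s) := by
  have hs0 : 0 < s := hr0.trans_lt hrs
  have hne : ∀ z ∈ sphere (0:ℂ) s, f z ≠ 0 := fun z hz => hf.ne_zero_sphere hs0 hs hz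
  have hfc := hf.diff.continuousOn.mono (sphere_subset_unit hs)
  refine (hψ.continuousOn.comp (hfc.inv₀ hne) fun z hz => ?_).mul
    (((hf.diff.deriv isOpen_ball).continuousOn.mono (sphere_subset_unit hs)).neg.div (hfc.pow 2)
      fun z hz => pow_ne_zero 2 (hne z hz))
  rw [mem_sphere_zero_iff_norm] at hz
  exact inv_mem_dual hf hr0 (hrs.trans hs) (by linarith) (by linarith)

/-- Cauchy's formula on the image of an annulus under `1 / f`. -/
lemma cauchy_annulus {f ψ : ℂ → ℂ} (hf : Univalent f) {r s s' : ℝ} (hr0 : 0 ≤ r) (hrs : r < s)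
    (hs' : s' < 1) (hψ : DifferentiableOn ℂ ψ (dual f r)) {z₀ : ℂ} (h1 : s < ‖z₀‖)
    (h2 : ‖z₀‖ < s') :
    (∮ z in C(0, s'), dens f ψ z * (f z / (1 - (f z₀)⁻¹ * f z))) -
      (∮ z in C(0, s), dens f ψ z * (f z / (1 - (f z₀)⁻¹ * f z))) = 2 * π * I * ψ (f z₀)⁻¹ := by
  have hs0 : 0 < s := hr0.trans_lt hrs
  have hz₀1 : ‖z₀‖ < 1 := h2.trans hs'
  have hz₀b : z₀ ∈ ball (0:ℂ) 1 := by simpa using hz₀1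
  have hz₀0 : z₀ ≠ 0 := by rintro rfl; simp at h1; linarith
  have hw0 : f z₀ ≠ 0 := hf.ne_zero hz₀1 hz₀0
  set v := (f z₀)⁻¹ with hv
  have hvd : v ∈ dual f r := inv_mem_dual hf hr0 (by linarith) (by linarith) hz₀1
  have hVn : dual f r ∈ 𝓝 v := (isOpen_dual hf (by linarith)).mem_nhds hvd
  have hDd : DifferentiableOn ℂ (dslope ψ v) (dual f r) :=
    (Complex.differentiableOn_dslope hVn).2 hψ
  -- the open annulus on which everything is holomorphic
  set A : Set ℂ := {z | r < ‖z‖ ∧ ‖z‖ < 1} with hA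
  have hAo : IsOpen A := (isOpen_lt continuous_const continuous_norm).inter
    (isOpen_lt continuous_norm continuous_const)
  have hAb : A ⊆ ball 0 1 := fun z hz => by simpa using hz.2
  have hAne : ∀ z ∈ A, f z ≠ 0 := fun z hz =>
    hf.ne_zero hz.2 (by rintro rfl; have := hz.1; simp at this; linarith)
  have hfA := hf.diff.mono hAb
  have hf'A := (hf.diff.deriv isOpen_ball).mono hAb
  set G : ℂ → ℂ := fun z => dslope ψ v (f z)⁻¹ * (-deriv f z / f z ^ 2) -
    ψ v * (deriv f z / f z) with hG
  have hGd : DifferentiableOn ℂ G A := by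
    refine DifferentiableOn.sub (DifferentiableOn.mul ?_ ?_) ?_
    · exact hDd.comp (hfA.inv hAne) fun z hz => inv_mem_dual hf hr0 (by linarith) hz.1 hz.2
    · exact hf'A.neg.div (hfA.pow 2) fun z hz => pow_ne_zero 2 (hAne z hz)
    · exact (differentiableOn_const _).mul (hf'A.div hfA hAne)
  have hannA : closedBall (0:ℂ) s' \ ball 0 s ⊆ A := by
    rintro z ⟨hz1, hz2⟩
    simp only [mem_closedBall_zero_iff, mem_ball_zero_iff, not_lt] at hz1 hz2
    exact ⟨by linarith, by linarith⟩
  have hGint : (∮ z in C(0, s'), G z) = ∮ z in C(0, s), G z := by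
    refine Complex.circleIntegral_eq_of_differentiable_on_annulus_off_countable hs0
      (by linarith) countable_empty (hGd.continuousOn.mono hannA) fun z hz => ?_
    refine hGd.differentiableAt (hAo.mem_nhds (hannA ⟨ball_subset_closedBall hz.1.1, fun h => ?_⟩))
    exact hz.1.2 (ball_subset_closedBall h)
  have hdec : ∀ t : ℝ, r < t → t < 1 → t ≠ ‖z₀‖ →
      (∮ z in C(0, t), dens f ψ z * (f z / (1 - v * f z))) =
        (∮ z in C(0, t), G z) + ψ v * ∮ z in C(0, t), deriv f z / (f z - f z₀) := by
    intro t ht1 ht2 ht3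
    have ht0 : 0 < t := hr0.trans_lt ht1
    have hsA : sphere (0:ℂ) t ⊆ A := fun z hz => by
      rw [mem_sphere_zero_iff_norm] at hz; exact ⟨by linarith, by linarith⟩
    have hfne : ∀ z ∈ sphere (0:ℂ) t, f z - f z₀ ≠ 0 := by
      intro z hz h
      have := hf.inj (hAb (hsA hz)) hz₀b (sub_eq_zero.1 h)
      subst this
      rw [mem_sphere_zero_iff_norm] at hz; exact ht3 hz.symm
    have hcongr : EqOn (fun z => dens f ψ z * (f z / (1 - v * f z)))
        (fun z => G z + ψ v * (deriv f z / (f z - f z₀))) (sphere 0 t) := by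
      intro z hz
      have hfz := hAne z (hsA hz)
      have hfw := hfne z hz
      have hqv : (f z)⁻¹ ≠ v := by
        intro h
        rw [hv, inv_inj] at h
        exact hfw (sub_eq_zero.2 h)
      have hd1 : dslope ψ v (f z)⁻¹ = (ψ (f z)⁻¹ - ψ v) / ((f z)⁻¹ - v) := by
        rw [dslope_of_ne _ hqv, slope_def_field]
      have hden : (f z)⁻¹ - v = (f z₀ - f z) / (f z * f z₀) := by rw [hv]; field_simp
      have hden2 : 1 - v * f z = (f z₀ - f z) / f z₀ := by rw [hv]; field_simp
      have hfw' : f z₀ - f z ≠ 0 := by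
        intro h; apply hfw; rw [← neg_sub, h, neg_zero]
      simp only [hG, dens, hd1, hden, hden2]
      rw [show f z - f z₀ = -(f z₀ - f z) by ring]
      field_simp
      ring
    rw [circleIntegral.integral_congr ht0.le hcongr, circleIntegral.integral_add,
      circleIntegral.integral_const_mul]
    · exact (hGd.continuousOn.mono hsA).circleIntegrable ht0.le
    · exact (continuousOn_const.mul ((hf'A.continuousOn.mono hsA).div
        ((hfA.continuousOn.mono hsA).sub continuousOn_const) hfne)).circleIntegrable ht0.le
  rw [hdec s' (by linarith) hs' h2.ne', hdec s hrs (by linarith) h1.ne, hGint,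
    logDeriv_circle hf (by linarith) hs' hz₀1 h2.ne,
    logDeriv_circle hf hs0 (by linarith) hz₀1 h1.ne', if_pos h2, if_neg (by linarith)]
  ring

lemma exact_on_smaller {f ψ : ℂ → ℂ} (hf : Univalent f) {r s : ℝ} (hr0 : 0 ≤ r) (hrs : r < s)
    (hs : s < 1) (hψ : DifferentiableOn ℂ ψ (dual f r)) : Complex.IsExactOn ψ (dual f s) := by
  classical
  obtain ⟨s', hss', hs'⟩ := exists_between hs
  have hs0 : 0 < s := hr0.trans_lt hrs
  have hs'0 : 0 < s' := hs0.trans hss'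
  set J : ℝ → ℂ → ℂ := fun t v => ∮ z in C(0, t), dens f ψ z * (f z / (1 - v * f z)) with hJ
  have hfc : ∀ t < 1, ContinuousOn f (sphere 0 t) := fun t ht =>
    hf.diff.continuousOn.mono (sphere_subset_unit ht)
  have hJs : DifferentiableOn ℂ (J s) (dual f s) :=
    differentiableOn_cauchy hs0.le (hfc s hs) (dens_continuousOn hf hr0 hrs hs hψ)
      (isOpen_dual hf hs) fun v hv z hz h =>
        hv z (sphere_subset_closedBall hz) (sub_eq_zero.1 h).symm
  have hdc' := dens_continuousOn hf hr0 (hrs.trans hss') hs' hψ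
  have hJs' : DifferentiableOn ℂ (J s') (recip f s') := by
    refine differentiableOn_cauchy hs'0.le (hfc s' hs') hdc' (isOpen_recip hf hs'.le) ?_
    rintro v ⟨y, hy, hvy⟩ z hz h
    have hv0 : v ≠ 0 := left_ne_zero_of_mul_eq_one hvy
    have h1 : f z = f y := mul_left_cancel₀ hv0 ((sub_eq_zero.1 h).symm.trans hvy.symm)
    have := hf.inj (sphere_subset_unit hs' hz) (ball_subset_ball hs'.le hy) h1
    subst this
    rw [mem_sphere_zero_iff_norm] at hz
    rw [mem_ball_zero_iff] at hy
    linarith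
  set E : ℂ → ℂ := fun v => if v ∈ dual f s then ψ v * (2 * π * I) + J s v else J s' v with hE
  have hE1 : ∀ v ∈ dual f s, E v = ψ v * (2 * π * I) + J s v := fun v hv => if_pos hv
  have hE2 : ∀ v ∈ recip f s', E v = J s' v := by
    rintro v ⟨z, hz, hvz⟩
    by_cases hv : v ∈ dual f s
    · rw [hE1 v hv]
      have hvf : v = (f z)⁻¹ := eq_inv_of_mul_eq_one_left hvz
      have hlow : s < ‖z‖ := by
        by_contra h
        exact hv z (by simpa using h) hvz
      have := cauchy_annulus hf hr0 hrs hs' hψ hlow (by simpa using hz)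
      rw [← hvf] at this
      simp only [hJ]
      linear_combination -this
    · exact if_neg hv
  have hEd : Differentiable ℂ E := by
    intro v
    rcases dual_union_recip f hss' v with h | h
    · have hn := (isOpen_dual hf hs).mem_nhds h
      have h1 : DifferentiableAt ℂ (fun v => ψ v * (2 * π * I) + J s v) v :=
        (((hψ.mono (dual_anti f hrs.le)).mul_const _).add hJs).differentiableAt hn
      refine h1.congr_of_eventuallyEq ?_
      filter_upwards [hn] with w hw using hE1 w hw
    · have hn := (isOpen_recip hf hs'.le).mem_nhds h
      refine (hJs'.differentiableAt hn).congr_of_eventuallyEq ?_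
      filter_upwards [hn] with w hw using hE2 w hw
  obtain ⟨A, hA⟩ := (isCompact_sphere (0:ℂ) s').exists_bound_of_continuousOn
    (hdc'.mul (hfc s' hs'))
  obtain ⟨z1, hz1, hmin⟩ := (isCompact_sphere (0:ℂ) s').exists_isMinOn
    (NormedSpace.sphere_nonempty.mpr hs'0.le) (hfc s' hs').norm
  set m := ‖f z1‖ with hm
  have hm0 : 0 < m := norm_pos_iff.2 (hf.ne_zero_sphere hs'0 hs' hz1)
  have hA0 : 0 ≤ A := (norm_nonneg _).trans (hA z1 hz1)
  have hbound : ∀ v : ℂ, 1 < ‖v‖ * m → ‖J s' v‖ ≤ 2 * π * s' * (A / (‖v‖ * m - 1)) := by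
    intro v hv
    refine circleIntegral.norm_integral_le_of_norm_le_const hs'0.le fun z hz => ?_
    rw [mul_div_assoc', norm_div]
    have h2 : ‖v‖ * m - 1 ≤ ‖1 - v * f z‖ := by
      have h3 : ‖v‖ * m ≤ ‖v * f z‖ := by
        rw [norm_mul]; gcongr; exact hmin hz
      have h4 : ‖v * f z‖ - ‖(1:ℂ)‖ ≤ ‖v * f z - 1‖ := norm_sub_norm_le _ _
      rw [norm_one, norm_sub_rev] at h4
      linarith
    exact div_le_div₀ hA0 (hA z hz) (by linarith) h2
  obtain ⟨B, hB⟩ := (isBounded_dual hf hs0 hs).exists_norm_le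
  have hlim : Tendsto E (cocompact ℂ) (𝓝 0) := by
    have hn := tendsto_norm_cocompact_atTop (E := ℂ)
    have hlim2 : Tendsto (fun v : ℂ => 2 * π * s' * (A / (‖v‖ * m - 1))) (cocompact ℂ) (𝓝 0) := by
      have h1 : Tendsto (fun v : ℂ => ‖v‖ * m - 1) (cocompact ℂ) atTop :=
        tendsto_atTop_add_const_right _ (-1) (hn.atTop_mul_const hm0)
      simpa using (h1.const_div_atTop A).const_mul (2 * π * s')
    refine squeeze_zero_norm' ?_ hlim2
    filter_upwards [hn.eventually_gt_atTop B, hn.eventually_gt_atTop (1 / m)] with v h1 h2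
    have hv : v ∉ dual f s := fun h => by linarith [hB v h]
    rw [show E v = J s' v from if_neg hv]
    exact hbound v (by rwa [div_lt_iff₀ hm0] at h2)
  have hE0 : ∀ v, E v = 0 := fun v => hEd.apply_eq_of_tendsto_cocompact v hlim
  obtain ⟨Ψ, hΨ⟩ := exact_cauchy hf hs0 hs (dens_continuousOn hf hr0 hrs hs hψ)
  refine ⟨fun v => -(2 * π * I : ℂ)⁻¹ * Ψ v, fun v hv => ?_⟩
  refine HasDerivAt.congr_deriv ((hΨ v hv).const_mul _) ?_
  have h1 := hE1 v hv
  rw [hE0] at h1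
  have h2 : (2 * π * I : ℂ) ≠ 0 := Complex.two_pi_I_ne_zero
  change -(2 * π * I : ℂ)⁻¹ * J s v = ψ v
  have h3 : J s v = -(ψ v * (2 * π * I)) := by linear_combination -h1
  rw [h3, neg_mul_neg, mul_comm (ψ v), inv_mul_cancel_left₀ h2]

/-- `dual f r` is simply connected: primitives on the exhausting domains `dual f s`, `s > r`, are
glued together. -/
theorem good_dual {f : ℂ → ℂ} (hf : Univalent f) {r : ℝ} (hr0 : 0 < r) (hr : r < 1) :
    Good (dual f r) := by
  intro ψ hψ
  have hex : ∀ s ∈ Ioo r 1, ∃ g : ℂ → ℂ, g 0 = 0 ∧ ∀ v ∈ dual f s, HasDerivAt g (ψ v) v :=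
    fun s hs => (exact_on_smaller hf hr0.le hs.1 hs.2 hψ).with_val_at 0 0
  choose! g hg0 hgd using hex
  have hagree : ∀ s ∈ Ioo r 1, ∀ t ∈ Ioo r 1, s ≤ t → EqOn (g s) (g t) (dual f t) := by
    intro s hs t ht hst
    have ht0 : 0 < t := hr0.trans ht.1
    refine (isOpen_dual hf ht.2).eqOn_of_deriv_eq (isPreconnected_dual hf ht0 ht.2)
      (fun v hv => (hgd s hs v (dual_anti f hst hv)).differentiableAt.differentiableWithinAt)
      (fun v hv => (hgd t ht v hv).differentiableAt.differentiableWithinAt)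
      (fun v hv => ?_) (zero_mem_dual f t) ((hg0 s hs).trans (hg0 t ht).symm)
    rw [(hgd s hs v (dual_anti f hst hv)).deriv, (hgd t ht v hv).deriv]
  have hcover : ∀ v ∈ dual f r, ∃ s ∈ Ioo r 1, v ∈ dual f s := by
    intro v hv
    have hfc : ContinuousOn (fun z => v * f z) (ball 0 1) :=
      continuousOn_const.mul hf.diff.continuousOn
    have hop : IsOpen (ball (0:ℂ) 1 ∩ (fun z => v * f z) ⁻¹' {1}ᶜ) :=
      hfc.isOpen_inter_preimage isOpen_ball isOpen_compl_singleton
    obtain ⟨δ, hδ, hsub⟩ := (isCompact_closedBall (0:ℂ) r).exists_cthickening_subset_open hop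
      (fun z hz => ⟨closedBall_subset_unit hr hz, hv z hz⟩)
    rw [cthickening_closedBall hδ.le hr0.le] at hsub
    obtain ⟨s, hs1, hs2⟩ := exists_between (lt_min (lt_add_of_pos_left r hδ) hr)
    refine ⟨s, ⟨hs1, hs2.trans_le (min_le_right _ _)⟩, fun z hz => ?_⟩
    exact (hsub (closedBall_subset_closedBall (hs2.le.trans (min_le_left _ _)) hz)).2
  choose! σ hσ hσd using hcover
  refine ⟨fun v => g (σ v) v, fun v hv => ?_⟩
  have hs := hσ v hv
  have hval : ∀ w ∈ dual f (σ v), g (σ w) w = g (σ v) w := by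
    intro w hw
    have hwr : w ∈ dual f r := dual_anti f hs.1.le hw
    rcases le_total (σ w) (σ v) with h | h
    · exact hagree _ (hσ w hwr) _ hs h hw
    · exact (hagree _ hs _ (hσ w hwr) h (hσd w hwr)).symm
  refine (hgd _ hs v (hσd v hv)).congr_of_eventuallyEq ?_
  filter_upwards [(isOpen_dual hf hs.2).mem_nhds (hσd v hv)] with w hw using hval w hw

/-! ### Loewner chains -/

lemma IsRiemannMap.univalent {h : ℂ → ℂ} {G : Set ℂ} {R : ℝ} (H : IsRiemannMap h G R) :
    Univalent h := ⟨H.diff, H.inj, H.zero⟩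

/-- Subordination: a holomorphic map into `G` that fixes `0` factors through a Riemann map. -/
lemma IsRiemannMap.factor {h k : ℂ → ℂ} {G : Set ℂ} {R : ℝ} (H : IsRiemannMap h G R)
    (hk : DifferentiableOn ℂ k (ball 0 1)) (hk0 : k 0 = 0) (hm : MapsTo k (ball 0 1) G) :
    ∃ ω : ℂ → ℂ, DifferentiableOn ℂ ω (ball 0 1) ∧ MapsTo ω (ball 0 1) (ball 0 1) ∧ ω 0 = 0 ∧
      ∀ z ∈ ball (0:ℂ) 1, h (ω z) = k z := by
  obtain ⟨-, h2, -⟩ := injOn_inverse isOpen_ball H.diff H.inj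
  rw [H.image] at h2
  have h3 : ∀ w ∈ G, invFunOn h (ball 0 1) w ∈ ball (0:ℂ) 1 ∧ h (invFunOn h (ball 0 1) w) = w := by
    intro w hw
    rw [← H.image] at hw
    exact invFunOn_pos hw
  refine ⟨invFunOn h (ball 0 1) ∘ k, h2.comp hk hm, fun z hz => (h3 _ (hm hz)).1, ?_,
    fun z hz => (h3 _ (hm hz)).2⟩
  have h0 : (0:ℂ) ∈ ball (0:ℂ) 1 := by simp
  refine H.inj (h3 _ (hm h0)).1 h0 ?_
  exact (h3 _ (hm h0)).2.trans (hk0.trans H.zero.symm)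

lemma IsRiemannMap.norm_deriv_le {h k : ℂ → ℂ} {G : Set ℂ} {R : ℝ} (H : IsRiemannMap h G R)
    (hk : DifferentiableOn ℂ k (ball 0 1)) (hk0 : k 0 = 0) (hm : MapsTo k (ball 0 1) G) :
    ‖deriv k 0‖ ≤ R := by
  obtain ⟨ω, h1, h2, h3, h4⟩ := H.factor hk hk0 hm
  have h0 : ball (0:ℂ) 1 ∈ 𝓝 (0:ℂ) := ball_mem_nhds _ one_pos
  have h5 : k =ᶠ[𝓝 0] h ∘ ω := by
    filter_upwards [h0] with z hz using (h4 z hz).symm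
  have hω := (h1.differentiableAt h0).hasDerivAt
  have hh := (H.diff.differentiableAt h0).hasDerivAt
  rw [← h3] at hh
  have h6 := (hh.comp (0:ℂ) hω).deriv
  rw [h5.deriv_eq, h6, h3, H.deriv_zero, norm_mul]
  have h7 : ‖deriv ω 0‖ ≤ 1 / 1 := Complex.norm_deriv_le_div_of_mapsTo_ball h1
    (by rw [h3]; exact h2.mono_right ball_subset_closedBall) one_pos
  rw [Complex.norm_real, Real.norm_of_nonneg H.pos.le]
  nlinarith [H.pos]

lemma IsRiemannMap.mono {h k : ℂ → ℂ} {G G' : Set ℂ} {R R' : ℝ} (H : IsRiemannMap h G R)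
    (K : IsRiemannMap k G' R') (hs : G ⊆ G') : R ≤ R' := by
  have := K.norm_deriv_le H.diff H.zero fun z hz => hs (H.image ▸ mem_image_of_mem h hz)
  rw [H.deriv_zero, Complex.norm_real] at this
  exact (le_abs_self _).trans this

lemma IsRiemannMap.mul_le {h k : ℂ → ℂ} {G G' : Set ℂ} {R R' : ℝ} (H : IsRiemannMap h G R)
    (K : IsRiemannMap k G' R') {t : ℝ} (ht0 : 0 < t) (ht : t < 1)
    (hs : ∀ z ∈ closedBall (0:ℂ) t, h z ∈ G') : t * R ≤ R' := by
  have hm : MapsTo (fun z : ℂ => (t:ℂ) * z) (ball 0 1) (ball 0 1) := by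
    intro z hz
    rw [mem_ball_zero_iff] at hz ⊢
    rw [norm_mul, Complex.norm_real, Real.norm_of_nonneg ht0.le]
    nlinarith [norm_nonneg z]
  have hd : DifferentiableOn ℂ (fun z => h (t * z)) (ball 0 1) :=
    H.diff.comp (by fun_prop) hm
  have := K.norm_deriv_le hd (by simp [H.zero]) (fun z hz => hs _ (by
    rw [mem_ball_zero_iff] at hz
    rw [mem_closedBall_zero_iff, norm_mul, Complex.norm_real, Real.norm_of_nonneg ht0.le]
    nlinarith [norm_nonneg z]))
  have hh := (H.diff.differentiableAt (ball_mem_nhds (0:ℂ) one_pos)).hasDerivAt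
  have h1 : HasDerivAt (fun z : ℂ => (t:ℂ) * z) t 0 := by
    simpa using (hasDerivAt_id (0:ℂ)).const_mul (t:ℂ)
  have h2 : HasDerivAt (fun z => h (t * z)) (deriv h 0 * t) 0 := by
    refine HasDerivAt.comp (0:ℂ) (h₂ := h) ?_ h1
    simpa using hh
  rw [h2.deriv, H.deriv_zero, norm_mul, Complex.norm_real, Complex.norm_real,
    Real.norm_of_nonneg ht0.le, Real.norm_of_nonneg H.pos.le] at this
  linarith

/-- Compactness: Riemann maps of `dual κ s'` with `s' ↑ s` have a univalent limit. -/
lemma exists_limit {κ : ℂ → ℂ} (hκ : Univalent κ) {s T D : ℝ} (hs0 : 0 < s) (hs : s ≤ 1)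
    (hT : 0 < T) (hD : ∀ s' ∈ Ico (s / 2) s, ∀ w ∈ dual κ s', ‖w‖ ≤ D)
    (hR : ∀ s' ∈ Ico (s / 2) s, ∃ h R, IsRiemannMap h (dual κ s') R ∧ T ≤ R) :
    ∃ h, Univalent h ∧ T ≤ ‖deriv h 0‖ ∧ ∀ z ∈ ball (0:ℂ) 1, ∀ ζ ∈ ball (0:ℂ) s, h z * κ ζ ≠ 1 := by
  let σ : ℕ → ℝ := fun n => s * (1 - 1 / (n + 2))
  have hσ : ∀ n, σ n ∈ Ico (s / 2) s := by
    intro n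
    have h1 : (0:ℝ) < 1 / (n + 2) := by positivity
    have h2 : (1:ℝ) / (n + 2) ≤ 1 / 2 := by gcongr; linarith [n.cast_nonneg (α := ℝ)]
    constructor <;> simp only [σ] <;> nlinarith
  have hσlim : Tendsto σ atTop (𝓝 s) := by
    have : Tendsto (fun n : ℕ => (1:ℝ) / ((n:ℝ) + 2)) atTop (𝓝 0) :=
      tendsto_const_nhds.div_atTop (tendsto_natCast_atTop_atTop.atTop_add tendsto_const_nhds)
    simpa [σ] using (this.const_sub 1).const_mul s
  choose h R hRM hTR using fun n => hR (σ n) (hσ n)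
  let φ : Ultrafilter ℕ := hyperfilter ℕ
  have hφ : (φ : Filter ℕ) ≤ atTop := Nat.hyperfilter_le_atTop
  obtain ⟨g, hg⟩ := montel φ isOpen_ball (fun n => (hRM n).diff) (M := D) (fun n z hz =>
    hD _ (hσ n) _ ((hRM n).image ▸ mem_image_of_mem _ hz))
  have h0 : (0:ℂ) ∈ ball (0:ℂ) 1 := by simp
  have hgd : DifferentiableOn ℂ g (ball 0 1) :=
    hg.differentiableOn (Eventually.of_forall fun n => (hRM n).diff) isOpen_ball
  have hg0 : g 0 = 0 := by
    have := hg.tendsto_at h0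
    simp only [(hRM _).zero] at this
    exact tendsto_nhds_unique this tendsto_const_nhds
  have hgT : T ≤ ‖deriv g 0‖ := by
    have h1 := (hg.deriv (Eventually.of_forall fun n => (hRM n).diff) isOpen_ball).tendsto_at h0
    refine ge_of_tendsto h1.norm (Eventually.of_forall fun n => ?_)
    simp only [comp_apply]
    rw [(hRM n).deriv_zero, Complex.norm_real]
    exact (hTR n).trans (le_abs_self _)
  have hne : ∃ z ∈ ball (0:ℂ) 1, ∃ w ∈ ball (0:ℂ) 1, g z ≠ g w := by
    by_contra hcon
    push Not at hcon
    have : g =ᶠ[𝓝 0] fun _ => g 0 := by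
      filter_upwards [ball_mem_nhds (0:ℂ) one_pos] with z hz using hcon z hz 0 h0
    rw [this.deriv_eq, deriv_const] at hgT
    simp at hgT; linarith
  refine ⟨g, ⟨hgd, hurwitz isOpen_ball (convex_ball _ _).isPreconnected
    (fun n => (hRM n).diff) (fun n => (hRM n).inj) hg hne, hg0⟩, hgT, ?_⟩
  intro z hz ζ hζ hcon
  rw [mem_ball_zero_iff] at hζ
  obtain ⟨s', h1, h2⟩ := exists_between hζ
  have h3 : g z ∈ recip κ s' := ⟨ζ, by simpa using h1, hcon⟩
  have h4 := (hg.tendsto_at hz).eventually ((isOpen_recip hκ (h2.le.trans hs)).mem_nhds h3)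
  have h5 : ∀ᶠ n in (φ : Filter ℕ), s' < σ n := hφ (hσlim.eventually_const_lt h2)
  obtain ⟨n, ⟨y, hy, hyn⟩, hn⟩ := (h4.and h5).exists
  have h6 : h n z ∈ dual κ (σ n) := (hRM n).image ▸ mem_image_of_mem _ hz
  refine h6 y ?_ hyn
  rw [mem_ball_zero_iff] at hy
  rw [mem_closedBall_zero_iff]; linarith

/-- A univalent chain `h t`, `t ≥ t₀`, normalised by `(h t)'(0) = exp t`, with increasing
images and controlled growth. -/
structure IsChain (h : ℝ → ℂ → ℂ) (t₀ M : ℝ) : Prop where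
  univ : ∀ t, t₀ ≤ t → Univalent (h t)
  deriv_zero : ∀ t, t₀ ≤ t → deriv (h t) 0 = Real.exp t
  bound : ∀ t, t₀ ≤ t → ∀ z ∈ ball (0:ℂ) 1, ‖h t z‖ ≤ M * Real.exp t
  mono : ∀ s t, t₀ ≤ s → s ≤ t → h s '' ball 0 1 ⊆ h t '' ball 0 1

/-- Every dilation `z ↦ f (r z)` starts a chain. With `κ` the Riemann map of `dual f r`, the image
domains are `f (|z| < r)` and `dual κ s`, `0 < s < 1`; their conformal radius depends continuously
on `s`, where one-sided continuity at a given `s` comes from the limit maps of `exists_limit`. -/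
theorem exists_chain {f : ℂ → ℂ} (hf : Univalent f) (hf1 : deriv f 0 = 1) {r : ℝ} (hr0 : 0 < r)
    (hr : r < 1) : ∃ h M, 0 < M ∧ IsChain h (Real.log r) M ∧
      ∀ z ∈ ball (0:ℂ) 1, h (Real.log r) z = f (r * z) := by
  have hVo := isOpen_dual hf hr
  have hVb := isBounded_dual hf hr0 hr
  obtain ⟨κ, Rκ, hκR⟩ := exists_riemannMap hVo (isPreconnected_dual hf hr0 hr)
    (good_dual hf hr0 hr) (zero_mem_dual f r) hVb
  have hκ := hκR.univalent
  have hκV : ∀ ζ ∈ ball (0:ℂ) 1, κ ζ ∈ dual f r := fun ζ hζ => hκR.image ▸ mem_image_of_mem κ hζ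
  obtain ⟨m, hm0, hm⟩ := hVb.exists_pos_norm_le
  obtain ⟨d, hd, hdV⟩ := Metric.isOpen_iff.1 hVo 0 (zero_mem_dual f r)
  have hκle : ∀ ζ ∈ ball (0:ℂ) 1, ‖κ ζ‖ ≤ m * ‖ζ‖ := by
    intro ζ hζ
    have := Complex.dist_le_div_mul_dist_of_mapsTo_ball (R₂ := m) hκ.diff (by
      intro z hz
      rw [hκ.zero, mem_closedBall_zero_iff]
      exact hm _ (hκV z hz)) hζ
    simpa [hκ.zero] using this
  -- Schwarz for the inverse of `κ` on `ball 0 d`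
  have hκinv : ∀ v ∈ ball (0:ℂ) d, ∃ ζ ∈ ball (0:ℂ) 1, κ ζ = v ∧ d * ‖ζ‖ ≤ ‖v‖ := by
    obtain ⟨ω, h1, h2, h3, h4⟩ := hκR.factor (k := fun z => (d:ℂ) * z) (by fun_prop) (by simp)
      (fun z hz => hdV (by
        rw [mem_ball_zero_iff] at hz ⊢
        rw [norm_mul, Complex.norm_real, Real.norm_of_nonneg hd.le]
        nlinarith [norm_nonneg z]))
    intro v hv
    rw [mem_ball_zero_iff] at hv
    have hdc : (d:ℂ) ≠ 0 := by exact_mod_cast hd.ne'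
    have hb : v / d ∈ ball (0:ℂ) 1 := by
      rw [mem_ball_zero_iff, norm_div, Complex.norm_real, Real.norm_of_nonneg hd.le,
        div_lt_one hd]
      exact hv
    refine ⟨ω (v / d), h2 hb, (h4 _ hb).trans (by field_simp), ?_⟩
    have := Complex.norm_le_norm_of_mapsTo_ball h1 (h2.mono_right ball_subset_closedBall) h3
      (mem_ball_zero_iff.1 hb)
    rw [norm_div, Complex.norm_real, Real.norm_of_nonneg hd.le, le_div_iff₀ hd] at this
    linarith
  have hup : ∀ s ∈ Ioo (0:ℝ) 1, ∀ w ∈ dual κ s, ‖w‖ ≤ 1 / (d * s) := by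
    intro s hs w hw
    by_contra hcon
    push Not at hcon
    have hds : 0 < d * s := mul_pos hd hs.1
    have hw0 : w ≠ 0 := by
      rintro rfl
      rw [norm_zero] at hcon
      exact absurd hcon (not_lt.2 (by positivity))
    have hwn : ‖w⁻¹‖ < d * s := by
      rw [norm_inv, inv_lt_comm₀ (norm_pos_iff.2 hw0) hds, inv_eq_one_div]; exact hcon
    obtain ⟨ζ, h1, h2, h3⟩ := hκinv w⁻¹ (by rw [mem_ball_zero_iff]; nlinarith [hs.2])
    refine hw ζ ?_ (by rw [h2, mul_inv_cancel₀ hw0])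
    rw [mem_closedBall_zero_iff]
    nlinarith
  have hsub1 : ∀ s < (1:ℝ), f '' ball 0 r ⊆ dual κ s := by
    rintro s hs _ ⟨z, hz, rfl⟩ ζ hζ
    rw [mul_comm]
    exact hκV ζ (closedBall_subset_unit hs hζ) z (ball_subset_closedBall hz)
  let G : ℝ → Set ℂ := fun s => if s < 1 then dual κ s else f '' ball 0 r
  have hG : ∀ s < 1, G s = dual κ s := fun s hs => if_pos hs
  have hG1 : G 1 = f '' ball 0 r := if_neg (lt_irrefl _)
  have hGanti : ∀ s s', s ≤ s' → s' ≤ 1 → G s' ⊆ G s := by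
    intro s s' h h1
    rcases h1.lt_or_eq with h2 | rfl
    · rw [hG _ h2, hG _ (h.trans_lt h2)]; exact dual_anti κ h
    · rcases h.lt_or_eq with h2 | rfl
      · rw [hG1, hG _ h2]; exact hsub1 s h2
      · rfl
  have hrm : ∀ z ∈ ball (0:ℂ) 1, (r:ℂ) * z ∈ ball (0:ℂ) r := by
    intro z hz
    rw [mem_ball_zero_iff] at hz ⊢
    rw [norm_mul, Complex.norm_real, Real.norm_of_nonneg hr0.le]
    nlinarith [norm_nonneg z]
  have hrc : (r:ℂ) ≠ 0 := by exact_mod_cast hr0.ne'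
  have hsubr : ball (0:ℂ) r ⊆ ball 0 1 := ball_subset_ball hr.le
  have hf1R : IsRiemannMap (fun z => f (r * z)) (G 1) r := by
    refine ⟨hf.diff.comp (by fun_prop) fun z hz => hsubr (hrm z hz), ?_, ?_, by simp [hf.zero],
      hr0, ?_⟩
    · intro z hz w hw h
      exact mul_left_cancel₀ hrc (hf.inj (hsubr (hrm z hz)) (hsubr (hrm w hw)) h)
    · rw [hG1]
      ext w
      constructor
      · rintro ⟨z, hz, rfl⟩; exact ⟨_, hrm z hz, rfl⟩
      · rintro ⟨z, hz, rfl⟩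
        refine ⟨z / r, ?_, by simp only; congr 1; field_simp⟩
        rw [mem_ball_zero_iff] at hz ⊢
        rw [norm_div, Complex.norm_real, Real.norm_of_nonneg hr0.le, div_lt_one hr0]
        exact hz
    · have hh := (hf.diff.differentiableAt (ball_mem_nhds (0:ℂ) one_pos)).hasDerivAt
      have h1 : HasDerivAt (fun z : ℂ => (r:ℂ) * z) r 0 := by
        simpa using (hasDerivAt_id (0:ℂ)).const_mul (r:ℂ)
      have h2 : HasDerivAt (fun z => f (r * z)) (deriv f 0 * r) 0 := by
        refine HasDerivAt.comp (0:ℂ) (h₂ := f) ?_ h1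
        simpa using hh
      rw [h2.deriv, hf1, one_mul]
  have hex : ∀ s ∈ Ioc (0:ℝ) 1, ∃ h R, IsRiemannMap h (G s) R ∧
      (s = 1 → h = (fun z => f (r * z)) ∧ R = r) := by
    intro s hs
    rcases hs.2.lt_or_eq with h | rfl
    · obtain ⟨g, R, H⟩ := exists_riemannMap (isOpen_dual hκ h) (isPreconnected_dual hκ hs.1 h)
        (good_dual hκ hs.1 h) (zero_mem_dual κ s) (isBounded_dual hκ hs.1 h)
      exact ⟨g, R, by rw [hG s h]; exact H, fun h1 => absurd h1 h.ne⟩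
    · exact ⟨_, r, hf1R, fun _ => ⟨rfl, rfl⟩⟩
  choose! g R hgR hg1 using hex
  have hanti : ∀ s s', 0 < s → s ≤ s' → s' ≤ 1 → R s' ≤ R s := fun s s' h0 h h1 =>
    (hgR s' ⟨h0.trans_le h, h1⟩).mono (hgR s ⟨h0, h.trans h1⟩) (hGanti s s' h h1)
  have hR1 : R 1 = r := (hg1 1 ⟨one_pos, le_rfl⟩ rfl).2
  have hlow : ∀ s ∈ Ioo (0:ℝ) 1, 1 / (s * m) ≤ R s := by
    intro s hs
    have hsm : 0 < s * m := mul_pos hs.1 hm0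
    have := (hgR s ⟨hs.1, hs.2.le⟩).norm_deriv_le (k := fun z => ((1 / (s * m) : ℝ) : ℂ) * z)
      (by fun_prop) (by simp) (by
        rw [hG s hs.2]
        intro z hz ζ hζ h
        have h1 := hκle ζ (closedBall_subset_unit hs.2 hζ)
        rw [mem_closedBall_zero_iff] at hζ
        rw [mem_ball_zero_iff] at hz
        have h2 := congrArg norm h
        rw [norm_mul, norm_mul, Complex.norm_real, Real.norm_of_nonneg (by positivity), norm_one]
          at h2
        have h3 : ‖κ ζ‖ ≤ s * m := by nlinarith
        have h4 : ‖z‖ * ‖κ ζ‖ = s * m := by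
          have h6 : s * m * (1 / (s * m) * ‖z‖ * ‖κ ζ‖) = s * m := by rw [h2, mul_one]
          rw [← h6]; have := hs.1; field_simp
        have h5 : ‖z‖ * ‖κ ζ‖ ≤ ‖z‖ * (s * m) := by gcongr
        nlinarith)
    have h1 : HasDerivAt (fun z : ℂ => ((1 / (s * m) : ℝ) : ℂ) * z) ((1 / (s * m) : ℝ) : ℂ) 0 := by
      simpa using (hasDerivAt_id (0:ℂ)).const_mul ((1 / (s * m) : ℝ) : ℂ)
    rw [h1.deriv, Complex.norm_real] at this
    exact (le_abs_self _).trans this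
  -- the conformal radius `R` takes every value `T ≥ r`
  have hivt : ∀ T, r ≤ T → ∃ s ∈ Ioc (0:ℝ) 1, R s = T ∧ (T = r → s = 1) := by
    intro T hT
    rcases hT.eq_or_lt with rfl | hTr
    · exact ⟨1, ⟨one_pos, le_rfl⟩, hR1, fun _ => rfl⟩
    have hT0 : 0 < T := hr0.trans hTr
    let A : Set ℝ := {s | s ∈ Ioc (0:ℝ) 1 ∧ T ≤ R s}
    have hAbd : BddAbove A := ⟨1, fun s hs => hs.1.2⟩
    obtain ⟨a, ha⟩ : A.Nonempty := by
      have h0 : 0 < min (1/2) (1 / (T * m)) := lt_min (by norm_num) (by positivity)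
      have h1 : min (1/2) (1 / (T * m)) < 1 := (min_le_left _ _).trans_lt (by norm_num)
      refine ⟨min (1/2) (1 / (T * m)), ⟨h0, h1.le⟩, ?_⟩
      refine le_trans ?_ (hlow _ ⟨h0, h1⟩)
      rw [le_div_iff₀ (by positivity)]
      have h2 := min_le_right (1/2) (1 / (T * m))
      have h3 : T * (min (1/2) (1 / (T * m)) * m) ≤ T * (1 / (T * m) * m) := by gcongr
      refine h3.trans (le_of_eq ?_)
      field_simp
    set s := sSup A with hs
    have hs1 : s ≤ 1 := csSup_le ⟨a, ha⟩ fun s hs => hs.1.2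
    have hs0 : 0 < s := ha.1.1.trans_le (le_csSup hAbd ha)
    have hbelow : ∀ s', 0 < s' → s' < s → T ≤ R s' := by
      intro s' h0 h1
      obtain ⟨b, hb, h2⟩ := exists_lt_of_lt_csSup ⟨a, ha⟩ h1
      exact hb.2.trans (hanti _ _ h0 h2.le hb.1.2)
    have habove : ∀ s', s < s' → s' ≤ 1 → R s' < T := by
      intro s' h0 h1
      by_contra hcon
      push Not at hcon
      exact absurd (le_csSup hAbd (⟨⟨hs0.trans h0, h1⟩, hcon⟩ : s' ∈ A)) (not_le.2 h0)
    obtain ⟨h, hu, hTh, hne⟩ := exists_limit hκ hs0 hs1 hT0 (D := 1 / (d * (s / 2)))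
      (fun s' hs' w hw => (hup s' ⟨by linarith [hs'.1], hs'.2.trans_le hs1⟩ w hw).trans (by
        have := hs'.1
        gcongr))
      (fun s' hs' => ⟨g s', R s', by
        rw [← hG s' (hs'.2.trans_le hs1)]
        exact hgR s' ⟨by linarith [hs'.1], (hs'.2.trans_le hs1).le⟩,
        hbelow s' (by linarith [hs'.1]) hs'.2⟩)
    have hho : IsOpen (h '' ball 0 1) := (injOn_inverse isOpen_ball hu.diff hu.inj).1
    have hmaps : MapsTo h (ball 0 1) (G s) := by
      intro z hz
      have hmem : h '' ball 0 1 ∈ 𝓝 (h z) := hho.mem_nhds (mem_image_of_mem h hz)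
      rcases hs1.lt_or_eq with h1 | h1
      · rw [hG s h1]
        intro ζ hζ hcon
        have hζ1 : ζ ∈ ball (0:ℂ) 1 := closedBall_subset_unit h1 hζ
        rw [mem_closedBall_zero_iff] at hζ
        have hκ0 : κ ζ ≠ 0 := right_ne_zero_of_mul_eq_one hcon
        have hcont : ContinuousAt (fun t : ℝ => (κ ((t:ℂ) * ζ))⁻¹) 1 := by
          refine ContinuousAt.inv₀ ?_ (by simpa using hκ0)
          refine ContinuousAt.comp (g := κ) ?_ (by fun_prop)
          simpa using (hκ.diff.differentiableAt (isOpen_ball.mem_nhds hζ1)).continuousAt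
        have h2 : (κ (((1:ℝ):ℂ) * ζ))⁻¹ = h z := by
          rw [Complex.ofReal_one, one_mul]; exact (eq_inv_of_mul_eq_one_left hcon).symm
        have hnhds := hcont.preimage_mem_nhds (by rw [h2]; exact hmem)
        have hκn : ∀ᶠ t : ℝ in 𝓝 1, κ ((t:ℂ) * ζ) ≠ 0 := by
          have := hcont.eventually_ne (y := 0) (by rw [h2]; exact left_ne_zero_of_mul_eq_one hcon)
          filter_upwards [this] with t ht h0
          exact ht (by rw [h0, inv_zero])
        have hev : ∀ᶠ t in 𝓝[<] (1:ℝ), t ∈ (fun t : ℝ => (κ ((t:ℂ) * ζ))⁻¹) ⁻¹' (h '' ball 0 1) ∧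
            κ ((t:ℂ) * ζ) ≠ 0 ∧ t ∈ Ioo (0:ℝ) 1 :=
          (eventually_nhdsWithin_of_eventually_nhds hnhds).and
            ((eventually_nhdsWithin_of_eventually_nhds hκn).and (Ioo_mem_nhdsLT one_pos))
        obtain ⟨t, ⟨y, hy, hyt⟩, ht0, ht⟩ := hev.exists
        refine hne y hy (t * ζ) ?_ ?_
        · rw [mem_ball_zero_iff, norm_mul, Complex.norm_real, Real.norm_of_nonneg ht.1.le]
          nlinarith [ht.1, ht.2]
        · have : h y = (κ ((t:ℂ) * ζ))⁻¹ := hyt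
          rw [this, inv_mul_cancel₀ ht0]
      · rw [h1, hG1]
        rw [h1] at hne
        have hcl : ∀ y ∈ ball (0:ℂ) 1, ∃ x ∈ closedBall (0:ℂ) r, f x = h y := by
          intro y hy
          by_cases hy0 : h y = 0
          · exact ⟨0, by simp [hr0.le], by rw [hf.zero, hy0]⟩
          · have h2 : (h y)⁻¹ ∉ dual f r := by
              intro h3
              rw [← hκR.image] at h3
              obtain ⟨ζ, hζ, h4⟩ := h3
              exact hne y hy ζ hζ (by rw [h4, mul_inv_cancel₀ hy0])
            simp only [dual, mem_ofPred_eq] at h2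
            push Not at h2
            obtain ⟨x, hx, h3⟩ := h2
            exact ⟨x, hx, by field_simp at h3; exact h3⟩
        obtain ⟨x, hx, hxz⟩ := hcl z hz
        rw [mem_closedBall_zero_iff] at hx
        rcases hx.lt_or_eq with hx1 | hx1
        · exact ⟨x, by simpa using hx1, hxz⟩
        exfalso
        have hx1' : x ∈ ball (0:ℂ) 1 := by rw [mem_ball_zero_iff]; linarith
        have hcont : ContinuousAt (fun t : ℝ => f ((t:ℂ) * x)) 1 := by
          refine ContinuousAt.comp (g := f) ?_ (by fun_prop)
          simpa using (hf.diff.differentiableAt (isOpen_ball.mem_nhds hx1')).continuousAt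
        have hnhds := hcont.preimage_mem_nhds (by
          rw [Complex.ofReal_one, one_mul, hxz]; exact hmem)
        have hr1 : 1 < 1 / r := by rw [lt_div_iff₀ hr0]; linarith
        have hev : ∀ᶠ t in 𝓝[>] (1:ℝ), t ∈ (fun t : ℝ => f ((t:ℂ) * x)) ⁻¹' (h '' ball 0 1) ∧
            t ∈ Ioo (1:ℝ) (1 / r) :=
          (eventually_nhdsWithin_of_eventually_nhds hnhds).and (Ioo_mem_nhdsGT hr1)
        obtain ⟨t, ⟨y, hy, hyt⟩, ht⟩ := hev.exists
        obtain ⟨x', hx', hxy⟩ := hcl y hy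
        have ht0 : 0 < t := one_pos.trans ht.1
        have hn : ‖(t:ℂ) * x‖ = t * r := by
          rw [norm_mul, Complex.norm_real, Real.norm_of_nonneg ht0.le, hx1]
        have htr : t * r < 1 := by have := ht.2; rwa [lt_div_iff₀ hr0] at this
        have h5 := hf.inj (closedBall_subset_unit hr hx') (by rw [mem_ball_zero_iff, hn]; exact htr)
          (hxy.trans hyt)
        rw [mem_closedBall_zero_iff, h5, hn] at hx'
        nlinarith [ht.1]
    have hge : T ≤ R s := hTh.trans ((hgR s ⟨hs0, hs1⟩).norm_deriv_le hu.diff hu.zero hmaps)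
    refine ⟨s, ⟨hs0, hs1⟩, le_antisymm ?_ hge, fun h => absurd h hTr.ne'⟩
    rcases hs1.lt_or_eq with h1 | h1
    swap
    · rw [h1, hR1]; exact hT
    have hH := hgR s ⟨hs0, hs1⟩
    have hmul : ∀ t ∈ Ioo (0:ℝ) 1, t * R s ≤ T := by
      intro t ht
      have hUo : IsOpen (ball (0:ℂ) 1 ∩ κ ⁻¹' (dual (g s) t)) :=
        hκ.diff.continuousOn.isOpen_inter_preimage isOpen_ball (isOpen_dual hH.univalent ht.2)
      have hsubU : closedBall (0:ℂ) s ⊆ ball (0:ℂ) 1 ∩ κ ⁻¹' (dual (g s) t) := by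
        intro ζ hζ
        refine ⟨closedBall_subset_unit h1 hζ, fun z hz => ?_⟩
        have : g s z ∈ dual κ s := by
          rw [← hG s h1, ← hH.image]
          exact mem_image_of_mem _ (closedBall_subset_unit ht.2 hz)
        rw [mul_comm]
        exact this ζ hζ
      obtain ⟨δ, hδ, hδU⟩ := (isCompact_closedBall (0:ℂ) s).exists_cthickening_subset_open hUo hsubU
      have hs'1 : min (s + δ) ((s + 1) / 2) < 1 := (min_le_right _ _).trans_lt (by linarith)
      have hs'0 : s < min (s + δ) ((s + 1) / 2) := lt_min (by linarith) (by linarith)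
      set s' := min (s + δ) ((s + 1) / 2)
      refine le_trans ?_ (habove s' hs'0 hs'1.le).le
      refine hH.mul_le (hgR s' ⟨hs0.trans hs'0, hs'1.le⟩) ht.1 ht.2 fun z hz => ?_
      rw [hG s' hs'1]
      intro ζ hζ
      have h3 : ζ ∈ cthickening δ (closedBall (0:ℂ) s) := by
        rw [cthickening_closedBall hδ.le hs0.le]
        exact closedBall_subset_closedBall ((min_le_left _ _).trans (by linarith)) hζ
      rw [mul_comm]
      exact (hδU h3).2 z hz
    have hlim : Tendsto (fun t : ℝ => t * R s) (𝓝[<] 1) (𝓝 (1 * R s)) :=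
      (tendsto_id.mono_left nhdsWithin_le_nhds).mul_const _
    rw [one_mul] at hlim
    refine le_of_tendsto hlim ?_
    filter_upwards [Ioo_mem_nhdsLT one_pos] with t ht using hmul t ht
  choose! σ hσ hσR hσ1 using hivt
  have hexp : ∀ t, Real.log r ≤ t → r ≤ Real.exp t := fun t ht => by
    rw [← Real.exp_log hr0]; exact Real.exp_le_exp.2 ht
  refine ⟨fun t => g (σ (Real.exp t)), m / d + 2 / (d * r), by positivity, ⟨?_, ?_, ?_, ?_⟩, ?_⟩
  · exact fun t ht => (hgR _ (hσ _ (hexp t ht))).univalent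
  · intro t ht
    rw [(hgR _ (hσ _ (hexp t ht))).deriv_zero, hσR _ (hexp t ht)]
  · intro t ht z hz
    have hrt := hexp t ht
    have h1 := hgR _ (hσ _ hrt)
    have h2 : g (σ (Real.exp t)) z ∈ G (σ (Real.exp t)) := h1.image ▸ mem_image_of_mem _ hz
    have hRt := hσR _ hrt
    have hmem := hσ _ hrt
    set s := σ (Real.exp t)
    rw [add_mul]
    rcases hmem.2.lt_or_eq with h3 | h3
    · rw [hG s h3] at h2
      have h4 := hup s ⟨hmem.1, h3⟩ _ h2
      have h5 := hlow s ⟨hmem.1, h3⟩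
      rw [hRt] at h5
      have h6 : 1 / (d * s) = m / d * (1 / (s * m)) := by
        have := hmem.1
        field_simp
      have h7 : m / d * (1 / (s * m)) ≤ m / d * Real.exp t := by gcongr
      have h8 : 0 ≤ 2 / (d * r) * Real.exp t := by positivity
      linarith
    · have h4 := hup (1/2) (by constructor <;> norm_num) _ (hsub1 (1/2) (by norm_num)
        (by rw [h3, hG1] at h2; exact h2))
      have h5 : 1 / (d * (1/2)) = 2 / (d * r) * r := by field_simp
      have h6 : 2 / (d * r) * r ≤ 2 / (d * r) * Real.exp t := by gcongr
      have h7 : 0 ≤ m / d * Real.exp t := by positivity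
      rw [h3] at *
      linarith
  · intro a b ha hab
    have hra := hexp a ha
    have hrb := hexp b (ha.trans hab)
    change g (σ (Real.exp a)) '' _ ⊆ g (σ (Real.exp b)) '' _
    rw [(hgR _ (hσ _ hra)).image, (hgR _ (hσ _ hrb)).image]
    rcases hab.eq_or_lt with rfl | hlt
    · rfl
    refine hGanti _ _ ?_ (hσ _ hra).2
    by_contra hcon
    push Not at hcon
    have := hanti _ _ (hσ _ hra).1 hcon.le (hσ _ hrb).2
    rw [hσR _ hra, hσR _ hrb, Real.exp_le_exp] at this
    linarith
  · intro z hz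
    have h1 : σ (Real.exp (Real.log r)) = 1 := by
      rw [Real.exp_log hr0]; exact hσ1 r le_rfl rfl
    change g (σ (Real.exp (Real.log r))) z = _
    rw [h1, (hg1 1 ⟨one_pos, le_rfl⟩ rfl).1]

/-! ### Power series and Parseval's identity -/

lemma hasSum_circleAverage {F : ℕ → ℂ → ℂ} {g : ℂ → ℂ} {c : ℕ → ℝ} {ρ : ℝ} (hρ : 0 ≤ ρ)
    (hF : ∀ n, ContinuousOn (F n) (sphere 0 ρ)) (hc : Summable c)
    (hb : ∀ n, ∀ z ∈ sphere (0:ℂ) ρ, ‖F n z‖ ≤ c n)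
    (hs : ∀ z ∈ sphere (0:ℂ) ρ, HasSum (fun n => F n z) (g z)) :
    HasSum (fun n => circleAverage (F n) 0 ρ) (circleAverage g 0 ρ) := by
  have hm : ∀ θ, circleMap 0 ρ θ ∈ sphere (0:ℂ) ρ := fun θ => circleMap_mem_sphere 0 hρ θ
  simp only [circleAverage_def]
  refine HasSum.const_smul _ ?_
  refine intervalIntegral.hasSum_integral_of_dominated_convergence (fun n _ => c n) ?_ ?_ ?_ ?_ ?_
  · intro n
    exact ((hF n).comp_continuous (continuous_circleMap 0 ρ) hm).aestronglyMeasurable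
  · exact fun n => Eventually.of_forall fun θ _ => hb n _ (hm θ)
  · exact Eventually.of_forall fun θ _ => hc
  · exact intervalIntegrable_const
  · exact Eventually.of_forall fun θ _ => hs _ (hm θ)

/-- `u` is the sum of the power series with coefficients `a` on the unit disc. -/
def Ser (u : ℂ → ℂ) (a : ℕ → ℂ) : Prop :=
  ∀ z ∈ ball (0:ℂ) 1, HasSum (fun n => a n * z ^ n) (u z)

/-- Taylor coefficients at `0`. -/
noncomputable def cf (u : ℂ → ℂ) (n : ℕ) : ℂ := (n.factorial : ℂ)⁻¹ * iteratedDeriv n u 0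

lemma ser_cf {u : ℂ → ℂ} (hu : DifferentiableOn ℂ u (ball 0 1)) : Ser u (cf u) := by
  intro z hz
  have := Complex.hasSum_taylorSeries_on_ball hu hz
  refine this.congr_fun ?_
  intro n
  simp only [cf, sub_zero, smul_eq_mul]
  ring

lemma ser_deriv {u : ℂ → ℂ} (hu : DifferentiableOn ℂ u (ball 0 1)) :
    Ser (fun z => z * deriv u z) (fun n => n * cf u n) := by
  intro z hz
  have h1 := (ser_cf (hu.deriv isOpen_ball) z hz).mul_left z
  have h2 : HasSum (fun n : ℕ => ((n + 1 : ℕ) : ℂ) * cf u (n + 1) * z ^ (n + 1))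
      (z * deriv u z) := by
    refine h1.congr_fun fun n => ?_
    simp only [cf]
    rw [iteratedDeriv_succ', Nat.factorial_succ]
    have h3 : (n.factorial : ℂ) ≠ 0 := by exact_mod_cast n.factorial_ne_zero
    have h4 : ((n:ℂ) + 1) ≠ 0 := by exact_mod_cast n.succ_ne_zero
    push_cast
    field_simp
    ring
  rw [← hasSum_nat_add_iff' 1]
  simpa using h2

lemma Ser.add {u v : ℂ → ℂ} {a b : ℕ → ℂ} (hu : Ser u a) (hv : Ser v b) :
    Ser (fun z => u z + v z) (fun n => a n + b n) := fun z hz => by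
  simpa only [add_mul] using (hu z hz).add (hv z hz)

lemma Ser.summable {u : ℂ → ℂ} {a : ℕ → ℂ} (hu : Ser u a) {ρ : ℝ} (h0 : 0 ≤ ρ) (h1 : ρ < 1) :
    Summable fun n => ‖a n‖ * ρ ^ n := by
  have := (hu ρ (by rw [mem_ball_zero_iff, Complex.norm_real, Real.norm_of_nonneg h0]; exact h1)).summable.norm
  simpa [norm_mul, norm_pow, Complex.norm_real, Real.norm_of_nonneg h0, abs_of_nonneg h0] using this

lemma circleAverage_conj_pow_mul_pow {ρ : ℝ} (m n : ℕ) :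
    circleAverage (fun z => (starRingEnd ℂ) (z ^ m) * z ^ n) 0 ρ =
      if m = n then (ρ:ℂ) ^ (2 * m) else 0 := by
  have hpt : ∀ θ : ℝ, (starRingEnd ℂ) (circleMap 0 ρ θ ^ m) * circleMap 0 ρ θ ^ n =
      (ρ:ℂ) ^ (m + n) * Complex.exp ((((n:ℤ) - m : ℤ) : ℂ) * I * θ) := by
    intro θ
    simp only [circleMap, zero_add, map_pow, map_mul, Complex.conj_ofReal, ← Complex.exp_conj,
      Complex.conj_I, Complex.conj_natCast, mul_pow, ← Complex.exp_nat_mul]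
    rw [show (((n:ℤ) - m : ℤ) : ℂ) * I * θ = (m:ℂ) * (θ * -I) + n * (θ * I) by push_cast; ring,
      Complex.exp_add]
    ring
  rw [circleAverage_def]
  simp only [hpt]
  split_ifs with h
  · subst h
    simp only [sub_self, Int.cast_zero, zero_mul, Complex.exp_zero, mul_one]
    rw [intervalIntegral.integral_const, smul_smul]
    have : (2 * π)⁻¹ * (2 * π - 0) = 1 := by field_simp; simp
    rw [this, one_smul, two_mul]
  · rw [intervalIntegral.integral_const_mul]
    have hk : ((n:ℤ) - m : ℤ) ≠ 0 := by omega
    have hk' : (((n:ℤ) - m : ℤ) : ℂ) * I ≠ 0 := mul_ne_zero (by exact_mod_cast hk) I_ne_zero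
    rw [integral_exp_mul_complex hk']
    have : Complex.exp ((((n:ℤ) - m : ℤ) : ℂ) * I * ((2 * π : ℝ) : ℂ)) = 1 := by
      rw [Complex.exp_eq_one_iff]
      exact ⟨(n:ℤ) - m, by push_cast; ring⟩
    rw [this]
    simp

lemma sphere_sub {ρ : ℝ} (h1 : ρ < 1) : sphere (0:ℂ) ρ ⊆ ball 0 1 :=
  sphere_subset_closedBall.trans (closedBall_subset_unit h1)

lemma Ser.coeff {u : ℂ → ℂ} {a : ℕ → ℂ} (hu : Ser u a) {ρ : ℝ} (h0 : 0 ≤ ρ) (h1 : ρ < 1) (m : ℕ) :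
    circleAverage (fun z => (starRingEnd ℂ) (z ^ m) * u z) 0 ρ = a m * (ρ:ℂ) ^ (2 * m) := by
  have h2 := hasSum_circleAverage (F := fun n z => (starRingEnd ℂ) (z ^ m) * (a n * z ^ n))
    (g := fun z => (starRingEnd ℂ) (z ^ m) * u z) (c := fun n => ρ ^ m * (‖a n‖ * ρ ^ n)) h0
    (fun n => Continuous.continuousOn (by fun_prop)) ((hu.summable h0 h1).mul_left _)
    (fun n z hz => by
      rw [mem_sphere_zero_iff_norm] at hz
      rw [norm_mul, RCLike.norm_conj, norm_pow, norm_mul, norm_pow, hz])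
    (fun z hz => (hu z (sphere_sub h1 hz)).mul_left _)
  have h3 : ∀ n, circleAverage (fun z => (starRingEnd ℂ) (z ^ m) * (a n * z ^ n)) 0 ρ =
      if n = m then a m * (ρ:ℂ) ^ (2 * m) else 0 := by
    intro n
    have : (fun z : ℂ => (starRingEnd ℂ) (z ^ m) * (a n * z ^ n)) =
        fun z => a n • ((starRingEnd ℂ) (z ^ m) * z ^ n) := by
      funext z; simp only [smul_eq_mul]; ring
    rw [this, circleAverage_fun_smul, circleAverage_conj_pow_mul_pow]
    by_cases h : m = n
    · subst h; simp
    · simp [h, Ne.symm h]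
  simp only [h3] at h2
  exact h2.unique (hasSum_ite_eq m _)

lemma Ser.unique {u : ℂ → ℂ} {a b : ℕ → ℂ} (ha : Ser u a) (hb : Ser u b) : a = b := by
  funext m
  have h := (ha.coeff (ρ := 1/2) (by norm_num) (by norm_num) m).symm.trans
    (hb.coeff (by norm_num) (by norm_num) m)
  exact mul_right_cancel₀ (pow_ne_zero _ (by norm_num)) h

/-- Parseval's identity on the circle of radius `ρ`. -/
lemma parseval {u v : ℂ → ℂ} {a b : ℕ → ℂ} (hu : Ser u a) (hv : Ser v b)
    (hvc : ContinuousOn v (ball 0 1)) {ρ : ℝ} (h0 : 0 ≤ ρ) (h1 : ρ < 1) :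
    HasSum (fun n => (starRingEnd ℂ) (a n) * b n * (ρ:ℂ) ^ (2 * n))
      (circleAverage (fun z => (starRingEnd ℂ) (u z) * v z) 0 ρ) := by
  obtain ⟨K, hK⟩ := (isCompact_sphere (0:ℂ) ρ).exists_bound_of_continuousOn
    (hvc.mono (sphere_sub h1))
  have h2 := hasSum_circleAverage (F := fun n z => (starRingEnd ℂ) (a n * z ^ n) * v z)
    (g := fun z => (starRingEnd ℂ) (u z) * v z) (c := fun n => (‖a n‖ * ρ ^ n) * K) h0
    (fun n => ContinuousOn.mul (Continuous.continuousOn (by fun_prop)) (hvc.mono (sphere_sub h1)))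
    ((hu.summable h0 h1).mul_right _)
    (fun n z hz => by
      have := hK z hz
      rw [mem_sphere_zero_iff_norm] at hz
      rw [norm_mul, RCLike.norm_conj, norm_mul, norm_pow, hz]
      gcongr)
    (fun z hz => (((hu z (sphere_sub h1 hz)).map (starRingEnd ℂ) Complex.continuous_conj).mul_right
      (v z)))
  refine h2.congr_fun fun n => ?_
  have : (fun z : ℂ => (starRingEnd ℂ) (a n * z ^ n) * v z) =
      fun z => (starRingEnd ℂ) (a n) • ((starRingEnd ℂ) (z ^ n) * v z) := by
    funext z; simp only [smul_eq_mul, map_mul]; ring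
  rw [this, circleAverage_fun_smul, hv.coeff h0 h1, smul_eq_mul, mul_assoc]

lemma parseval_sq {u : ℂ → ℂ} {a : ℕ → ℂ} (hu : Ser u a)
    (huc : ContinuousOn u (ball 0 1)) {ρ : ℝ} (h0 : 0 ≤ ρ) (h1 : ρ < 1) :
    HasSum (fun n => ‖a n‖ ^ 2 * ρ ^ (2 * n)) (circleAverage (fun z => ‖u z‖ ^ 2) 0 ρ) := by
  have h := parseval hu hu huc h0 h1
  have h2 : circleAverage (fun z => (starRingEnd ℂ) (u z) * u z) 0 ρ =
      ((circleAverage (fun z => ‖u z‖ ^ 2) 0 ρ : ℝ) : ℂ) := by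
    have : CircleIntegrable (fun z => ‖u z‖ ^ 2) 0 ρ :=
      ((huc.mono (sphere_sub h1)).norm.pow 2).circleIntegrable h0
    have h3 := Complex.ofRealCLM.circleAverage_comp_comm this
    rw [Complex.ofRealCLM_apply] at h3
    rw [← h3]
    congr 1
    funext z
    simp [Complex.conj_mul']
  rw [h2] at h
  rw [← Complex.hasSum_ofReal]
  refine h.congr_fun fun n => ?_
  rw [Complex.conj_mul']
  push_cast
  ring

/-! ### One step of subordination -/

lemma cauchy_bound {u : ℂ → ℂ} (hu : DifferentiableOn ℂ u (ball 0 1)) {R₁ R₂ K : ℝ}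
    (h12 : R₁ < R₂) (h2 : R₂ < 1) (hK : ∀ z ∈ closedBall (0:ℂ) R₂, ‖u z‖ ≤ K) :
    ∀ z ∈ closedBall (0:ℂ) R₁, ‖deriv u z‖ ≤ K / (R₂ - R₁) := by
  intro z hz
  have hsub : closedBall z (R₂ - R₁) ⊆ closedBall 0 R₂ := by
    refine closedBall_subset_closedBall' ?_
    rw [mem_closedBall] at hz; linarith
  refine Complex.norm_deriv_le_of_forall_mem_sphere_norm_le (sub_pos.2 h12) ?_
    fun w hw => hK w (hsub (sphere_subset_closedBall hw))
  exact ((hu.mono (hsub.trans (closedBall_subset_unit h2))).mono closure_ball_subset_closedBall).diffContOnCl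

/-- Uniform bounds for holomorphic functions with real part bounded above. -/
lemma exists_bounds {m ρ : ℝ} (hm : 0 < m) (hρ : ρ < 1) : ∃ K > 0, ∀ L : ℂ → ℂ,
    DifferentiableOn ℂ L (ball 0 1) → L 0 = 0 → (∀ z ∈ ball (0:ℂ) 1, (L z).re ≤ m) →
    ∀ z ∈ closedBall (0:ℂ) ρ, ‖z * deriv L z‖ ≤ K * ‖z‖ ∧
      ‖z * deriv (fun w => w * deriv L w) z‖ ≤ K := by
  obtain ⟨R₂, h1, h2⟩ := exists_between hρ
  obtain ⟨R₃, h3, h4⟩ := exists_between h2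
  have h4' : 0 < 1 - R₃ := sub_pos.2 h4
  have h3' : 0 < R₃ - R₂ := sub_pos.2 h3
  have h1' : 0 < R₂ - ρ := sub_pos.2 h1
  set K₀ := 2 * m / (1 - R₃)
  have hK₀ : 0 < K₀ := by positivity
  set K₁ := K₀ / (R₃ - R₂)
  have hK₁ : 0 < K₁ := by positivity
  set K₂ := K₁ / (R₂ - ρ)
  have hK₂ : 0 < K₂ := by positivity
  refine ⟨K₁ + K₂, by positivity, fun L hL hL0 hre z hz => ?_⟩
  have b0 : ∀ z ∈ closedBall (0:ℂ) R₃, ‖L z‖ ≤ K₀ := by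
    intro z hz
    have hz1 := closedBall_subset_unit h4 hz
    have := Complex.borelCaratheodory_zero hm hL hre one_pos hz1 hL0
    rw [mem_closedBall_zero_iff] at hz
    rw [mem_ball_zero_iff] at hz1
    refine this.trans ?_
    refine div_le_div₀ (by positivity) ?_ h4' (by linarith)
    nlinarith [norm_nonneg z]
  have b1 := cauchy_bound hL h3 h4 b0
  have hd := hL.deriv isOpen_ball
  have hA : DifferentiableOn ℂ (fun w => w * deriv L w) (ball 0 1) := differentiableOn_id.mul hd
  have b2 := cauchy_bound hA h1 h2 (K := K₁) (fun w hw => by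
    have hw1 := closedBall_subset_unit h2 hw
    rw [mem_ball_zero_iff] at hw1
    rw [norm_mul]
    nlinarith [b1 w hw, norm_nonneg w, norm_nonneg (deriv L w)])
  have hz1 := closedBall_subset_unit hρ hz
  rw [mem_ball_zero_iff] at hz1
  constructor
  · rw [norm_mul, mul_comm]
    have := b1 z (closedBall_subset_closedBall h1.le hz)
    gcongr
    linarith
  · rw [norm_mul]
    have := b2 z hz
    nlinarith [norm_nonneg z, norm_nonneg (deriv (fun w => w * deriv L w) z)]

/-- The Schwarz–Pick disc for functions of positive real part. -/
lemma schwarz_disc {P : ℂ → ℂ} {τ : ℝ} (hP : DifferentiableOn ℂ P (ball 0 1))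
    (hre : ∀ z ∈ ball (0:ℂ) 1, 0 ≤ (P z).re) (hτ : 0 < τ) (hP0 : P 0 = τ) {z : ℂ}
    (hz : z ∈ ball (0:ℂ) 1) :
    (‖P z‖ ^ 2 + τ ^ 2) * (1 - ‖z‖ ^ 2) ≤ 2 * τ * (1 + ‖z‖ ^ 2) * (P z).re := by
  have hne : ∀ z ∈ ball (0:ℂ) 1, P z + τ ≠ 0 := by
    intro z hz h
    have := congrArg Complex.re h
    simp at this
    linarith [hre z hz]
  have hsq : ∀ w : ℂ, ‖w - τ‖ ^ 2 = ‖w‖ ^ 2 + τ ^ 2 - 2 * τ * w.re ∧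
      ‖w + τ‖ ^ 2 = ‖w‖ ^ 2 + τ ^ 2 + 2 * τ * w.re := by
    intro w
    simp only [← Complex.normSq_eq_norm_sq, Complex.normSq_apply]
    constructor <;> simp <;> ring
  have h1 : ∀ w : ℂ, 0 ≤ w.re → ‖w - τ‖ ≤ ‖w + τ‖ := by
    intro w hw
    rw [← sq_le_sq₀ (norm_nonneg _) (norm_nonneg _), (hsq w).1, (hsq w).2]
    nlinarith [mul_nonneg hτ.le hw]
  have hW : DifferentiableOn ℂ (fun z => (P z - τ) / (P z + τ)) (ball 0 1) :=
    (hP.sub_const _).div (hP.add_const _) hne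
  have := Complex.norm_le_norm_of_mapsTo_ball hW (fun w hw => by
    rw [mem_closedBall_zero_iff, norm_div]
    exact div_le_one_of_le₀ (h1 _ (hre w hw)) (norm_nonneg _)) (by simp [hP0])
    (mem_ball_zero_iff.1 hz)
  rw [norm_div, div_le_iff₀ (norm_pos_iff.2 (hne z hz)),
    ← sq_le_sq₀ (norm_nonneg _) (by positivity), mul_pow, (hsq _).1, (hsq _).2] at this
  linarith

lemma taylor_bound {L : ℂ → ℂ} (hL : DifferentiableOn ℂ L (ball 0 1)) {ρ K : ℝ} (hρ : ρ < 1)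
    (h1 : ∀ z ∈ closedBall (0:ℂ) ρ, ‖z * deriv L z‖ ≤ K)
    (h2 : ∀ z ∈ closedBall (0:ℂ) ρ, ‖z * deriv (fun w => w * deriv L w) z‖ ≤ K)
    {z p : ℂ} (hz : z ∈ closedBall (0:ℂ) ρ) (hp : 0 ≤ p.re) :
    ‖L (z * Complex.exp (-p)) - L z‖ ≤ K * ‖p‖ ∧
    ‖L (z * Complex.exp (-p)) - L z + p * (z * deriv L z)‖ ≤ K * ‖p‖ ^ 2 := by
  have hK : 0 ≤ K := (norm_nonneg _).trans (h1 z hz)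
  have hd := hL.deriv isOpen_ball
  have hA : DifferentiableOn ℂ (fun w => w * deriv L w) (ball 0 1) := differentiableOn_id.mul hd
  let c : ℝ → ℂ := fun s => z * Complex.exp (-(s * p))
  have hc : ∀ s, HasDerivAt c (-p * c s) s := by
    intro s
    have e1 : HasDerivAt (fun s : ℝ => -((s:ℂ) * p)) (-p) s := by
      have e0 : HasDerivAt (fun s : ℝ => (s:ℂ) * p) p s := by
        simpa using (hasDerivAt_id s).ofReal_comp.mul_const p
      exact e0.fun_neg
    refine (e1.cexp.const_mul z).congr_deriv ?_
    simp only [c]; ring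
  have hmem : ∀ s ∈ Icc (0:ℝ) 1, c s ∈ closedBall (0:ℂ) ρ := by
    intro s hs
    rw [mem_closedBall_zero_iff] at hz ⊢
    simp only [c]
    rw [norm_mul, Complex.norm_exp]
    have : (-((s:ℂ) * p)).re ≤ 0 := by simp; exact mul_nonneg hs.1 hp
    have h3 := Real.exp_le_one_iff.2 this
    nlinarith [norm_nonneg z]
  have hcomp : ∀ {u : ℂ → ℂ}, DifferentiableOn ℂ u (ball 0 1) → ∀ s ∈ Icc (0:ℝ) 1,
      HasDerivAt (fun s => u (c s)) (-p * (c s * deriv u (c s))) s := by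
    intro u hu s hs
    have e1 := (hu.differentiableAt (isOpen_ball.mem_nhds
      (closedBall_subset_unit hρ (hmem s hs)))).hasDerivAt
    refine (e1.comp s (hc s)).congr_deriv ?_
    ring
  have hc0 : c 0 = z := by simp [c]
  have hc1 : c 1 = z * Complex.exp (-p) := by simp [c]
  constructor
  · have := norm_image_sub_le_of_norm_deriv_le_segment_01' (f := fun s => L (c s)) (C := K * ‖p‖)
      (fun s hs => (hcomp hL s hs).hasDerivWithinAt) (fun s hs => by
        rw [norm_mul, norm_neg, mul_comm]
        have := h1 _ (hmem s (Ico_subset_Icc_self hs))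
        gcongr)
    rwa [hc0, hc1] at this
  · have hA' : ∀ s ∈ Icc (0:ℝ) 1, ‖c s * deriv L (c s) - z * deriv L z‖ ≤ K * ‖p‖ := by
      intro s hs
      have := norm_image_sub_le_of_norm_deriv_le_segment' (f := fun s => c s * deriv L (c s))
        (C := K * ‖p‖) (fun s hs => (hcomp hA s hs).hasDerivWithinAt) (fun s hs => by
          rw [norm_mul, norm_neg, mul_comm]
          have := h2 _ (hmem s (Ico_subset_Icc_self hs))
          gcongr) s hs
      rw [hc0] at this
      refine this.trans ?_
      have h0 : 0 ≤ K * ‖p‖ := by positivity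
      nlinarith [hs.2]
    have hk : ∀ s ∈ Icc (0:ℝ) 1, HasDerivAt (fun s : ℝ => L (c s) + (s:ℂ) * (p * (z * deriv L z)))
        (-p * (c s * deriv L (c s) - z * deriv L z)) s := by
      intro s hs
      have e1 : HasDerivAt (fun s : ℝ => (s:ℂ) * (p * (z * deriv L z))) (p * (z * deriv L z)) s := by
        simpa using (hasDerivAt_id s).ofReal_comp.mul_const (p * (z * deriv L z))
      refine ((hcomp hL s hs).add e1).congr_deriv ?_
      ring
    have := norm_image_sub_le_of_norm_deriv_le_segment_01' (C := K * ‖p‖ ^ 2)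
      (fun s hs => (hk s hs).hasDerivWithinAt) (fun s hs => by
        rw [norm_mul, norm_neg]
        have := hA' s (Ico_subset_Icc_self hs)
        calc ‖p‖ * _ ≤ ‖p‖ * (K * ‖p‖) := by gcongr
          _ = _ := by ring)
    rw [hc0, hc1] at this
    refine le_trans (le_of_eq ?_) this
    congr 1
    push_cast
    ring

lemma avg_holo {u : ℂ → ℂ} (hu : DifferentiableOn ℂ u (ball 0 1)) {ρ : ℝ} (h0 : 0 ≤ ρ)
    (h1 : ρ < 1) : circleAverage u 0 ρ = u 0 := by
  refine DiffContOnCl.circleAverage ?_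
  rw [abs_of_nonneg h0]
  exact (hu.mono (closure_ball_subset_closedBall.trans (closedBall_subset_unit h1))).diffContOnCl

lemma avg_re {u : ℂ → ℂ} (hu : ContinuousOn u (ball 0 1)) {ρ : ℝ} (h0 : 0 ≤ ρ)
    (h1 : ρ < 1) : circleAverage (fun z => (u z).re) 0 ρ = (circleAverage u 0 ρ).re :=
  Complex.reCLM.circleAverage_comp_comm ((hu.mono (sphere_sub h1)).circleIntegrable h0)

/-- The area functional `∑ n |aₙ|² xⁿ` of a power series `∑ aₙ zⁿ`. -/
noncomputable def Dir (L : ℂ → ℂ) (x : ℝ) : ℝ := ∑' n : ℕ, n * ‖cf L n‖ ^ 2 * x ^ n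

lemma hasSum_sq {L : ℂ → ℂ} (hL : DifferentiableOn ℂ L (ball 0 1)) {ρ : ℝ} (h0 : 0 ≤ ρ)
    (h1 : ρ < 1) : HasSum (fun n : ℕ => (n:ℝ) ^ 2 * ‖cf L n‖ ^ 2 * (ρ ^ 2) ^ n)
      (circleAverage (fun z => ‖z * deriv L z‖ ^ 2) 0 ρ) := by
  have hA : DifferentiableOn ℂ (fun w => w * deriv L w) (ball 0 1) :=
    differentiableOn_id.mul (hL.deriv isOpen_ball)
  refine (parseval_sq (ser_deriv hL) hA.continuousOn h0 h1).congr_fun fun n => ?_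
  rw [norm_mul, mul_pow, Complex.norm_natCast, pow_mul]

lemma natCast_le_sq (n : ℕ) : (n:ℝ) ≤ (n:ℝ) ^ 2 := by
  exact_mod_cast Nat.le_self_pow two_ne_zero n

lemma summable_dir {L : ℂ → ℂ} (hL : DifferentiableOn ℂ L (ball 0 1)) {x : ℝ} (h0 : 0 ≤ x)
    (h1 : x < 1) : Summable fun n : ℕ => n * ‖cf L n‖ ^ 2 * x ^ n := by
  have h2 := (hasSum_sq hL (Real.sqrt_nonneg x) (by rw [Real.sqrt_lt' one_pos]; simpa)).summable
  rw [Real.sq_sqrt h0] at h2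
  refine Summable.of_nonneg_of_le (fun n => by positivity) (fun n => ?_) h2
  have := natCast_le_sq n
  gcongr

lemma dir_le {L : ℂ → ℂ} (hL : DifferentiableOn ℂ L (ball 0 1)) {ρ : ℝ} (h0 : 0 ≤ ρ)
    (h1 : ρ < 1) : Dir L (ρ ^ 2) ≤ circleAverage (fun z => ‖z * deriv L z‖ ^ 2) 0 ρ := by
  have h2 := hasSum_sq hL h0 h1
  rw [← h2.tsum_eq]
  refine (summable_dir hL (by positivity) (by nlinarith)).tsum_le_tsum (fun n => ?_) h2.summable
  have := natCast_le_sq n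
  gcongr

/-- Convexity of `x ↦ Dir L x`, compared with its tangent line. -/
lemma dir_tangent {L : ℂ → ℂ} (hL : DifferentiableOn ℂ L (ball 0 1)) {ρ q : ℝ} (h0 : 0 ≤ ρ)
    (h1 : ρ < 1) (hq0 : 0 ≤ q) (hq1 : q ≤ 1) :
    Dir L (ρ ^ 2) - q * circleAverage (fun z => ‖z * deriv L z‖ ^ 2) 0 ρ ≤
      Dir L (ρ ^ 2 * (1 - q)) := by
  have h2 := hasSum_sq hL h0 h1
  have hx : ρ ^ 2 < 1 := by nlinarith
  have hx0 : 0 ≤ ρ ^ 2 := by positivity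
  rw [← h2.tsum_eq, ← tsum_mul_left]
  rw [Dir, ← (summable_dir hL hx0 hx).tsum_sub (h2.summable.mul_left q)]
  refine ((summable_dir hL hx0 hx).sub (h2.summable.mul_left q)).tsum_le_tsum (fun n => ?_)
    (summable_dir hL (by nlinarith) (by nlinarith))
  have h3 := one_add_mul_le_pow (a := -q) (by linarith) n
  rw [mul_pow]
  have h4 : 0 ≤ (n:ℝ) * ‖cf L n‖ ^ 2 * (ρ ^ 2) ^ n := by positivity
  calc _ = (n:ℝ) * ‖cf L n‖ ^ 2 * (ρ ^ 2) ^ n * (1 + n * -q) := by ring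
    _ ≤ (n:ℝ) * ‖cf L n‖ ^ 2 * (ρ ^ 2) ^ n * (1 + -q) ^ n := by gcongr
    _ = _ := by rw [← sub_eq_add_neg]; ring

lemma dir_add {L δ : ℂ → ℂ} (hL : DifferentiableOn ℂ L (ball 0 1))
    (hδ : DifferentiableOn ℂ δ (ball 0 1)) {ρ : ℝ} (h0 : 0 ≤ ρ) (h1 : ρ < 1) :
    Dir (fun z => L z + δ z) (ρ ^ 2) = Dir L (ρ ^ 2) +
      2 * (circleAverage (fun z => (starRingEnd ℂ) (δ z) * (z * deriv L z)) 0 ρ).re +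
      Dir δ (ρ ^ 2) := by
  have hA : DifferentiableOn ℂ (fun w => w * deriv L w) (ball 0 1) :=
    differentiableOn_id.mul (hL.deriv isOpen_ball)
  have hcf : cf (fun z => L z + δ z) = fun n => cf L n + cf δ n :=
    (ser_cf (hL.add hδ)).unique ((ser_cf hL).add (ser_cf hδ))
  have hx : ρ ^ 2 < 1 := by nlinarith
  have hx0 : 0 ≤ ρ ^ 2 := by positivity
  have h2 := (Complex.hasSum_re (parseval (ser_cf hδ) (ser_deriv hL) hA.continuousOn h0 h1)).mul_left 2
  have h3 := ((summable_dir hL hx0 hx).hasSum.add h2).add (summable_dir hδ hx0 hx).hasSum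
  refine HasSum.tsum_eq ?_
  refine h3.congr_fun fun n => ?_
  rw [hcf]
  simp only
  rw [pow_mul, ← Complex.ofReal_pow, ← Complex.ofReal_pow, Complex.re_mul_ofReal]
  simp only [← Complex.normSq_eq_norm_sq, Complex.normSq_apply]
  simp
  ring

/-- The deficit `∑ (1/k - k |γ_k|²) x^k` for `L = 2 ∑ γ_k z^k`. -/
noncomputable def Phi (L : ℂ → ℂ) (x : ℝ) : ℝ := -Real.log (1 - x) - Dir L x / 4

/-- The pointwise inequality behind the monotonicity of `Phi`: here `A = z L'` and
`δ = τ - P (1 + A) + E` is the increment of `L`. -/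
lemma pointwise {A P E : ℂ} {τ x : ℝ} (hτ : 0 < τ) (hx0 : 0 ≤ x) (hx : x < 1)
    (hP : (‖P‖ ^ 2 + τ ^ 2) * (1 - x) ≤ 2 * τ * (1 + x) * P.re) :
    ((starRingEnd ℂ) (τ - P * (1 + A) + E) * A).re ≤
      (((τ * (1 - (1 - x) / (1 + x)) : ℝ) : ℂ) * A
        + ((1 - (1 - x) / (1 + x) : ℝ) : ℂ) * (P * (1 + A))).re
      - τ * ((1 - x) / (1 + x)) / 2 * ‖A‖ ^ 2 + ‖E‖ * ‖A‖ := by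
  have hE : ((starRingEnd ℂ) E * A).re ≤ ‖E‖ * ‖A‖ := by
    refine (Complex.re_le_norm _).trans ?_
    rw [norm_mul, RCLike.norm_conj]
  have hsplit : ((starRingEnd ℂ) (τ - P * (1 + A) + E) * A).re =
      τ * A.re - P.re * ‖1 + A‖ ^ 2 + (P * (1 + A)).re + ((starRingEnd ℂ) E * A).re := by
    simp only [← Complex.normSq_eq_norm_sq, Complex.normSq_apply]
    simp
    ring
  have hB : ‖1 + A‖ ^ 2 = 1 + 2 * A.re + ‖A‖ ^ 2 := by
    simp only [← Complex.normSq_eq_norm_sq, Complex.normSq_apply]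
    simp
    ring
  have hPB : 2 * τ * (P * (1 + A)).re - τ ^ 2 ≤ ‖P‖ ^ 2 * ‖1 + A‖ ^ 2 := by
    have h1 : 0 ≤ ‖P * (1 + A) - τ‖ ^ 2 := by positivity
    have h2 : ‖P * (1 + A) - τ‖ ^ 2 = ‖P * (1 + A)‖ ^ 2 - 2 * τ * (P * (1 + A)).re + τ ^ 2 := by
      simp only [← Complex.normSq_eq_norm_sq, Complex.normSq_apply]
      simp
      ring
    rw [← mul_pow, ← norm_mul]
    linarith
  rw [hsplit]
  have hre : (((τ * (1 - (1 - x) / (1 + x)) : ℝ) : ℂ) * A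
        + ((1 - (1 - x) / (1 + x) : ℝ) : ℂ) * (P * (1 + A))).re =
      τ * (1 - (1 - x) / (1 + x)) * A.re + (1 - (1 - x) / (1 + x)) * (P * (1 + A)).re := by
    rw [Complex.add_re, Complex.re_ofReal_mul, Complex.re_ofReal_mul]
  rw [hre]
  set b := (P * (1 + A)).re
  set k := (1 - x) / (1 + x) with hk
  have hk0 : 0 < k := div_pos (by linarith) (by linarith)
  have hP2 : (‖P‖ ^ 2 + τ ^ 2) * k ≤ 2 * τ * P.re := by
    rw [hk, ← mul_div_assoc, div_le_iff₀ (by linarith)]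
    linarith
  have h3 : (‖P‖ ^ 2 + τ ^ 2) * k * ‖1 + A‖ ^ 2 ≤ 2 * τ * P.re * ‖1 + A‖ ^ 2 := by gcongr
  have h4 : k * (2 * τ * b - τ ^ 2 + τ ^ 2 * (1 + 2 * A.re + ‖A‖ ^ 2)) ≤
      2 * τ * (P.re * ‖1 + A‖ ^ 2) := by
    rw [← hB]
    have := mul_le_mul_of_nonneg_left hPB hk0.le
    nlinarith
  have h5 : k * (2 * b + 2 * τ * A.re + τ * ‖A‖ ^ 2) ≤ 2 * (P.re * ‖1 + A‖ ^ 2) := by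
    refine le_of_mul_le_mul_left ?_ hτ
    nlinarith
  nlinarith

lemma log_step {τ x : ℝ} (hτ : 0 < τ) (hx : 0 < x) (hx1 : x < 1) :
    Real.log (1 - x) + x * τ / (1 + x) - τ ^ 2 ≤
      Real.log (1 - x * (1 - τ * ((1 - x) / (1 + x)))) := by
  have e1 : 1 - x * (1 - τ * ((1 - x) / (1 + x))) = (1 - x) * (1 + x * τ / (1 + x)) := by
    field_simp; ring
  have hv : 0 ≤ x * τ / (1 + x) := by positivity
  have hvτ : x * τ / (1 + x) ≤ τ := by rw [div_le_iff₀ (by linarith)]; nlinarith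
  set v := x * τ / (1 + x)
  rw [e1, Real.log_mul (by linarith) (by linarith)]
  have e2 := Real.one_sub_inv_le_log_of_pos (x := 1 + v) (by linarith)
  have e3 : v - v ^ 2 ≤ 1 - (1 + v)⁻¹ := by
    have : 1 - (1 + v)⁻¹ = v / (1 + v) := by field_simp; ring
    rw [this, le_div_iff₀ (by linarith)]
    nlinarith [pow_nonneg hv 3]
  nlinarith

set_option maxHeartbeats 800000 in
/-- One step of subordination `L₁ = τ - P + L ∘ (z e^{-P})` decreases `Phi` up to a
second-order error, when `x` is moved along the characteristic of the differential inequality. -/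
lemma step {m x₀ : ℝ} (hm : 0 < m) (hx₀ : 0 < x₀) (hx₁ : x₀ < 1) : ∃ C > 0,
    ∀ (L P L₁ : ℂ → ℂ) (τ x : ℝ), 0 < τ → τ ≤ 1 → 0 < x → x ≤ x₀ →
    DifferentiableOn ℂ L (ball 0 1) → L 0 = 0 → (∀ z ∈ ball (0:ℂ) 1, (L z).re ≤ m) →
    DifferentiableOn ℂ P (ball 0 1) → P 0 = τ → (∀ z ∈ ball (0:ℂ) 1, 0 ≤ (P z).re) →
    DifferentiableOn ℂ L₁ (ball 0 1) →
    (∀ z ∈ ball (0:ℂ) 1, L₁ z = τ - P z + L (z * Complex.exp (-P z))) →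
    Phi L (x * (1 - τ * ((1 - x) / (1 + x)))) - C * τ ^ 2 ≤ Phi L₁ x := by
  have hρ₁ : √x₀ < 1 := by rw [Real.sqrt_lt' one_pos]; simpa
  obtain ⟨r, hr0, hr1⟩ := exists_between hρ₁
  have hr00 : 0 < r := (Real.sqrt_pos.2 hx₀).trans hr0
  obtain ⟨K, hK, hKb⟩ := exists_bounds hm hr1
  have hr2 : 0 < 1 - r ^ 2 := by nlinarith
  set κ := 4 / (1 - r ^ 2) with hκ
  have hκ0 : 0 < κ := by positivity
  have hrs : 0 < r - √x₀ := sub_pos.2 hr0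
  set K₄ := (1 + κ + K * κ) / (r - √x₀) with hK₄
  refine ⟨(2 * (K ^ 2 * κ ^ 2) + K₄ ^ 2) / 4 + 1, by positivity, ?_⟩
  intro L P L₁ τ x hτ hτ1 hx hxx hL hL0 hLm hP hP0 hPre hL₁ hL₁e
  have hx1 : x < 1 := hxx.trans_lt hx₁
  set ρ := √x with hρdef
  have hρ0 : 0 ≤ ρ := Real.sqrt_nonneg x
  have hρx : ρ ^ 2 = x := Real.sq_sqrt hx.le
  have hρρ : ρ ≤ √x₀ := Real.sqrt_le_sqrt hxx
  have hρ1 : ρ < 1 := hρρ.trans_lt hρ₁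
  set A : ℂ → ℂ := fun z => z * deriv L z with hAdef
  have hA : DifferentiableOn ℂ A (ball 0 1) := differentiableOn_id.mul (hL.deriv isOpen_ball)
  have hA0 : A 0 = 0 := by simp [A]
  have hb := hKb L hL hL0 hLm
  have hsub : closedBall (0:ℂ) r ⊆ ball 0 1 := closedBall_subset_unit hr1
  have hAK : ∀ z ∈ closedBall (0:ℂ) r, ‖z * deriv L z‖ ≤ K := by
    intro z hz
    have h1 := (hb z hz).1
    have h2 := hsub hz
    rw [mem_ball_zero_iff] at h2
    nlinarith
  have hPκ : ∀ z ∈ closedBall (0:ℂ) r, ‖P z‖ ≤ κ * τ := by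
    intro z hz
    have h1 := schwarz_disc hP hPre hτ hP0 (hsub hz)
    have h0 := hPre z (hsub hz)
    rw [mem_closedBall_zero_iff] at hz
    have h2 : ‖z‖ ^ 2 ≤ r ^ 2 := by gcongr
    have h3 := Complex.re_le_norm (P z)
    have h4 : ‖P z‖ ^ 2 * (1 - r ^ 2) ≤ 4 * τ * ‖P z‖ := by
      have e1 : ‖P z‖ ^ 2 * (1 - r ^ 2) ≤ (‖P z‖ ^ 2 + τ ^ 2) * (1 - ‖z‖ ^ 2) := by
        gcongr
        nlinarith
      have e2 : 2 * τ * (1 + ‖z‖ ^ 2) * (P z).re ≤ 2 * τ * (1 + 1) * ‖P z‖ := by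
        gcongr
        nlinarith
      linarith
    rw [hκ, div_mul_eq_mul_div, le_div_iff₀ hr2]
    rcases (norm_nonneg (P z)).eq_or_lt with h5 | h5
    · rw [← h5]; simp; positivity
    · refine le_of_mul_le_mul_left ?_ h5
      nlinarith
  have htay := fun z hz => taylor_bound hL hr1 hAK (fun z hz => (hb z hz).2) (z := z) (p := P z) hz
    (hPre z (hsub hz))
  set δ : ℂ → ℂ := fun z => L₁ z - L z with hδdef
  have hδ : DifferentiableOn ℂ δ (ball 0 1) := hL₁.sub hL
  have hδb : ∀ z ∈ closedBall (0:ℂ) r, ‖δ z‖ ≤ (1 + κ + K * κ) * τ := by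
    intro z hz
    have h1 := (htay z hz).1
    have h2 := hPκ z hz
    have h3 : δ z = τ + -P z + (L (z * Complex.exp (-P z)) - L z) := by
      simp only [δ]; rw [hL₁e z (hsub hz)]; ring
    rw [h3]
    refine (norm_add₃_le).trans ?_
    rw [norm_neg, Complex.norm_real, Real.norm_of_nonneg hτ.le]
    have : K * ‖P z‖ ≤ K * (κ * τ) := by gcongr
    nlinarith
  have hδ' : ∀ z ∈ closedBall (0:ℂ) (√x₀), ‖deriv δ z‖ ≤ K₄ * τ := by
    intro z hz
    have := cauchy_bound hδ hr0 hr1 hδb z hz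
    rwa [hK₄, div_mul_eq_mul_div]
  have hDδ : Dir δ x ≤ (K₄ * τ) ^ 2 := by
    have h1 := dir_le hδ hρ0 hρ1
    rw [hρx] at h1
    refine h1.trans ?_
    refine circleAverage_mono_on_of_le_circle ?_ ?_
    · refine ContinuousOn.circleIntegrable hρ0 ?_
      exact (((differentiableOn_id.mul (hδ.deriv isOpen_ball)).continuousOn.mono
        (sphere_sub hρ1)).norm.pow 2)
    · intro z hz
      rw [abs_of_nonneg hρ0] at hz
      have h2 := hδ' z (sphere_subset_closedBall.trans (closedBall_subset_closedBall hρρ) hz)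
      have h3 := sphere_sub hρ1 hz
      rw [mem_ball_zero_iff] at h3
      have h4 : ‖z * deriv δ z‖ ≤ K₄ * τ := by
        rw [norm_mul]
        nlinarith [norm_nonneg z, norm_nonneg (deriv δ z)]
      gcongr
  set k := (1 - x) / (1 + x) with hk
  have hk0 : 0 < k := div_pos (by linarith) (by linarith)
  have hk1 : k ≤ 1 := by rw [hk, div_le_one (by linarith)]; linarith
  set S := circleAverage (fun z => ‖z * deriv L z‖ ^ 2) 0 ρ with hS
  have hcont : ∀ {u : ℂ → ℂ}, DifferentiableOn ℂ u (ball 0 1) → ContinuousOn u (sphere 0 ρ) :=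
    fun hu => hu.continuousOn.mono (sphere_sub hρ1)
  -- the main term
  have hmain : (circleAverage (fun z => (starRingEnd ℂ) (δ z) * (z * deriv L z)) 0 ρ).re ≤
      τ * (1 - k) - τ * k / 2 * S + K ^ 2 * κ ^ 2 * τ ^ 2 := by
    have hc1 : ContinuousOn (fun z => (starRingEnd ℂ) (δ z) * A z) (ball 0 1) :=
      (Complex.continuous_conj.comp_continuousOn hδ.continuousOn).mul hA.continuousOn
    rw [← avg_re hc1 hρ0 hρ1]
    set u : ℂ → ℂ := fun z => ((τ * (1 - k) : ℝ) : ℂ) * A z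
        + ((1 - k : ℝ) : ℂ) * (P z * (1 + A z)) with hu
    have hud : DifferentiableOn ℂ u (ball 0 1) :=
      (hA.const_mul _).add ((hP.mul (hA.const_add 1)).const_mul _)
    have hi1 : CircleIntegrable (fun z => (u z).re) 0 ρ :=
      (Complex.continuous_re.comp_continuousOn (hcont hud)).circleIntegrable hρ0
    have hi2 : CircleIntegrable (fun z => τ * k / 2 * ‖A z‖ ^ 2) 0 ρ :=
      (((hcont hA).norm.pow 2).const_mul _).circleIntegrable hρ0
    have hi3 : CircleIntegrable (fun z => (u z).re - τ * k / 2 * ‖A z‖ ^ 2) 0 ρ := hi1.sub hi2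
    have hi4 : CircleIntegrable (fun _ => K ^ 2 * κ ^ 2 * τ ^ 2) (0:ℂ) ρ :=
      circleIntegrable_const _ _ _
    have havg : circleAverage (fun z => (u z).re - τ * k / 2 * ‖A z‖ ^ 2 + K ^ 2 * κ ^ 2 * τ ^ 2)
        0 ρ = τ * (1 - k) - τ * k / 2 * S + K ^ 2 * κ ^ 2 * τ ^ 2 := by
      rw [circleAverage_fun_add hi3 hi4, circleAverage_fun_sub hi1 hi2, circleAverage_const,
        avg_re hud.continuousOn hρ0 hρ1, avg_holo hud hρ0 hρ1]
      have e1 : circleAverage (fun z => τ * k / 2 * ‖A z‖ ^ 2) 0 ρ = τ * k / 2 * S := by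
        have := circleAverage_fun_smul (a := τ * k / 2) (f := fun z => ‖A z‖ ^ 2) (c := 0) (R := ρ)
        simpa only [smul_eq_mul] using this
      have e2 : (u 0).re = τ * (1 - k) := by
        simp only [hu, hA0, hP0]
        rw [mul_zero, zero_add, add_zero, mul_one, ← Complex.ofReal_mul, Complex.ofReal_re]
        ring
      rw [e1, e2]
    rw [← havg]
    refine circleAverage_mono ?_ (hi3.add hi4) ?_
    · exact (Complex.continuous_re.comp_continuousOn (hc1.mono (sphere_sub hρ1))).circleIntegrable hρ0
    intro z hz
    rw [abs_of_nonneg hρ0] at hz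
    have hzr : z ∈ closedBall (0:ℂ) r :=
      sphere_subset_closedBall.trans (closedBall_subset_closedBall (hρρ.trans hr0.le)) hz
    have hz1 := hsub hzr
    rw [mem_sphere_zero_iff_norm] at hz
    have hdisc := schwarz_disc hP hPre hτ hP0 hz1
    rw [hz, hρx] at hdisc
    set E : ℂ := L (z * Complex.exp (-P z)) - L z + P z * (z * deriv L z) with hE
    have hδE : δ z = τ - P z * (1 + A z) + E := by
      simp only [δ, hE, A]; rw [hL₁e z hz1]; ring
    have hp := pointwise (A := A z) (P := P z) (E := E) hτ hx.le hx1 hdisc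
    rw [← hδE] at hp
    refine hp.trans ?_
    have hEA : ‖E‖ * ‖A z‖ ≤ K ^ 2 * κ ^ 2 * τ ^ 2 := by
      have h1 := (htay z hzr).2
      have h2 := hPκ z hzr
      calc ‖E‖ * ‖A z‖ ≤ (K * (κ * τ) ^ 2) * K := by
            refine mul_le_mul (h1.trans (by gcongr)) (hAK z hzr) (norm_nonneg _) (by positivity)
        _ = _ := by ring
    simp only [hu]
    linarith
  have hadd : Dir L₁ x = Dir L x +
      2 * (circleAverage (fun z => (starRingEnd ℂ) (δ z) * (z * deriv L z)) 0 ρ).re + Dir δ x := by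
    have := dir_add hL hδ hρ0 hρ1
    rw [hρx] at this
    rw [← this]
    congr 1
    funext z
    simp [δ]
  have hq1 : τ * k ≤ 1 := by nlinarith
  have htan := dir_tangent hL hρ0 hρ1 (q := τ * k) (by positivity) hq1
  rw [hρx, ← hS] at htan
  have hlog := log_step hτ hx hx1
  rw [← hk] at hlog
  have hid : τ / 2 * (1 - k) = x * τ / (1 + x) := by rw [hk]; field_simp; ring
  unfold Phi
  rw [hadd]
  linarith

/-! ### The Loewner-type iteration -/

/-- `L` is the logarithm of `e^{-t} h(z) / z` vanishing at the origin. -/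
structure IsLog (h L : ℂ → ℂ) (t : ℝ) : Prop where
  diff : DifferentiableOn ℂ L (ball 0 1)
  zero : L 0 = 0
  eq : ∀ z ∈ ball (0:ℂ) 1, Real.exp t * z * Complex.exp (L z) = h z

lemma exists_isLog {h : ℂ → ℂ} {t : ℝ} (hu : Univalent h) (hd : deriv h 0 = Real.exp t) :
    ∃ L, IsLog h L t := by
  have h0 : (0:ℂ) ∈ ball (0:ℂ) 1 := by simp
  have het : ((Real.exp t : ℝ) : ℂ) ≠ 0 := by exact_mod_cast (Real.exp_pos t).ne'
  have hds : DifferentiableOn ℂ (fun z => dslope h 0 z / Real.exp t) (ball 0 1) :=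
    ((Complex.differentiableOn_dslope (isOpen_ball.mem_nhds h0)).2 hu.diff).div_const _
  have hval : ∀ z : ℂ, z ≠ 0 → dslope h 0 z = h z / z := by
    intro z hz
    rw [dslope_of_ne _ hz, slope_def_field, hu.zero, sub_zero, sub_zero]
  have hne : ∀ z ∈ ball (0:ℂ) 1, dslope h 0 z / Real.exp t ≠ 0 := by
    intro z hz
    refine div_ne_zero ?_ het
    by_cases hz0 : z = 0
    · rw [hz0, dslope_same, hd]; exact het
    · rw [hval z hz0]
      exact div_ne_zero (hu.ne_zero (by simpa using hz) hz0) hz0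
  obtain ⟨L, hL, hL0, hLe⟩ := exists_log (c := 0) isOpen_ball
    (convex_ball (0:ℂ) 1).isPreconnected (good_ball 0 1) hds hne h0
    (by rw [Complex.exp_zero, dslope_same, hd, div_self het])
  refine ⟨L, hL, hL0, fun z hz => ?_⟩
  rw [hLe z hz]
  by_cases hz0 : z = 0
  · simp [hz0, hu.zero]
  · rw [hval z hz0]; field_simp

lemma IsLog.re_le {h L : ℂ → ℂ} {t M : ℝ} (hL : IsLog h L t) (hu : Univalent h) (hM : 0 < M)
    (hb : ∀ z ∈ ball (0:ℂ) 1, ‖h z‖ ≤ M * Real.exp t) : ∀ z ∈ ball (0:ℂ) 1, (L z).re ≤ M := by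
  intro z hz
  by_cases hz0 : z = 0
  · rw [hz0, hL.zero]; simpa using hM.le
  have hz1 : ‖z‖ < 1 := by simpa using hz
  have hzp : 0 < ‖z‖ := norm_pos_iff.2 hz0
  have het := Real.exp_pos t
  -- Schwarz's lemma for `h / (M e ^ t)`
  have h1 : ‖((M * Real.exp t : ℝ) : ℂ)⁻¹ * h z‖ ≤ ‖z‖ := by
    refine Complex.norm_le_norm_of_mapsTo_ball (f := fun z => ((M * Real.exp t : ℝ) : ℂ)⁻¹ * h z)
      (hu.diff.const_mul _) ?_ (by simp [hu.zero]) hz1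
    intro w hw
    rw [mem_closedBall_zero_iff, norm_mul, norm_inv, Complex.norm_real,
      Real.norm_of_nonneg (by positivity), inv_mul_le_iff₀ (by positivity), mul_one]
    exact hb w hw
  rw [norm_mul, norm_inv, Complex.norm_real,
      Real.norm_of_nonneg (by positivity), inv_mul_le_iff₀ (by positivity), ← hL.eq z hz,
      norm_mul, norm_mul, Complex.norm_exp, Complex.norm_real, Real.norm_of_nonneg het.le] at h1
  have h2 : Real.exp (L z).re ≤ M := by
    have : Real.exp t * ‖z‖ * Real.exp (L z).re ≤ Real.exp t * ‖z‖ * M := by linarith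
    exact le_of_mul_le_mul_left this (by positivity)
  linarith [Real.add_one_le_exp (L z).re]

lemma IsChain.step_data {h : ℝ → ℂ → ℂ} {t₀ M : ℝ} (hc : IsChain h t₀ M) {t τ : ℝ} (ht : t₀ ≤ t)
    (hτ : 0 < τ) {L₁ : ℂ → ℂ} (hL₁ : IsLog (h t) L₁ t) :
    ∃ L P : ℂ → ℂ, IsLog (h (t + τ)) L (t + τ) ∧ DifferentiableOn ℂ P (ball 0 1) ∧ P 0 = τ ∧
      (∀ z ∈ ball (0:ℂ) 1, 0 ≤ (P z).re) ∧
      ∀ z ∈ ball (0:ℂ) 1, L₁ z = τ - P z + L (z * Complex.exp (-P z)) := by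
  have ht' : t₀ ≤ t + τ := by linarith
  have hu := hc.univ (t + τ) ht'
  have hu₁ := hc.univ t ht
  obtain ⟨L, hL⟩ := exists_isLog hu (hc.deriv_zero _ ht')
  have hR : IsRiemannMap (h (t + τ)) (h (t + τ) '' ball 0 1) (Real.exp (t + τ)) :=
    ⟨hu.diff, hu.inj, rfl, hu.zero, Real.exp_pos _, hc.deriv_zero _ ht'⟩
  obtain ⟨ω, hω, hωm, hω0, hωe⟩ := hR.factor hu₁.diff hu₁.zero
    (fun z hz => hc.mono t (t + τ) ht (by linarith) (mem_image_of_mem _ hz))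
  set P : ℂ → ℂ := fun z => τ - L₁ z + L (ω z) with hP
  have hPd : DifferentiableOn ℂ P (ball 0 1) :=
    ((differentiableOn_const _).sub hL₁.diff).add (hL.diff.comp hω hωm)
  have hP0 : P 0 = τ := by simp [hP, hL₁.zero, hω0, hL.zero]
  have hkey : ∀ z ∈ ball (0:ℂ) 1, z * Complex.exp (-P z) = ω z := by
    intro z hz
    have h1 := hL₁.eq z hz
    rw [← hωe z hz, ← hL.eq (ω z) (hωm hz), Real.exp_add] at h1
    have e1 : Complex.exp (-P z) = Complex.exp (L₁ z) * Complex.exp (-τ) *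
        Complex.exp (-L (ω z)) := by
      rw [← Complex.exp_add, ← Complex.exp_add]; congr 1; simp only [hP]; ring
    have e2 : Complex.exp (L (ω z)) * Complex.exp (-L (ω z)) = 1 := by
      rw [← Complex.exp_add]; simp
    have e3 : Complex.exp (τ:ℂ) * Complex.exp (-τ) = 1 := by
      rw [← Complex.exp_add]; simp
    have e4 : Complex.exp (t:ℂ) ≠ 0 := Complex.exp_ne_zero _
    push_cast at h1
    rw [e1]
    refine mul_left_cancel₀ e4 ?_
    calc _ = (Complex.exp t * z * Complex.exp (L₁ z)) * (Complex.exp (-τ) *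
          Complex.exp (-L (ω z))) := by ring
      _ = Complex.exp t * ω z * (Complex.exp (τ:ℂ) * Complex.exp (-τ)) *
          (Complex.exp (L (ω z)) * Complex.exp (-L (ω z))) := by rw [h1]; ring
      _ = _ := by rw [e2, e3]; ring
  refine ⟨L, P, hL, hPd, hP0, ?_, ?_⟩
  · intro z hz
    by_cases hz0 : z = 0
    · rw [hz0, hP0]; simpa using hτ.le
    have hzp : 0 < ‖z‖ := norm_pos_iff.2 hz0
    have h1 : ‖ω z‖ ≤ ‖z‖ := Complex.norm_le_norm_of_mapsTo_ball hω
      (fun w hw => ball_subset_closedBall (hωm hw)) hω0 (by simpa using hz)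
    rw [← hkey z hz, norm_mul, Complex.norm_exp, mul_le_iff_le_one_right hzp,
      Real.exp_le_one_iff, Complex.neg_re] at h1
    linarith
  · intro z hz
    rw [hkey z hz]; simp only [hP]; ring

lemma phi_ge {m : ℝ} (hm : 0 < m) : ∃ K > 0, ∀ L : ℂ → ℂ, DifferentiableOn ℂ L (ball 0 1) →
    L 0 = 0 → (∀ z ∈ ball (0:ℂ) 1, (L z).re ≤ m) → ∀ x, 0 < x → x ≤ 1 / 4 → - (K * x) ≤ Phi L x := by
  obtain ⟨K, hK, hb⟩ := exists_bounds hm (ρ := 1 / 2) (by norm_num)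
  refine ⟨K ^ 2 / 4, by positivity, fun L hL hL0 hLm x hx hx4 => ?_⟩
  have hs : √x ≤ 1 / 2 := by
    rw [Real.sqrt_le_left (by norm_num)]; linarith
  have hs0 := Real.sqrt_nonneg x
  have h1 := dir_le hL hs0 (by linarith : √x < 1)
  rw [Real.sq_sqrt hx.le] at h1
  have hA : DifferentiableOn ℂ (fun w => w * deriv L w) (ball 0 1) :=
    differentiableOn_id.mul (hL.deriv isOpen_ball)
  have h2 : circleAverage (fun z => ‖z * deriv L z‖ ^ 2) 0 (√x) ≤ K ^ 2 * x := by
    refine circleAverage_mono_on_of_le_circle ?_ ?_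
    · refine ContinuousOn.circleIntegrable hs0 ?_
      exact (hA.continuousOn.mono (sphere_sub (by linarith))).norm.pow 2
    · intro z hz
      rw [abs_of_nonneg hs0] at hz
      have hz' : ‖z‖ = √x := by simpa using hz
      have h3 := (hb L hL hL0 hLm z (by rw [mem_closedBall_zero_iff, hz']; exact hs)).1
      calc ‖z * deriv L z‖ ^ 2 ≤ (K * ‖z‖) ^ 2 := by gcongr
        _ = K ^ 2 * x := by rw [mul_pow, hz', Real.sq_sqrt hx.le]
  have h4 : Real.log (1 - x) ≤ 0 := Real.log_nonpos (by linarith) (by linarith)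
  unfold Phi
  linarith

/-- Iterating `step` along the chain drives `x` to `0`, where `Phi` is bounded below by `- K x`. -/
lemma IsChain.phi_nonneg {h : ℝ → ℂ → ℂ} {t₀ M : ℝ} (hc : IsChain h t₀ M) (hM : 0 < M)
    {L₀ : ℂ → ℂ} (hL₀ : IsLog (h t₀) L₀ t₀) {x₀ : ℝ} (hx₀ : 0 < x₀) (hx₁ : x₀ < 1) :
    0 ≤ Phi L₀ x₀ := by
  obtain ⟨C, hC, hstep⟩ := step hM hx₀ hx₁
  obtain ⟨K, hK, hphi⟩ := phi_ge hM
  set a : ℝ := (1 - x₀) / (1 + x₀) with ha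
  have ha0 : 0 < a := div_pos (by linarith) (by linarith)
  have ha1 : a < 1 := by rw [ha, div_lt_one (by linarith)]; linarith
  have hiter : ∀ τ : ℝ, 0 < τ → τ ≤ 1 → ∀ k : ℕ, ∃ (L : ℂ → ℂ) (x : ℝ),
      IsLog (h (t₀ + k * τ)) L (t₀ + k * τ) ∧ 0 < x ∧ x ≤ x₀ * (1 - a * τ) ^ k ∧
      Phi L x - C * k * τ ^ 2 ≤ Phi L₀ x₀ := by
    intro τ hτ hτ1 k
    have haτ : 0 < 1 - a * τ := by nlinarith
    induction k with
    | zero => exact ⟨L₀, x₀, by simpa using hL₀, hx₀, by simp, by simp⟩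
    | succ k ih =>
      obtain ⟨L₁, x, hL₁, hx, hxk, hle⟩ := ih
      have htk : t₀ ≤ t₀ + k * τ := by
        have : 0 ≤ (k:ℝ) * τ := by positivity
        linarith
      have hpow : (1 - a * τ) ^ k ≤ 1 := pow_le_one₀ haτ.le (by nlinarith)
      have hxx : x ≤ x₀ := hxk.trans (by nlinarith)
      obtain ⟨L, P, hL, hP, hP0, hPre, hLe⟩ := hc.step_data htk hτ hL₁
      have htk' : t₀ ≤ t₀ + k * τ + τ := by linarith
      have hre := hL.re_le (hc.univ _ htk') hM (hc.bound _ htk')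
      have h1 := hstep L P L₁ τ x hτ hτ1 hx hxx hL.diff hL.zero hre hP hP0 hPre hL₁.diff hLe
      have hq : a ≤ (1 - x) / (1 + x) := by
        rw [ha, div_le_div_iff₀ (by linarith) (by linarith)]; nlinarith
      have hq1 : (1 - x) / (1 + x) < 1 := by rw [div_lt_one (by linarith)]; linarith
      have hcast : t₀ + ((k + 1 : ℕ) : ℝ) * τ = t₀ + k * τ + τ := by push_cast; ring
      refine ⟨L, x * (1 - τ * ((1 - x) / (1 + x))), by rw [hcast]; exact hL, ?_, ?_, ?_⟩
      · refine mul_pos hx ?_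
        nlinarith
      · calc x * (1 - τ * ((1 - x) / (1 + x))) ≤ x * (1 - a * τ) := by
              refine mul_le_mul_of_nonneg_left ?_ hx.le
              nlinarith
          _ ≤ x₀ * (1 - a * τ) ^ k * (1 - a * τ) := by gcongr
          _ = _ := by ring
      · push_cast
        nlinarith
  -- with `τ = n⁻²` and `n³` steps both error terms tend to zero
  have hbound : ∀ᶠ n : ℕ in atTop, - (K * Real.exp (-(a * n))) - C * (n:ℝ)⁻¹ ≤ Phi L₀ x₀ := by
    have hlim : Tendsto (fun n : ℕ => Real.exp (-(a * n))) atTop (𝓝 0) :=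
      Real.tendsto_exp_neg_atTop_nhds_zero.comp
        (Tendsto.const_mul_atTop ha0 tendsto_natCast_atTop_atTop)
    filter_upwards [eventually_gt_atTop 0, hlim.eventually_le_const (by norm_num : (0:ℝ) < 1/4)]
      with n hn hn4
    have hn' : (0:ℝ) < n := by exact_mod_cast hn
    have hn1 : (1:ℝ) ≤ n := by exact_mod_cast hn
    have hτ1 : ((n:ℝ) ^ 2)⁻¹ ≤ 1 := inv_le_one_of_one_le₀ (one_le_pow₀ hn1)
    obtain ⟨L, x, hL, hx, hxk, hle⟩ := hiter ((n:ℝ) ^ 2)⁻¹ (by positivity) hτ1 (n ^ 3)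
    have hxe : x ≤ Real.exp (-(a * n)) := by
      have h1 : 1 - a * ((n:ℝ) ^ 2)⁻¹ ≤ Real.exp (-(a * ((n:ℝ) ^ 2)⁻¹)) := by
        linarith [Real.add_one_le_exp (-(a * ((n:ℝ) ^ 2)⁻¹))]
      have h0 : 0 ≤ 1 - a * ((n:ℝ) ^ 2)⁻¹ := by
        have : a * ((n:ℝ) ^ 2)⁻¹ ≤ 1 * 1 := by gcongr
        linarith
      calc x ≤ x₀ * (1 - a * ((n:ℝ) ^ 2)⁻¹) ^ (n ^ 3) := hxk
        _ ≤ 1 * Real.exp (-(a * ((n:ℝ) ^ 2)⁻¹)) ^ (n ^ 3) := by gcongr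
        _ = Real.exp (-(a * n)) := by
          rw [one_mul, ← Real.exp_nat_mul]
          congr 1
          push_cast
          field_simp
    have htk : t₀ ≤ t₀ + ((n ^ 3 : ℕ) : ℝ) * ((n:ℝ) ^ 2)⁻¹ := by
      have : 0 ≤ ((n ^ 3 : ℕ) : ℝ) * ((n:ℝ) ^ 2)⁻¹ := by positivity
      linarith
    have h2 := hphi L hL.diff hL.zero (hL.re_le (hc.univ _ htk) hM (hc.bound _ htk)) x hx
      (hxe.trans hn4)
    have h3 : C * ((n ^ 3 : ℕ) : ℝ) * (((n:ℝ) ^ 2)⁻¹) ^ 2 = C * (n:ℝ)⁻¹ := by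
      push_cast; field_simp
    rw [h3] at hle
    have : K * x ≤ K * Real.exp (-(a * n)) := by gcongr
    linarith
  have hlim : Tendsto (fun n : ℕ => - (K * Real.exp (-(a * n))) - C * (n:ℝ)⁻¹) atTop
      (𝓝 (-(K * 0) - C * 0)) :=
    ((Real.tendsto_exp_neg_atTop_nhds_zero.comp
        (Tendsto.const_mul_atTop ha0 tendsto_natCast_atTop_atTop)).const_mul K).neg.sub
      (tendsto_inv_atTop_nhds_zero_nat.const_mul C)
  have := le_of_tendsto hlim hbound
  simpa using this

lemma dir_dilate {g : ℂ → ℂ} (hg : DifferentiableOn ℂ g (ball 0 1)) {r : ℝ} (hr0 : 0 < r)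
    (hr : r < 1) (x : ℝ) : Dir (fun z => g (r * z)) x = Dir g (r ^ 2 * x) := by
  have hm : ∀ z ∈ ball (0:ℂ) 1, (r:ℂ) * z ∈ ball (0:ℂ) 1 := by
    intro z hz
    rw [mem_ball_zero_iff] at hz ⊢
    rw [norm_mul, Complex.norm_real, Real.norm_of_nonneg hr0.le]
    nlinarith [norm_nonneg z]
  have hd : DifferentiableOn ℂ (fun z => g (r * z)) (ball 0 1) :=
    hg.comp (differentiableOn_id.const_mul _) hm
  have hcf : cf (fun z => g (r * z)) = fun n => cf g n * (r:ℂ) ^ n := by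
    refine (ser_cf hd).unique fun z hz => ?_
    refine (ser_cf hg _ (hm z hz)).congr_fun fun n => ?_
    rw [mul_pow]; ring
  unfold Dir
  congr 1
  funext n
  rw [hcf]
  simp only [norm_mul, norm_pow, Complex.norm_real, Real.norm_of_nonneg hr0.le]
  ring

/-- The bound `∑ n |γ n|² x ^ n ≤ - log (1 - x)`, where `cf g n = 2 γ n`. -/
theorem dir_bound {f g : ℂ → ℂ} (hf : Univalent f) (hf1 : deriv f 0 = 1)
    (hg : DifferentiableOn ℂ g (ball 0 1)) (hg0 : g 0 = 0)
    (hgf : ∀ z ∈ ball (0:ℂ) 1, z * Complex.exp (g z) = f z) {x : ℝ} (hx : 0 < x) (hx1 : x < 1) :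
    Dir g x / 4 ≤ -Real.log (1 - x) := by
  have key : ∀ r : ℝ, 0 < r → r < 1 → ∀ y, 0 < y → y < 1 →
      Dir g (r ^ 2 * y) / 4 ≤ -Real.log (1 - y) := by
    intro r hr0 hr y hy hy1
    obtain ⟨h, M, hM, hc, hh⟩ := exists_chain hf hf1 hr0 hr
    have hm : ∀ z ∈ ball (0:ℂ) 1, (r:ℂ) * z ∈ ball (0:ℂ) 1 := by
      intro z hz
      rw [mem_ball_zero_iff] at hz ⊢
      rw [norm_mul, Complex.norm_real, Real.norm_of_nonneg hr0.le]
      nlinarith [norm_nonneg z]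
    have hL : IsLog (h (Real.log r)) (fun z => g (r * z)) (Real.log r) := by
      refine ⟨hg.comp (differentiableOn_id.const_mul _) hm, by simpa using hg0, fun z hz => ?_⟩
      rw [hh z hz, Real.exp_log hr0, hgf _ (hm z hz)]
    have := hc.phi_nonneg hM hL hy hy1
    unfold Phi at this
    rw [dir_dilate hg hr0 hr] at this
    linarith
  -- choose `y > x` and `r ^ 2 = x / y`, and let `y` decrease to `x`
  have h1 : Tendsto (fun y => -Real.log (1 - y)) (𝓝[>] x) (𝓝 (-Real.log (1 - x))) := by
    refine Tendsto.mono_left ?_ nhdsWithin_le_nhds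
    have : ContinuousAt (fun y => -Real.log (1 - y)) x := by
      refine ContinuousAt.neg (ContinuousAt.log (by fun_prop) (by linarith))
    exact this
  refine ge_of_tendsto h1 ?_
  filter_upwards [Ioo_mem_nhdsGT hx1] with y hy
  have hy0 : 0 < y := hx.trans hy.1
  have hxy : x / y < 1 := (div_lt_one hy0).2 hy.1
  have := key (√(x / y)) (Real.sqrt_pos.2 (by positivity))
    (by rw [Real.sqrt_lt' one_pos]; simpa using hxy) y hy0 hy.2
  rwa [Real.sq_sqrt (by positivity), div_mul_cancel₀ _ hy0.ne'] at this

/-! ### Integration against the weight `t ^ 2 e ^ {-t} / 2` -/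

open MeasureTheory in
lemma lintegral_weight (n : ℕ) :
    ∫⁻ t in Ioi (0:ℝ), ENNReal.ofReal (Real.exp (-t) * t ^ 2 / 2 * Real.exp (-t) ^ (n + 1)) =
      ENNReal.ofReal (1 / ((n:ℝ) + 2) ^ 3) := by
  have hn : (0:ℝ) < n + 2 := by positivity
  have h1 := Real.integral_rpow_mul_exp_neg_mul_Ioi (a := 3) (by norm_num) hn
  have hG : Real.Gamma 3 = 2 := by
    simp
  have h2 : ∀ t : ℝ, Real.exp (-t) * t ^ 2 / 2 * Real.exp (-t) ^ (n + 1) =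
      2⁻¹ * (t ^ ((3:ℝ) - 1) * Real.exp (-((n + 2) * t))) := by
    intro t
    rw [← Real.exp_nat_mul, show (3:ℝ) - 1 = ((2:ℕ):ℝ) by norm_num, Real.rpow_natCast,
      show -(((n:ℝ) + 2) * t) = -t + ((n + 1 : ℕ) : ℝ) * -t by push_cast; ring, Real.exp_add]
    ring
  have h3 : ∫ t in Ioi (0:ℝ), Real.exp (-t) * t ^ 2 / 2 * Real.exp (-t) ^ (n + 1) =
      1 / ((n:ℝ) + 2) ^ 3 := by
    simp only [h2]
    rw [integral_const_mul, h1, hG, show (3:ℝ) = ((3:ℕ):ℝ) by norm_num, Real.rpow_natCast]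
    field_simp
  have h4 : Integrable (fun t : ℝ => Real.exp (-t) * t ^ 2 / 2 * Real.exp (-t) ^ (n + 1))
      (volume.restrict (Ioi 0)) := by
    apply Integrable.of_integral_ne_zero
    rw [h3]; positivity
  rw [← ofReal_integral_eq_lintegral_ofReal h4 (Eventually.of_forall fun t => by positivity), h3]

/-- The power series `∑ d n x ^ (n + 1)` at `x = e ^ {-t}`, with the weight. -/
noncomputable def wsum (d : ℕ → ℝ) (t : ℝ) : ENNReal :=
  ∑' n : ℕ, ENNReal.ofReal (Real.exp (-t) * t ^ 2 / 2 * Real.exp (-t) ^ (n + 1) * d n)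

lemma measurable_wsum (d : ℕ → ℝ) : Measurable (wsum d) := by
  unfold wsum
  refine Measurable.tsum fun n => ?_
  fun_prop

open MeasureTheory in
lemma lintegral_wsum (d : ℕ → ℝ) :
    ∫⁻ t in Ioi (0:ℝ), wsum d t = ∑' n : ℕ, ENNReal.ofReal (d n / ((n:ℝ) + 2) ^ 3) := by
  unfold wsum
  rw [lintegral_tsum (fun n => by fun_prop)]
  congr 1
  funext n
  have h1 : ∀ t : ℝ, ENNReal.ofReal (Real.exp (-t) * t ^ 2 / 2 * Real.exp (-t) ^ (n + 1) * d n) =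
      ENNReal.ofReal (Real.exp (-t) * t ^ 2 / 2 * Real.exp (-t) ^ (n + 1)) * ENNReal.ofReal (d n) :=
    fun t => ENNReal.ofReal_mul (by positivity)
  simp only [h1]
  rw [lintegral_mul_const _ (by fun_prop), lintegral_weight, ← ENNReal.ofReal_mul (by positivity)]
  congr 1
  ring

lemma wsum_eq {d : ℕ → ℝ} (hd : ∀ n, 0 ≤ d n) {t : ℝ}
    (hs : Summable fun n => d n * Real.exp (-t) ^ (n + 1)) :
    wsum d t = ENNReal.ofReal
      (Real.exp (-t) * t ^ 2 / 2 * ∑' n, d n * Real.exp (-t) ^ (n + 1)) := by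
  unfold wsum
  rw [← tsum_mul_left, ENNReal.ofReal_tsum_of_nonneg]
  · congr 1; funext n; congr 1; ring
  · intro n; have := hd n; positivity
  · exact hs.mul_left _

lemma hasSum_const : HasSum (fun n : ℕ => (1 / ((n:ℝ) + 1)) / ((n:ℝ) + 2) ^ 3)
    ((18 - Real.pi ^ 2 - 6 * (riemannZeta 3).re) / 6) := by
  have hz2 : HasSum (fun n : ℕ => 1 / ((n:ℝ) + 2) ^ 2) (π ^ 2 / 6 - 1) := by
    have := (hasSum_nat_add_iff' 2).2 hasSum_zeta_two
    simpa [Finset.sum_range_succ] using this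
  have hz3 : HasSum (fun n : ℕ => 1 / ((n:ℝ) + 2) ^ 3) ((riemannZeta 3).re - 1) := by
    have h1 : HasSum (fun n : ℕ => 1 / (n:ℝ) ^ 3) (riemannZeta 3).re := by
      have h2 := zeta_nat_eq_tsum_of_gt_one (k := 3) (by norm_num)
      have h3 : Summable (fun n : ℕ => 1 / (n:ℝ) ^ 3) :=
        Real.summable_one_div_nat_pow.2 (by norm_num)
      have h4 : riemannZeta 3 = ((∑' n : ℕ, 1 / (n:ℝ) ^ 3 : ℝ) : ℂ) := by
        push_cast at h2 ⊢
        exact h2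
      rw [h4, Complex.ofReal_re]
      exact h3.hasSum
    have := (hasSum_nat_add_iff' 2).2 h1
    simpa [Finset.sum_range_succ] using this
  have ht : HasSum (fun n : ℕ => 1 / ((n:ℝ) + 1) - 1 / ((n:ℝ) + 2)) 1 := by
    have h1 : ∀ n : ℕ, 0 ≤ 1 / ((n:ℝ) + 1) - 1 / ((n:ℝ) + 2) := by
      intro n
      rw [sub_nonneg]
      exact one_div_le_one_div_of_le (by positivity) (by linarith)
    rw [hasSum_iff_tendsto_nat_of_nonneg h1]
    have h2 : ∀ N : ℕ, ∑ n ∈ Finset.range N, (1 / ((n:ℝ) + 1) - 1 / ((n:ℝ) + 2)) =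
        1 - 1 / ((N:ℝ) + 1) := by
      intro N
      have := Finset.sum_range_sub' (fun n : ℕ => 1 / ((n:ℝ) + 1)) N
      simp only [Nat.cast_zero, zero_add, div_one] at this
      rw [← this]
      refine Finset.sum_congr rfl fun n _ => ?_
      push_cast
      ring
    simp only [h2]
    have := (tendsto_one_div_add_atTop_nhds_zero_nat (𝕜 := ℝ)).const_sub 1
    simpa using this
  have h := (ht.sub hz2).sub hz3
  rw [show (18 - Real.pi ^ 2 - 6 * (riemannZeta 3).re) / 6 =
    1 - (π ^ 2 / 6 - 1) - ((riemannZeta 3).re - 1) by ring]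
  refine h.congr_fun fun n => ?_
  have h1 : (n:ℝ) + 1 ≠ 0 := by positivity
  have h2 : (n:ℝ) + 2 ≠ 0 := by positivity
  field_simp
  ring

open MeasureTheory in
/-- Integrating `∑ c n x ^ (n + 1) ≤ - log (1 - x)` over `x = e ^ {-t}`. In the case of equality
the two sides agree for almost every `x`, which forces the first coefficients to agree. -/
theorem weighted_bound {c : ℕ → ℝ} (hc : ∀ n, 0 ≤ c n)
    (hs : ∀ x, 0 < x → x < 1 → Summable fun n => c n * x ^ (n + 1))
    (hle : ∀ x, 0 < x → x < 1 → ∑' n, c n * x ^ (n + 1) ≤ -Real.log (1 - x)) :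
    (∑' n : ℕ, c n / ((n:ℝ) + 2) ^ 3 ≤ (18 - Real.pi ^ 2 - 6 * (riemannZeta 3).re) / 6) ∧
    (∑' n : ℕ, c n / ((n:ℝ) + 2) ^ 3 = (18 - Real.pi ^ 2 - 6 * (riemannZeta 3).re) / 6 →
      1 ≤ c 0) := by
  set e : ℕ → ℝ := fun n => 1 / ((n:ℝ) + 1) with he
  have he0 : ∀ n, 0 ≤ e n := fun n => by simp only [he]; positivity
  have hlog : ∀ x : ℝ, 0 < x → x < 1 → HasSum (fun n => e n * x ^ (n + 1)) (-Real.log (1 - x)) := by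
    intro x hx hx1
    refine (Real.hasSum_pow_div_log_of_abs_lt_one (by rwa [abs_of_pos hx])).congr_fun fun n => ?_
    simp only [he]; ring
  have hexp : ∀ t ∈ Ioi (0:ℝ), 0 < Real.exp (-t) ∧ Real.exp (-t) < 1 := fun t ht =>
    ⟨Real.exp_pos _, by rw [Real.exp_lt_one_iff]; simpa using ht⟩
  have hwle : ∀ t ∈ Ioi (0:ℝ), wsum c t ≤ wsum e t := by
    intro t ht
    obtain ⟨h0, h1⟩ := hexp t ht
    rw [wsum_eq hc (hs _ h0 h1), wsum_eq he0 (hlog _ h0 h1).summable, (hlog _ h0 h1).tsum_eq]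
    have := hle _ h0 h1
    gcongr
  have hconst := hasSum_const
  set κ := (18 - Real.pi ^ 2 - 6 * (riemannZeta 3).re) / 6 with hκ
  have hκ0 : 0 ≤ κ := hconst.nonneg fun n => by positivity
  have hI : ∫⁻ t in Ioi (0:ℝ), wsum e t = ENNReal.ofReal κ := by
    rw [lintegral_wsum e, ← ENNReal.ofReal_tsum_of_nonneg (fun n => by positivity)
      hconst.summable, hconst.tsum_eq]
  have hIle : ∑' n : ℕ, ENNReal.ofReal (c n / ((n:ℝ) + 2) ^ 3) ≤ ENNReal.ofReal κ := by
    rw [← hI, ← lintegral_wsum c]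
    exact setLIntegral_mono (measurable_wsum e) hwle
  have hpos : ∀ n : ℕ, 0 ≤ c n / ((n:ℝ) + 2) ^ 3 := fun n => by have := hc n; positivity
  have hsum : Summable fun n : ℕ => c n / ((n:ℝ) + 2) ^ 3 := by
    have h1 : ∑' n : ℕ, ENNReal.ofReal (c n / ((n:ℝ) + 2) ^ 3) ≠ ⊤ :=
      (hIle.trans_lt ENNReal.ofReal_lt_top).ne
    have := ENNReal.summable_toReal h1
    simpa only [ENNReal.toReal_ofReal (hpos _)] using this
  have hIc : ∫⁻ t in Ioi (0:ℝ), wsum c t = ENNReal.ofReal (∑' n : ℕ, c n / ((n:ℝ) + 2) ^ 3) := by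
    rw [lintegral_wsum c, ENNReal.ofReal_tsum_of_nonneg hpos hsum]
  refine ⟨?_, fun heq => ?_⟩
  · rw [← ENNReal.ofReal_le_ofReal_iff hκ0, ENNReal.ofReal_tsum_of_nonneg hpos hsum]
    exact hIle
  have hae : ∀ᵐ t ∂(volume.restrict (Ioi (0:ℝ))), wsum c t = wsum e t := by
    have h1 : wsum c ≤ᵐ[volume.restrict (Ioi (0:ℝ))] wsum e :=
      (ae_restrict_iff' measurableSet_Ioi).2 (Eventually.of_forall hwle)
    refine ae_eq_of_ae_le_of_lintegral_le h1 ?_ (measurable_wsum e).aemeasurable ?_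
    · rw [hIc]; exact ENNReal.ofReal_ne_top
    · rw [hI, hIc, heq]
  set A := ∑' n, c n * (1 / 2 : ℝ) ^ (n + 1) with hA
  have hs2 := hs (1 / 2) (by norm_num) (by norm_num)
  have hA0 : 0 ≤ A := tsum_nonneg fun n => by have := hc n; positivity
  have hsmall : ∀ x : ℝ, 0 < x → x ≤ 1 / 2 →
      ∑' n, c n * x ^ (n + 1) ≤ c 0 * x + 4 * x ^ 2 * A := by
    intro x hx hx2
    have h1 := hs x hx (by linarith)
    rw [h1.tsum_eq_zero_add]
    have h2 : ∑' n, c (n + 1) * x ^ (n + 1 + 1) ≤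
        ∑' n, 4 * x ^ 2 * (c (n + 1) * (1 / 2 : ℝ) ^ (n + 1 + 1)) := by
      refine Summable.tsum_le_tsum (fun n => ?_) ((summable_nat_add_iff 1).2 h1)
        (((summable_nat_add_iff 1).2 hs2).mul_left _)
      have h3 : x ^ n ≤ (1 / 2) ^ n := by gcongr
      have := hc (n + 1)
      calc c (n + 1) * x ^ (n + 1 + 1) = c (n + 1) * x ^ 2 * x ^ n := by ring
        _ ≤ c (n + 1) * x ^ 2 * (1 / 2) ^ n := by gcongr
        _ = _ := by ring
    rw [tsum_mul_left] at h2
    have h4 : ∑' n, c (n + 1) * (1 / 2 : ℝ) ^ (n + 1 + 1) ≤ A := by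
      rw [hA, hs2.tsum_eq_zero_add]
      have : 0 ≤ c 0 * (1 / 2 : ℝ) ^ (0 + 1) := by have := hc 0; positivity
      linarith
    have h5 : 4 * x ^ 2 * ∑' n, c (n + 1) * (1 / 2 : ℝ) ^ (n + 1 + 1) ≤ 4 * x ^ 2 * A := by gcongr
    simp only [zero_add, pow_one]
    linarith
  -- equality occurs for arbitrarily small `x`
  have hfreq : ∀ δ : ℝ, 0 < δ → ∃ x, 0 < x ∧ x < δ ∧ x ≤ 1 / 2 ∧ 1 ≤ c 0 + 4 * x * A := by
    intro δ hδ
    have hae' : ∀ᵐ t ∂(volume.restrict (Ioi (max 1 (-Real.log δ)))), wsum c t = wsum e t :=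
      ae_restrict_of_ae_restrict_of_subset
        (Ioi_subset_Ioi (zero_le_one.trans (le_max_left _ _))) hae
    have hne : (volume.restrict (Ioi (max 1 (-Real.log δ)))) ≠ 0 := by
      rw [Ne, Measure.restrict_eq_zero]; simp
    have : NeBot (ae (volume.restrict (Ioi (max 1 (-Real.log δ))))) := ae_neBot.2 hne
    obtain ⟨t, ht, htm⟩ := (hae'.and (ae_restrict_mem measurableSet_Ioi)).exists
    have ht1 : 1 < t := (le_max_left _ _).trans_lt htm
    have ht2 : -Real.log δ < t := (le_max_right _ _).trans_lt htm
    obtain ⟨h0, h1⟩ := hexp t (by simp only [mem_Ioi]; linarith)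
    have hx2 : Real.exp (-t) ≤ 1 / 2 := by
      rw [Real.exp_neg, one_div]
      have := Real.add_one_le_exp t
      gcongr
      linarith
    refine ⟨Real.exp (-t), h0, ?_, hx2, ?_⟩
    · rw [← Real.exp_log hδ]
      exact Real.exp_lt_exp.2 (by linarith)
    · rw [wsum_eq hc (hs _ h0 h1), wsum_eq he0 (hlog _ h0 h1).summable, (hlog _ h0 h1).tsum_eq,
        ENNReal.ofReal_eq_ofReal_iff] at ht
      · have h2 := mul_left_cancel₀ (by positivity) ht
        have h3 := hsmall _ h0 hx2
        have h4 : Real.exp (-t) ≤ -Real.log (1 - Real.exp (-t)) := by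
          linarith [Real.log_le_sub_one_of_pos (x := 1 - Real.exp (-t)) (by linarith)]
        rw [h2] at h3
        set x := Real.exp (-t)
        have h5 : x * 1 ≤ x * (c 0 + 4 * x * A) := by linarith
        exact le_of_mul_le_mul_left h5 h0
      · have : 0 ≤ ∑' n, c n * Real.exp (-t) ^ (n + 1) :=
          tsum_nonneg fun n => by have := hc n; positivity
        positivity
      · have : 0 ≤ -Real.log (1 - Real.exp (-t)) := by
          linarith [Real.log_le_sub_one_of_pos (x := 1 - Real.exp (-t)) (by linarith)]
        positivity
  refine le_of_forall_pos_le_add fun ε hε => ?_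
  obtain ⟨x, hx0, hxδ, -, hx⟩ := hfreq (ε / (4 * (A + 1))) (by positivity)
  rw [lt_div_iff₀ (by positivity)] at hxδ
  nlinarith

/-! ### A weighted area inequality -/

open MeasureTheory in
lemma lintegral_polar {H : ℂ → ENNReal} (hH : Measurable H) :
    ∫⁻ z, H z = ∫⁻ s in Ioi (0:ℝ), ENNReal.ofReal s * ∫⁻ θ in Ioo (-π) π, H (circleMap 0 s θ) := by
  rw [← Complex.lintegral_comp_polarCoord_symm]
  have h1 : ∀ p : ℝ × ℝ, Complex.polarCoord.symm p = circleMap 0 p.1 p.2 := by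
    intro p
    rw [Complex.polarCoord_symm_apply, circleMap, zero_add, Complex.exp_mul_I]
    push_cast; rfl
  simp only [h1, smul_eq_mul]
  have hc : Measurable fun p : ℝ × ℝ => circleMap 0 p.1 p.2 := by
    unfold circleMap; fun_prop
  have hm : Measurable fun p : ℝ × ℝ => ENNReal.ofReal p.1 * H (circleMap 0 p.1 p.2) :=
    (ENNReal.measurable_ofReal.comp measurable_fst).mul (hH.comp hc)
  rw [show polarCoord.target = Ioi (0:ℝ) ×ˢ Ioo (-π) π from rfl, Measure.volume_eq_prod,
    ← Measure.prod_restrict, lintegral_prod _ hm.aemeasurable]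
  refine lintegral_congr fun s => ?_
  exact lintegral_const_mul' _ _ ENNReal.ofReal_ne_top

open MeasureTheory in
lemma lintegral_circle {u : ℂ → ℂ} (hu : ContinuousOn u (ball 0 1)) {s : ℝ} (hs0 : 0 ≤ s)
    (hs : s < 1) : ∫⁻ θ in Ioo (-π) π, ENNReal.ofReal (‖u (circleMap 0 s θ)‖ ^ 2) =
      ENNReal.ofReal (2 * π * circleAverage (fun z => ‖u z‖ ^ 2) 0 s) := by
  have hcont : Continuous fun θ => ‖u (circleMap 0 s θ)‖ ^ 2 :=
    ((hu.comp_continuous (continuous_circleMap 0 s)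
      fun θ => sphere_sub hs (circleMap_mem_sphere 0 hs0 θ)).norm).pow 2
  have hIntegral : ∫ θ in Ioo (-π) π, ‖u (circleMap 0 s θ)‖ ^ 2 =
      2 * π * circleAverage (fun z => ‖u z‖ ^ 2) 0 s := by
    rw [circleAverage_eq_integral_add (-π),
      intervalIntegral.integral_comp_add_right (fun θ => ‖u (circleMap 0 s θ)‖ ^ 2), smul_eq_mul,
      mul_inv_cancel_left₀ (by positivity), zero_add, show 2 * π + -π = π by ring,
      intervalIntegral.integral_of_le (by linarith [Real.pi_pos]), integral_Ioc_eq_integral_Ioo]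
  rw [← hIntegral, ofReal_integral_eq_lintegral_ofReal]
  · exact (hcont.integrableOn_Icc (a := -π) (b := π)).mono_set Ioo_subset_Icc_self
  · exact Eventually.of_forall fun θ => by positivity

open MeasureTheory in
lemma lintegral_outside {m β : ℝ} (hm : 0 < m) (hβ : 0 < β) :
    ∫⁻ w in {w : ℂ | m < ‖w‖}, ENNReal.ofReal (‖w‖ ^ (-2 * β - 2)) =
      ENNReal.ofReal (2 * π * (m ^ (-2 * β) / (2 * β))) := by
  have hS : MeasurableSet {w : ℂ | m < ‖w‖} := measurableSet_lt measurable_const measurable_norm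
  rw [← lintegral_indicator hS, lintegral_polar (by
    refine Measurable.indicator ?_ hS
    fun_prop)]
  have h1 : ∀ s ∈ Ioi (0:ℝ), ENNReal.ofReal s * ∫⁻ θ in Ioo (-π) π,
      ({w : ℂ | m < ‖w‖}.indicator fun w => ENNReal.ofReal (‖w‖ ^ (-2 * β - 2))) (circleMap 0 s θ) =
      (Ioi m).indicator (fun s => ENNReal.ofReal (2 * π * s ^ (-2 * β - 1))) s := by
    intro s hs
    have hs' : (0:ℝ) < s := hs
    by_cases hms : m < s
    · have h2 : ∀ θ : ℝ, ({w : ℂ | m < ‖w‖}.indicator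
          fun w => ENNReal.ofReal (‖w‖ ^ (-2 * β - 2))) (circleMap 0 s θ) =
          ENNReal.ofReal (s ^ (-2 * β - 2)) := by
        intro θ
        rw [indicator_of_mem (by simpa [abs_of_pos hs'] using hms)]
        simp [abs_of_pos hs']
      simp only [h2]
      rw [indicator_of_mem (by exact hms), setLIntegral_const, Real.volume_Ioo,
        ← ENNReal.ofReal_mul (by positivity), ← ENNReal.ofReal_mul hs'.le]
      congr 1
      rw [show -2 * β - 1 = 1 + (-2 * β - 2) by ring, Real.rpow_add hs', Real.rpow_one]
      ring
    · have h2 : ∀ θ : ℝ, ({w : ℂ | m < ‖w‖}.indicator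
          fun w => ENNReal.ofReal (‖w‖ ^ (-2 * β - 2))) (circleMap 0 s θ) = 0 := by
        intro θ
        rw [indicator_of_notMem (by simpa [abs_of_pos hs'] using hms)]
      simp only [h2]
      rw [indicator_of_notMem (by exact hms)]
      simp
  rw [setLIntegral_congr_fun measurableSet_Ioi h1, lintegral_indicator measurableSet_Ioi,
    Measure.restrict_restrict measurableSet_Ioi, Ioi_inter_Ioi, sup_of_le_left hm.le]
  have h3 : ∫ s in Ioi m, 2 * π * s ^ (-2 * β - 1) = 2 * π * (m ^ (-2 * β) / (2 * β)) := by
    rw [integral_const_mul, integral_Ioi_rpow_of_lt (by linarith) hm]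
    congr 1
    rw [show -2 * β - 1 + 1 = -2 * β by ring]
    field_simp
  rw [← h3, ofReal_integral_eq_lintegral_ofReal]
  · exact ((integrableOn_Ioi_rpow_iff hm).2 (by linarith)).const_mul _
  · refine (ae_restrict_iff' measurableSet_Ioi).2 (Eventually.of_forall fun s hs => ?_)
    have : 0 < s := hm.trans hs
    positivity

open MeasureTheory in
lemma lintegral_annulus {u : ℂ → ℂ} {a : ℕ → ℂ} (hu : Ser u a) (huc : ContinuousOn u (ball 0 1))
    {ε ρ β : ℝ} (hε : 0 < ε) (hερ : ε ≤ ρ) (hρ : ρ < 1) (N : ℕ) :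
    ENNReal.ofReal (∫ s in ε..ρ, 2 * π * ∑ k ∈ Finset.range N,
      ‖a k‖ ^ 2 * s ^ (2 * (k:ℝ) - 2 * β - 1)) ≤
    ∫⁻ z in {z : ℂ | ε < ‖z‖ ∧ ‖z‖ < ρ}, ENNReal.ofReal (‖z‖ ^ (-2 * β - 2) * ‖u z‖ ^ 2) := by
  classical
  set S : Set ℂ := {z : ℂ | ε < ‖z‖ ∧ ‖z‖ < ρ} with hSdef
  have hS : MeasurableSet S := (measurableSet_lt measurable_const measurable_norm).inter
    (measurableSet_lt measurable_norm measurable_const)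
  have hmeas : Measurable
      (S.indicator fun z => ENNReal.ofReal (‖z‖ ^ (-2 * β - 2) * ‖u z‖ ^ 2)) := by
    rw [← Set.piecewise_eq_indicator]
    refine ContinuousOn.measurable_piecewise ?_ continuousOn_const hS
    refine ENNReal.continuous_ofReal.comp_continuousOn (ContinuousOn.mul ?_ ?_)
    · refine ContinuousOn.rpow_const continuous_norm.continuousOn fun z hz => Or.inl ?_
      exact (hε.trans hz.1).ne'
    · refine (huc.mono fun z hz => ?_).norm.pow 2
      rw [mem_ball_zero_iff]; exact hz.2.trans hρ
  rw [← lintegral_indicator hS, lintegral_polar hmeas]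
  have hpt : ∀ s ∈ Ioo ε ρ, ENNReal.ofReal (2 * π * ∑ k ∈ Finset.range N,
      ‖a k‖ ^ 2 * s ^ (2 * (k:ℝ) - 2 * β - 1)) ≤ ENNReal.ofReal s * ∫⁻ θ in Ioo (-π) π,
      (S.indicator fun z => ENNReal.ofReal (‖z‖ ^ (-2 * β - 2) * ‖u z‖ ^ 2)) (circleMap 0 s θ) := by
    intro s hs
    have hs0 : 0 < s := hε.trans hs.1
    have hs1 : s < 1 := hs.2.trans hρ
    have h2 : ∀ θ : ℝ, (S.indicator fun z =>
        ENNReal.ofReal (‖z‖ ^ (-2 * β - 2) * ‖u z‖ ^ 2)) (circleMap 0 s θ) =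
        ENNReal.ofReal (s ^ (-2 * β - 2)) * ENNReal.ofReal (‖u (circleMap 0 s θ)‖ ^ 2) := by
      intro θ
      have hn : ‖circleMap 0 s θ‖ = s := by simp [abs_of_pos hs0]
      rw [indicator_of_mem (by simp only [hSdef, mem_ofPred_eq, hn]; exact hs), hn,
        ENNReal.ofReal_mul (by positivity)]
    simp only [h2]
    rw [lintegral_const_mul' _ _ ENNReal.ofReal_ne_top, lintegral_circle huc hs0.le hs1,
      ← ENNReal.ofReal_mul (by positivity), ← ENNReal.ofReal_mul hs0.le]
    refine ENNReal.ofReal_le_ofReal ?_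
    have h3 := (parseval_sq hu huc hs0.le hs1)
    have h4 := h3.summable.sum_le_tsum (Finset.range N) (fun k _ => by positivity)
    rw [h3.tsum_eq] at h4
    have h5 : ∑ k ∈ Finset.range N, ‖a k‖ ^ 2 * s ^ (2 * (k:ℝ) - 2 * β - 1) =
        s * s ^ (-2 * β - 2) * ∑ k ∈ Finset.range N, ‖a k‖ ^ 2 * s ^ (2 * k) := by
      rw [Finset.mul_sum]
      refine Finset.sum_congr rfl fun k _ => ?_
      rw [show 2 * (k:ℝ) - 2 * β - 1 = ((2 * k : ℕ) : ℝ) + (1 + (-2 * β - 2)) by push_cast; ring,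
        Real.rpow_add hs0, Real.rpow_add hs0, Real.rpow_natCast, Real.rpow_one]
      ring
    rw [h5]
    calc _ = s * s ^ (-2 * β - 2) * (2 * π) *
          ∑ k ∈ Finset.range N, ‖a k‖ ^ 2 * s ^ (2 * k) := by ring
      _ ≤ s * s ^ (-2 * β - 2) * (2 * π) * circleAverage (fun z => ‖u z‖ ^ 2) 0 s := by gcongr
      _ = _ := by ring
  have hcont : ContinuousOn (fun s : ℝ => 2 * π * ∑ k ∈ Finset.range N,
      ‖a k‖ ^ 2 * s ^ (2 * (k:ℝ) - 2 * β - 1)) (Icc ε ρ) := by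
    refine continuousOn_const.mul (continuousOn_finsetSum _ fun k _ => continuousOn_const.mul ?_)
    refine ContinuousOn.rpow_const continuousOn_id fun s hs => Or.inl ?_
    exact (hε.trans_le hs.1).ne'
  rw [intervalIntegral.integral_of_le hερ, integral_Ioc_eq_integral_Ioo,
    ofReal_integral_eq_lintegral_ofReal]
  · refine (setLIntegral_mono' measurableSet_Ioo hpt).trans ?_
    exact lintegral_mono_set fun s hs => hε.trans hs.1
  · exact (hcont.integrableOn_Icc).mono_set Ioo_subset_Icc_self
  · refine (ae_restrict_iff' measurableSet_Ioo).2 (Eventually.of_forall fun s hs => ?_)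
    have : 0 < s := hε.trans hs.1
    positivity

/-- A univalent `f` maps the disc of radius `ε` onto a set containing the disc of radius `m`,
as soon as `m ≤ |f|` on the bounding circle. -/
lemma ball_subset_image_ball {f : ℂ → ℂ} (hf : Univalent f) {ε m : ℝ} (hε : 0 < ε) (hε1 : ε < 1)
    (hm0 : 0 < m) (hm : ∀ z ∈ sphere (0:ℂ) ε, m ≤ ‖f z‖) : ball 0 m ⊆ f '' ball 0 ε := by
  have hsub : ball (0:ℂ) ε ⊆ ball 0 1 := ball_subset_ball hε1.le
  have hopen : IsOpen (f '' ball 0 ε) :=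
    (injOn_inverse isOpen_ball (hf.diff.mono hsub) (hf.inj.mono hsub)).1
  have hclosed : IsClosed (f '' closedBall 0 ε) :=
    ((isCompact_closedBall (0:ℂ) ε).image_of_continuousOn
      (hf.diff.continuousOn.mono (closedBall_subset_unit hε1))).isClosed
  refine (convex_ball (0:ℂ) m).isPreconnected.subset_left_of_subset_union hopen
    hclosed.isOpen_compl ?_ ?_ ?_
  · exact disjoint_compl_right.mono_left (image_mono ball_subset_closedBall)
  · intro w hw
    by_cases h : w ∈ f '' closedBall 0 ε
    · left
      obtain ⟨z, hz, rfl⟩ := h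
      refine ⟨z, ?_, rfl⟩
      rw [mem_closedBall_zero_iff] at hz
      rw [mem_ball_zero_iff] at hw ⊢
      refine lt_of_le_of_ne hz fun h => ?_
      exact absurd (hm z (by simpa using h)) (not_le.2 hw)
    · exact Or.inr h
  · exact ⟨0, mem_ball_self hm0, 0, mem_ball_self hε, hf.zero⟩

open MeasureTheory in
lemma lintegral_image_univalent {f : ℂ → ℂ} (hf : Univalent f) {S : Set ℂ} (hS : MeasurableSet S)
    (hS1 : S ⊆ ball 0 1) (H : ℂ → ENNReal) :
    ∫⁻ w in f '' S, H w = ∫⁻ z in S, ENNReal.ofReal (‖deriv f z‖ ^ 2) * H (f z) := by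
  have hd : ∀ z ∈ S, HasFDerivWithinAt f
      ((ContinuousLinearMap.toSpanSingleton ℂ (deriv f z)).restrictScalars ℝ) S z := fun z hz =>
    ((hf.diff.differentiableAt (isOpen_ball.mem_nhds (hS1 hz))).hasDerivAt.hasFDerivAt.restrictScalars
      ℝ).hasFDerivWithinAt
  rw [lintegral_image_eq_lintegral_abs_det_fderiv_mul volume hS hd (hf.inj.mono hS1)]
  refine setLIntegral_congr_fun hS fun z _ => ?_
  congr 2
  have : ((ContinuousLinearMap.toSpanSingleton ℂ (deriv f z)).restrictScalars ℝ).det =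
      ‖deriv f z‖ ^ 2 := by
    simp [ContinuousLinearMap.det, LinearMap.det_restrictScalars,
      Algebra.norm_complex_eq, Complex.normSq_eq_norm_sq]
  rw [this, abs_of_nonneg (by positivity)]

/-! ### Equality in the coefficient bound -/

lemma differentiableOn_pow {g : ℂ → ℂ} (hg : DifferentiableOn ℂ g (ball 0 1)) (β : ℝ) :
    DifferentiableOn ℂ (fun z => Complex.exp (-β * g z)) (ball 0 1) :=
  (hg.const_mul _).cexp

open MeasureTheory in
/-- Comparison of the area of the annulus image under `f`, for the density `|w| ^ (-2β-2)`, with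
the area of the exterior of a disc. Here `exp (-β g) = (f(z) / z) ^ (-β)`. -/
lemma area_annulus {f g : ℂ → ℂ} (hf : Univalent f)
    (hg : DifferentiableOn ℂ g (ball 0 1)) (hg0 : g 0 = 0)
    (hgf : ∀ z ∈ ball (0:ℂ) 1, z * Complex.exp (g z) = f z) :
    ∃ C > 0, ∀ β ε ρ : ℝ, 0 < β → β < 1 / 2 → 0 < ε → ε ≤ 1 / 2 → ε ≤ ρ → ρ < 1 → ∀ N : ℕ,
      ∑ k ∈ Finset.range N, (k - β) * ‖cf (fun z => Complex.exp (-β * g z)) k‖ ^ 2 *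
        (ρ ^ (2 * (k:ℝ) - 2 * β) - ε ^ (2 * (k:ℝ) - 2 * β)) ≤
      β * (ε ^ (-2 * β) * Real.exp (2 * β * (C * ε))) := by
  -- `|g z| ≤ C₀ |z|` on the disc of radius `1/2`
  obtain ⟨C₀, hC₀, hgC⟩ : ∃ C₀ > 0, ∀ z ∈ closedBall (0:ℂ) (1 / 2), ‖g z‖ ≤ C₀ * ‖z‖ := by
    have hds : DifferentiableOn ℂ (dslope g 0) (ball 0 1) :=
      (Complex.differentiableOn_dslope (ball_mem_nhds _ one_pos)).2 hg
    obtain ⟨B, hB⟩ := (isCompact_closedBall (0:ℂ) (1 / 2)).exists_bound_of_continuousOn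
      (hds.continuousOn.mono (closedBall_subset_unit (by norm_num)))
    refine ⟨|B| + 1, by positivity, fun z hz => ?_⟩
    have h1 : g z = z * dslope g 0 z := by
      have := sub_smul_dslope g 0 z
      simpa [hg0] using this.symm
    rw [h1, norm_mul, mul_comm]
    have := hB z hz
    gcongr
    linarith [le_abs_self B]
  refine ⟨C₀ + 1, by positivity, fun β ε ρ hβ hβ2 hε hε2 hερ hρ N => ?_⟩
  set E : ℂ → ℂ := fun z => Complex.exp (-β * g z) with hE
  have hEd : DifferentiableOn ℂ E (ball 0 1) := differentiableOn_pow hg β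
  set m : ℝ := ε * Real.exp (-((C₀ + 1) * ε)) with hm
  have hm0 : 0 < m := by positivity
  have hβc : (β:ℂ) ≠ 0 := by exact_mod_cast hβ.ne'
  set S : Set ℂ := {z : ℂ | ε < ‖z‖ ∧ ‖z‖ < ρ} with hSdef
  have hS : MeasurableSet S := (measurableSet_lt measurable_const measurable_norm).inter
    (measurableSet_lt measurable_norm measurable_const)
  have hS1 : S ⊆ ball 0 1 := fun z hz => by rw [mem_ball_zero_iff]; exact hz.2.trans hρ
  have hout : f '' S ⊆ {w : ℂ | m < ‖w‖} := by
    have hcov := ball_subset_image_ball hf (m := ε * Real.exp (-(C₀ * ε))) hε (by linarith)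
      (by positivity) (fun z hz => by
        have hz' : ‖z‖ = ε := by simpa using hz
        have hz1 : z ∈ ball (0:ℂ) 1 := by rw [mem_ball_zero_iff]; linarith
        rw [← hgf z hz1, norm_mul, Complex.norm_exp, hz']
        have h1 := hgC z (by rw [mem_closedBall_zero_iff]; linarith)
        rw [hz'] at h1
        have h2 := (abs_le.1 (Complex.abs_re_le_norm (g z))).1
        gcongr
        linarith)
    rintro _ ⟨z, hz, rfl⟩
    have h1 : ¬ f z ∈ ball (0:ℂ) (ε * Real.exp (-(C₀ * ε))) := by
      intro h
      obtain ⟨w, hw, hwz⟩ := hcov h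
      rw [mem_ball_zero_iff] at hw
      have := hf.inj (by rw [mem_ball_zero_iff]; linarith) (hS1 hz) hwz
      rw [this] at hw
      exact absurd hz.1 (not_lt.2 hw.le)
    rw [mem_ball_zero_iff, not_lt] at h1
    refine lt_of_lt_of_le ?_ h1
    rw [hm]
    gcongr
    linarith
  set v : ℂ → ℂ := fun z => E z + (-(1 / β)) * (z * deriv E z) with hv
  have hvc : ContinuousOn v (ball 0 1) :=
    (hEd.add ((differentiableOn_id.mul (hEd.deriv isOpen_ball)).const_mul _)).continuousOn
  have hvs : Ser v (fun k => cf E k + (-(1 / β)) * (k * cf E k)) := by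
    refine (ser_cf hEd).add fun z hz => ?_
    refine ((ser_deriv hEd z hz).mul_left (-(1 / (β:ℂ)))).congr_fun fun n => ?_
    ring
  have hpt : ∀ z ∈ S, ENNReal.ofReal (‖deriv f z‖ ^ 2) * ENNReal.ofReal (‖f z‖ ^ (-2 * β - 2)) =
      ENNReal.ofReal (‖z‖ ^ (-2 * β - 2) * ‖v z‖ ^ 2) := by
    intro z hz
    have hz1 := hS1 hz
    have hnb : ball (0:ℂ) 1 ∈ 𝓝 z := isOpen_ball.mem_nhds hz1
    have hgd := (hg.differentiableAt hnb).hasDerivAt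
    have hfd : deriv f z = Complex.exp (g z) * (1 + z * deriv g z) := by
      have h1 : f =ᶠ[𝓝 z] fun z => z * Complex.exp (g z) := by
        filter_upwards [hnb] with w hw using (hgf w hw).symm
      rw [h1.deriv_eq, ((hasDerivAt_id' z).fun_mul hgd.cexp).deriv]
      ring
    have hEz : deriv E z = E z * (-β * deriv g z) := ((hgd.const_mul _).cexp).deriv
    have hvz : v z = E z * (1 + z * deriv g z) := by
      simp only [hv, hEz]
      field_simp
    have hnz : 0 < ‖z‖ := hε.trans hz.1
    rw [← ENNReal.ofReal_mul (by positivity)]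
    congr 1
    rw [hfd, hvz, ← hgf z hz1]
    simp only [hE, norm_mul, Complex.norm_exp]
    rw [Real.mul_rpow hnz.le (Real.exp_pos _).le, ← Real.exp_mul]
    have h3 : (-(β:ℂ) * g z).re = -β * (g z).re := by
      rw [← Complex.ofReal_neg, Complex.re_ofReal_mul]
    rw [h3, mul_pow, mul_pow, ← Real.exp_nat_mul, ← Real.exp_nat_mul]
    have h4 : Real.exp (((2:ℕ):ℝ) * (-β * (g z).re)) =
        Real.exp (((2:ℕ):ℝ) * (g z).re) * Real.exp ((g z).re * (-2 * β - 2)) := by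
      rw [← Real.exp_add]; congr 1; push_cast; ring
    rw [h4]; ring
  have hA := lintegral_annulus hvs hvc (β := β) hε hερ hρ N
  rw [← setLIntegral_congr_fun hS hpt,
    ← lintegral_image_univalent hf hS hS1 (fun w => ENNReal.ofReal (‖w‖ ^ (-2 * β - 2)))] at hA
  have hB := hA.trans (lintegral_mono_set hout)
  rw [lintegral_outside hm0 hβ, ENNReal.ofReal_le_ofReal_iff (by positivity),
    intervalIntegral.integral_const_mul, intervalIntegral.integral_finsetSum] at hB
  swap
  · intro k _
    refine ContinuousOn.intervalIntegrable ?_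
    refine continuousOn_const.mul (ContinuousOn.rpow_const continuousOn_id fun s hs => Or.inl ?_)
    rw [uIcc_of_le hερ] at hs
    exact (hε.trans_le hs.1).ne'
  have hB2 := le_of_mul_le_mul_left hB (by positivity)
  have hk0 : ∀ k : ℕ, (k:ℝ) - β ≠ 0 := by
    intro k h
    rcases Nat.eq_zero_or_pos k with rfl | hk
    · simp at h; linarith
    · have : (1:ℝ) ≤ k := by exact_mod_cast hk
      linarith
  have hterm : ∀ k : ℕ, (k - β) * ‖cf E k‖ ^ 2 *
      (ρ ^ (2 * (k:ℝ) - 2 * β) - ε ^ (2 * (k:ℝ) - 2 * β)) = 2 * β ^ 2 * ∫ s in ε..ρ,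
        ‖cf E k + (-(1 / β)) * (k * cf E k)‖ ^ 2 * s ^ (2 * (k:ℝ) - 2 * β - 1) := by
    intro k
    have hk := hk0 k
    rw [intervalIntegral.integral_const_mul, integral_rpow]
    · have h1 : ‖cf E k + (-(1 / (β:ℂ))) * (k * cf E k)‖ ^ 2 =
          ((k - β) / β) ^ 2 * ‖cf E k‖ ^ 2 := by
        have : cf E k + (-(1 / (β:ℂ))) * (k * cf E k) = -(((k - β) / β : ℝ) : ℂ) * cf E k := by
          push_cast; field_simp; ring
        rw [this, norm_mul, norm_neg, Complex.norm_real, mul_pow, Real.norm_eq_abs, sq_abs]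
      rw [h1, show 2 * (k:ℝ) - 2 * β - 1 + 1 = 2 * (k - β) by ring,
        show 2 * (k:ℝ) - 2 * β = 2 * (k - β) by ring]
      field_simp
    · right
      refine ⟨fun h => hk (by linarith), ?_⟩
      rw [uIcc_of_le hερ]
      exact fun h => absurd h.1 (not_le.2 hε)
  rw [Finset.sum_congr rfl fun k _ => hterm k, ← Finset.mul_sum]
  have hm2 : m ^ (-2 * β) = ε ^ (-2 * β) * Real.exp (2 * β * ((C₀ + 1) * ε)) := by
    rw [hm, Real.mul_rpow hε.le (Real.exp_pos _).le, ← Real.exp_mul]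
    congr 2; ring
  rw [← hm2]
  calc _ ≤ 2 * β ^ 2 * (m ^ (-2 * β) / (2 * β)) := by gcongr
    _ = _ := by field_simp

lemma cf_pow_zero {g : ℂ → ℂ} (hg0 : g 0 = 0) (β : ℝ) :
    cf (fun z => Complex.exp (-β * g z)) 0 = 1 := by
  simp [cf, hg0]

lemma cf_pow_one {g : ℂ → ℂ} (hg : DifferentiableOn ℂ g (ball 0 1)) (hg0 : g 0 = 0) (β : ℝ) :
    cf (fun z => Complex.exp (-β * g z)) 1 = -β * cf g 1 := by
  have hgd := (hg.differentiableAt (ball_mem_nhds _ one_pos)).hasDerivAt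
  have := ((hgd.const_mul (-(β:ℂ))).cexp).deriv
  simp only [cf, iteratedDeriv_one, this, hg0]
  simp

/-- Prawitz's area inequality for the coefficients of `(f z / z) ^ (-β)`. -/
lemma area_beta {f g : ℂ → ℂ} (hf : Univalent f)
    (hg : DifferentiableOn ℂ g (ball 0 1)) (hg0 : g 0 = 0)
    (hgf : ∀ z ∈ ball (0:ℂ) 1, z * Complex.exp (g z) = f z) {β : ℝ} (hβ : 0 < β) (hβ2 : β < 1 / 2)
    (n : ℕ) : ∑ k ∈ Finset.range n,
      ((k:ℝ) + 1 - β) * ‖cf (fun z => Complex.exp (-β * g z)) (k + 1)‖ ^ 2 ≤ β := by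
  obtain ⟨C, hC, hA⟩ := area_annulus hf hg hg0 hgf
  set e : ℕ → ℂ := cf (fun z => Complex.exp (-β * g z)) with he
  have he0 : e 0 = 1 := cf_pow_zero hg0 β
  have hpos : ∀ k : ℕ, 0 < 2 * ((k:ℝ) + 1) - 2 * β := fun k => by
    have : (0:ℝ) ≤ k := k.cast_nonneg
    linarith
  have h1 : ∀ ρ : ℝ, 0 < ρ → ρ < 1 → ∑ k ∈ Finset.range n,
      ((k:ℝ) + 1 - β) * ‖e (k + 1)‖ ^ 2 * ρ ^ (2 * ((k:ℝ) + 1) - 2 * β) ≤ β * ρ ^ (-2 * β) := by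
    intro ρ hρ0 hρ
    have hev : ∀ᶠ ε : ℝ in 𝓝[>] 0, ∑ k ∈ Finset.range n,
        ((k:ℝ) + 1 - β) * ‖e (k + 1)‖ ^ 2 * (ρ ^ (2 * ((k:ℝ) + 1) - 2 * β) -
          ε ^ (2 * ((k:ℝ) + 1) - 2 * β)) ≤ β * ρ ^ (-2 * β) + 4 * β ^ 2 * C * ε ^ (1 - 2 * β) := by
      filter_upwards [Ioo_mem_nhdsGT (show (0:ℝ) < min (min (1 / 2) ρ) (1 / (2 * β * C)) by
        positivity)] with ε hε
      have hε0 : 0 < ε := hε.1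
      have hε2 : ε ≤ 1 / 2 := hε.2.le.trans ((min_le_left _ _).trans (min_le_left _ _))
      have hερ : ε ≤ ρ := hε.2.le.trans ((min_le_left _ _).trans (min_le_right _ _))
      have hεC : ε < 1 / (2 * β * C) := hε.2.trans_le (min_le_right _ _)
      have hy : 2 * β * (C * ε) ≤ 1 := by
        rw [lt_div_iff₀ (by positivity)] at hεC
        linarith
      have h2 := hA β ε ρ hβ hβ2 hε0 hε2 hερ hρ (n + 1)
      rw [Finset.sum_range_succ'] at h2
      simp only [Nat.cast_zero, ← he, he0] at h2
      have h3 : Real.exp (2 * β * (C * ε)) - 1 ≤ 2 * (2 * β * (C * ε)) := by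
        have hy0 : 0 ≤ 2 * β * (C * ε) := by positivity
        have := Real.abs_exp_sub_one_le (x := 2 * β * (C * ε)) (by rwa [abs_of_nonneg hy0])
        rw [abs_of_nonneg hy0] at this
        exact (le_abs_self _).trans this
      have h4 : ε ^ (1 - 2 * β) = ε ^ (-2 * β) * ε := by
        rw [show 1 - 2 * β = -2 * β + 1 by ring, Real.rpow_add hε0, Real.rpow_one]
      have h5 : 0 < β * ε ^ (-2 * β) := by positivity
      have h6 : β * ε ^ (-2 * β) * (Real.exp (2 * β * (C * ε)) - 1) ≤
          β * ε ^ (-2 * β) * (2 * (2 * β * (C * ε))) := by gcongr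
      rw [h4]
      push_cast at h2
      norm_num at h2
      norm_num at h6 ⊢
      linarith
    have hl : Tendsto (fun ε : ℝ => ∑ k ∈ Finset.range n,
        ((k:ℝ) + 1 - β) * ‖e (k + 1)‖ ^ 2 * (ρ ^ (2 * ((k:ℝ) + 1) - 2 * β) -
          ε ^ (2 * ((k:ℝ) + 1) - 2 * β))) (𝓝[>] 0) (𝓝 (∑ k ∈ Finset.range n,
        ((k:ℝ) + 1 - β) * ‖e (k + 1)‖ ^ 2 * (ρ ^ (2 * ((k:ℝ) + 1) - 2 * β) - 0))) := by
      refine tendsto_finsetSum _ fun k _ => Tendsto.const_mul _ (Tendsto.const_sub _ ?_)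
      have := (Real.continuousAt_rpow_const 0 _ (Or.inr (hpos k).le)).tendsto
      rw [Real.zero_rpow (hpos k).ne'] at this
      exact this.mono_left nhdsWithin_le_nhds
    have hr : Tendsto (fun ε : ℝ => β * ρ ^ (-2 * β) + 4 * β ^ 2 * C * ε ^ (1 - 2 * β)) (𝓝[>] 0)
        (𝓝 (β * ρ ^ (-2 * β) + 4 * β ^ 2 * C * 0)) := by
      refine Tendsto.const_add _ (Tendsto.const_mul _ ?_)
      have hp : 0 < 1 - 2 * β := by linarith
      have := (Real.continuousAt_rpow_const 0 _ (Or.inr hp.le)).tendsto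
      rw [Real.zero_rpow hp.ne'] at this
      exact this.mono_left nhdsWithin_le_nhds
    simpa using le_of_tendsto_of_tendsto hl hr hev
  have hcl : ∀ p : ℝ, Tendsto (fun ρ : ℝ => ρ ^ p) (𝓝[<] 1) (𝓝 1) := by
    intro p
    have := (Real.continuousAt_rpow_const 1 p (Or.inl one_ne_zero)).tendsto
    rw [Real.one_rpow] at this
    exact this.mono_left nhdsWithin_le_nhds
  have hl : Tendsto (fun ρ : ℝ => ∑ k ∈ Finset.range n,
      ((k:ℝ) + 1 - β) * ‖e (k + 1)‖ ^ 2 * ρ ^ (2 * ((k:ℝ) + 1) - 2 * β)) (𝓝[<] 1)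
      (𝓝 (∑ k ∈ Finset.range n, ((k:ℝ) + 1 - β) * ‖e (k + 1)‖ ^ 2 * 1)) :=
    tendsto_finsetSum _ fun k _ => (hcl _).const_mul _
  have hr : Tendsto (fun ρ : ℝ => β * ρ ^ (-2 * β)) (𝓝[<] 1) (𝓝 (β * 1)) := (hcl _).const_mul _
  have := le_of_tendsto_of_tendsto hl hr (by
    filter_upwards [Ioo_mem_nhdsLT (zero_lt_one (α := ℝ))] with ρ hρ using h1 ρ hρ.1 hρ.2)
  simpa using this

lemma continuous_cf_pow {g : ℂ → ℂ} (hg : DifferentiableOn ℂ g (ball 0 1)) (k : ℕ) :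
    Continuous fun β : ℝ => cf (fun z => Complex.exp (-β * g z)) k := by
  have h1 : ∀ β : ℝ, cf (fun z => Complex.exp (-β * g z)) k =
      circleAverage (fun z => (starRingEnd ℂ) (z ^ k) * Complex.exp (-β * g z)) 0 (1 / 2) /
        (((1 / 2 : ℝ) : ℂ) ^ (2 * k)) := by
    intro β
    rw [(ser_cf (differentiableOn_pow hg β)).coeff (by norm_num) (by norm_num)]
    rw [mul_div_cancel_right₀]
    exact pow_ne_zero _ (by norm_num)
  simp only [h1, circleAverage_def]
  refine Continuous.div_const (Continuous.const_smul ?_ _) _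
  refine intervalIntegral.continuous_parametric_intervalIntegral_of_continuous' ?_ _ _
  have h2 : Continuous fun θ => g (circleMap 0 (1 / 2) θ) :=
    hg.continuousOn.comp_continuous (continuous_circleMap 0 _)
      fun θ => sphere_sub (by norm_num) (circleMap_mem_sphere 0 (by norm_num) θ)
  have h3 : Continuous fun p : ℝ × ℝ => g (circleMap 0 (1 / 2) p.2) := h2.comp continuous_snd
  have h4 : Continuous fun p : ℝ × ℝ => circleMap 0 (1 / 2) p.2 :=
    (continuous_circleMap 0 _).comp continuous_snd
  exact (Complex.continuous_conj.comp (h4.pow k)).mul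
    ((Complex.continuous_ofReal.comp continuous_fst).neg.mul h3).cexp

/-- Equality `|a₂| = 2` in Bieberbach's inequality forces a rotation of the Koebe function. -/
theorem koebe_of_norm_eq {f g : ℂ → ℂ} (hf : Univalent f)
    (hg : DifferentiableOn ℂ g (ball 0 1)) (hg0 : g 0 = 0)
    (hgf : ∀ z ∈ ball (0:ℂ) 1, z * Complex.exp (g z) = f z) (h1 : 2 ≤ ‖cf g 1‖) :
    ∃ θ : ℝ, ∀ z ∈ ball (0:ℂ) 1, f z = z / (1 - Complex.exp (θ * I) * z) ^ 2 := by
  set E : ℂ → ℂ := fun z => Complex.exp (-(1 / 2 : ℝ) * g z) with hE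
  have hEd : DifferentiableOn ℂ E (ball 0 1) := differentiableOn_pow hg _
  have hsum : ∀ n : ℕ, ∑ k ∈ Finset.range n, ((k:ℝ) + 1 - 1 / 2) * ‖cf E (k + 1)‖ ^ 2 ≤ 1 / 2 := by
    intro n
    have hl : Continuous fun β : ℝ => ∑ k ∈ Finset.range n,
        ((k:ℝ) + 1 - β) * ‖cf (fun z => Complex.exp (-β * g z)) (k + 1)‖ ^ 2 :=
      continuous_finsetSum _ fun k _ =>
        (continuous_const.sub continuous_id).mul ((continuous_cf_pow hg (k + 1)).norm.pow 2)
    refine le_of_tendsto_of_tendsto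
      ((hl.tendsto (1 / 2)).mono_left (nhdsWithin_le_nhds (s := Iio (1 / 2))))
      ((continuous_id.tendsto (1 / 2 : ℝ)).mono_left nhdsWithin_le_nhds) ?_
    filter_upwards [Ioo_mem_nhdsLT (show (0:ℝ) < 1 / 2 by norm_num)] with β hβ
      using area_beta hf hg hg0 hgf hβ.1 hβ.2 n
  have he0 : cf E 0 = 1 := cf_pow_zero hg0 _
  have he1 : cf E 1 = -(1 / 2 : ℝ) * cf g 1 := cf_pow_one hg hg0 _
  have he1n : ‖cf E 1‖ = ‖cf g 1‖ / 2 := by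
    rw [he1, norm_mul, norm_neg, Complex.norm_real]; norm_num; ring
  have hone : ‖cf E 1‖ = 1 := by
    have := hsum 1
    norm_num at this
    nlinarith [norm_nonneg (cf E 1)]
  have hz : ∀ k, cf E (k + 2) = 0 := by
    intro k
    have h2 := hsum (k + 2)
    rw [Finset.sum_range_succ, Finset.sum_range_succ'] at h2
    have h3 : 0 ≤ ∑ j ∈ Finset.range k, (((j + 1 : ℕ):ℝ) + 1 - 1 / 2) * ‖cf E (j + 1 + 1)‖ ^ 2 :=
      Finset.sum_nonneg fun j _ => mul_nonneg (by push_cast; linarith [(j.cast_nonneg : (0:ℝ) ≤ j)])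
        (by positivity)
    simp only [zero_add, hone] at h2
    push_cast at h2 h3
    have h4 : ‖cf E (k + 2)‖ ^ 2 ≤ 0 := by
      have hk : (0:ℝ) ≤ k := k.cast_nonneg
      have : 0 ≤ ‖cf E (k + 2)‖ ^ 2 := by positivity
      nlinarith
    have h5 : ‖cf E (k + 2)‖ = 0 := by nlinarith [norm_nonneg (cf E (k + 2))]
    exact norm_eq_zero.1 h5
  have hEe : ∀ z ∈ ball (0:ℂ) 1, E z = 1 + cf E 1 * z := by
    intro z hz1
    have h2 := ser_cf hEd z hz1
    have h3 : HasSum (fun n => cf E n * z ^ n) (∑ n ∈ Finset.range 2, cf E n * z ^ n) := by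
      refine hasSum_sum_of_ne_finset_zero fun n hn => ?_
      obtain ⟨k, rfl⟩ : ∃ k, n = k + 2 := ⟨n - 2, by simp at hn; omega⟩
      rw [hz k, zero_mul]
    rw [h2.unique h3, Finset.sum_range_succ, Finset.sum_range_one, he0]
    simp
  refine ⟨Complex.arg (-cf E 1), fun z hz1 => ?_⟩
  have hθ : Complex.exp (Complex.arg (-cf E 1) * I) = -cf E 1 := by
    have := Complex.norm_mul_exp_arg_mul_I (-cf E 1)
    rwa [norm_neg, hone, Complex.ofReal_one, one_mul] at this
  rw [hθ, show 1 - -cf E 1 * z = E z by rw [hEe z hz1]; ring, ← hgf z hz1]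
  have h6 : E z ^ 2 = Complex.exp (-g z) := by
    simp only [hE]
    rw [← Complex.exp_nat_mul]; congr 1; push_cast; ring
  rw [h6, Complex.exp_neg, div_inv_eq_mul]

end LogCoeff

open LogCoeff in
theorem logcoeff_n_over_cube
    (f : ℂ → ℂ) (γ : ℕ → ℂ) (hf : InClassS f) (hγ : IsLogCoeffs f γ) :
    (∑' n : ℕ, (((n : ℝ) + 1) / (((n : ℝ) + 1) + 1) ^ 3) * ‖γ (n + 1)‖ ^ 2 ≤ (18 - Real.pi ^ 2 - 6 * (riemannZeta 3).re) / 6) ∧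
    (∑' n : ℕ, (((n : ℝ) + 1) / (((n : ℝ) + 1) + 1) ^ 3) * ‖γ (n + 1)‖ ^ 2 = (18 - Real.pi ^ 2 - 6 * (riemannZeta 3).re) / 6 → IsKoebeRotation f) := by
  obtain ⟨hfa, hfi, hf0, hf1⟩ := hf
  obtain ⟨g, hga, hg0, hge, hgc⟩ := hγ
  have hu : Univalent f := ⟨hfa.differentiableOn, hfi, hf0⟩
  have hg := hga.differentiableOn
  have hgf : ∀ z ∈ ball (0:ℂ) 1, z * Complex.exp (g z) = f z := by
    intro z hz
    by_cases hz0 : z = 0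
    · rw [hz0, hf0, zero_mul]
    · rw [hge z hz hz0, mul_div_cancel₀ _ hz0]
  have hcf : ∀ n, cf g (n + 1) = 2 * γ (n + 1) := by
    intro n
    rw [cf, hgc (n + 1) (by omega), inv_mul_cancel_left₀]
    exact_mod_cast (n + 1).factorial_ne_zero
  set c : ℕ → ℝ := fun n => ((n:ℝ) + 1) * ‖γ (n + 1)‖ ^ 2 with hc
  have hterm : ∀ (n : ℕ) (x : ℝ), ((n + 1 : ℕ) : ℝ) * ‖cf g (n + 1)‖ ^ 2 * x ^ (n + 1) =
      4 * (c n * x ^ (n + 1)) := by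
    intro n x
    rw [hcf, norm_mul]
    simp only [hc]
    push_cast
    norm_num
    ring
  have hs : ∀ x : ℝ, 0 < x → x < 1 → Summable fun n => 4 * (c n * x ^ (n + 1)) := by
    intro x hx hx1
    have := (summable_nat_add_iff 1).2 (summable_dir hg hx.le hx1)
    simpa only [hterm] using this
  have hs' : ∀ x : ℝ, 0 < x → x < 1 → Summable fun n => c n * x ^ (n + 1) := fun x hx hx1 =>
    (summable_mul_left_iff (by norm_num)).1 (hs x hx hx1)
  have hle : ∀ x : ℝ, 0 < x → x < 1 → ∑' n, c n * x ^ (n + 1) ≤ -Real.log (1 - x) := by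
    intro x hx hx1
    have h1 := dir_bound hu hf1 hg hg0 hgf hx hx1
    unfold Dir at h1
    rw [(summable_dir hg hx.le hx1).tsum_eq_zero_add] at h1
    simp only [hterm] at h1
    rw [tsum_mul_left] at h1
    simp only [Nat.cast_zero, zero_mul, zero_add] at h1
    linarith
  have hsum : ∀ n : ℕ, (((n : ℝ) + 1) / (((n : ℝ) + 1) + 1) ^ 3) * ‖γ (n + 1)‖ ^ 2 =
      c n / ((n:ℝ) + 2) ^ 3 := by
    intro n
    simp only [hc]
    rw [show (n:ℝ) + 1 + 1 = n + 2 by ring]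
    ring
  simp only [hsum]
  obtain ⟨hA, hB⟩ := weighted_bound (fun n => by simp only [hc]; positivity) hs' hle
  refine ⟨hA, fun heq => ?_⟩
  have h1 := hB heq
  simp only [hc, Nat.cast_zero, zero_add, one_mul] at h1
  have h2 : 2 ≤ ‖cf g 1‖ := by
    rw [hcf 0, norm_mul]
    norm_num
    nlinarith [norm_nonneg (γ 1)]
  exact koebe_of_norm_eq hu hg hg0 hgf h2
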